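/- For every real number λ and every ε > 0 there exists an integer A such that for every odd integer a ≥ A, the dimension over ℚ of the ℚ-vector subspace of ℝ spanned by the numbers 1, λ, ζ(3)+6λζ(5), ζ(5)+15λζ(7), …, ζ(a)+(a(a+1)/2)·λ·ζ(a+2) — that is, by 1, λ and the numbers ζ(i)+(i(i+1)/2)·λ·ζ(i+2) for all odd i with 3 ≤ i ≤ a — is at least (1−ε)·(log a)/(1+log 2). -/

import Mathlib

/-- The Riemann zeta value ζ(s) = Σ_{m ≥ 1} m^{-s}, as a real number. -/
noncomputable def zeta (s : ℕ) : ℝ := ∑' m : ℕ, 1 / ((m : ℝ) + 1) ^ s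

section PNT
open MeasureTheory Filter Topology Set

noncomputable def pB (u : ℝ) : ℝ := Chebyshev.psi (Real.exp u) * Real.exp (-u)

lemma pB_nonneg (u : ℝ) : 0 ≤ pB u :=
  mul_nonneg (Chebyshev.psi_nonneg _) (Real.exp_pos _).le

lemma pB_le (u : ℝ) : pB u ≤ Real.log 4 + 4 := by
  have h := Chebyshev.psi_le_const_mul_self (Real.exp_pos u).le
  have := mul_le_mul_of_nonneg_right h (Real.exp_pos (-u)).le
  rwa [mul_assoc, ← Real.exp_add, add_neg_cancel, Real.exp_zero, mul_one] at this

lemma pB_meas : Measurable pB :=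
  (Chebyshev.psi_mono.measurable.comp Real.measurable_exp).mul (by fun_prop)

lemma pB_window {u v : ℝ} (h : u ≤ v) : pB u * Real.exp (u - v) ≤ pB v := by
  unfold pB
  rw [mul_assoc, ← Real.exp_add, show -u + (u - v) = -v by ring]
  exact mul_le_mul_of_nonneg_right (Chebyshev.psi_mono (Real.exp_le_exp.mpr h)) (Real.exp_pos _).le

lemma pB_integrable {s : ℂ} (hs : 1 < s.re) :
    IntegrableOn (fun u : ℝ => ((pB u - 1 : ℝ) : ℂ) * Complex.exp (-(s - 1) * u)) (Ioi 0) := by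
  have h := integrableOn_exp_mul_complex_Ioi (a := -(s-1)) (by simp; linarith) 0
  refine Integrable.bdd_mul (c := Real.log 4 + 5) h ?_ ?_
  · exact (Complex.measurable_ofReal.comp (pB_meas.sub_const 1)).aestronglyMeasurable
  · refine Eventually.of_forall fun u => ?_
    rw [Complex.norm_real, Real.norm_eq_abs, abs_le]
    have h1 := pB_nonneg u
    have h2 := pB_le u
    have h3 : 0 ≤ Real.log 4 := Real.log_nonneg (by norm_num)
    constructor <;> linarith

lemma pB_laplace : ∃ G : ℂ → ℂ, ContinuousOn G {s | 1 ≤ s.re} ∧ ∀ s : ℂ, 1 < s.re →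
    ∫ u in Ioi (0:ℝ), ((pB u - 1 : ℝ) : ℂ) * Complex.exp (-(s - 1) * u) = G s := by
  classical
  refine ⟨fun s => (ArithmeticFunction.vonMangoldt.LFunctionResidueClassAux (1 : ZMod 1) s - 1) / s,
    ?_, ?_⟩
  · refine ContinuousOn.div ((ArithmeticFunction.vonMangoldt.continuousOn_LFunctionResidueClassAux
      (1 : ZMod 1)).sub continuousOn_const) continuousOn_id ?_
    intro s hs h0
    simp only [mem_ofPred_eq] at hs h0
    rw [h0] at hs; simp at hs; linarith
  · intro s hs
    have hs0 : s ≠ 0 := by rintro rfl; simp at hs; linarith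
    have hs1 : s - 1 ≠ 0 := by
      intro h; have : s = 1 := sub_eq_zero.mp h
      rw [this] at hs; simp at hs
    have e1 := ArithmeticFunction.vonMangoldt.eqOn_LFunctionResidueClassAux (q := 1) (a := 1)
      isUnit_one hs
    simp only [e1]
    have e2 : (fun n : ℕ => ((ArithmeticFunction.vonMangoldt.residueClass (1 : ZMod 1) n : ℝ) : ℂ))
        = fun n => ((ArithmeticFunction.vonMangoldt n : ℝ) : ℂ) := by
      funext n
      have : (n : ZMod 1) = 1 := Subsingleton.elim _ _
      simp [ArithmeticFunction.vonMangoldt.residueClass, this]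
    rw [e2]
    have e3 := LSeries_eq_mul_integral_of_nonneg (fun n => ArithmeticFunction.vonMangoldt n)
      (r := 1) zero_le_one hs ?_ (fun n => ArithmeticFunction.vonMangoldt_nonneg)
    · have e4 : ∫ (t : ℝ) in Ioi 1, (∑ k ∈ Finset.Icc 1 ⌊t⌋₊,
            ((ArithmeticFunction.vonMangoldt k : ℝ) : ℂ)) * (t : ℂ) ^ (-(s + 1))
          = ∫ u in Ioi (0:ℝ), ((pB u : ℝ) : ℂ) * Complex.exp (-(s - 1) * u) := by
        have := integral_comp_exp_Ioi (fun t : ℝ => (∑ k ∈ Finset.Icc 1 ⌊t⌋₊,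
            ((ArithmeticFunction.vonMangoldt k : ℝ) : ℂ)) * (t : ℂ) ^ (-(s + 1))) 0
        rw [Real.exp_zero] at this
        rw [← this]
        refine setIntegral_congr_fun measurableSet_Ioi fun u _ => ?_
        have e5 : (∑ k ∈ Finset.Icc 1 ⌊Real.exp u⌋₊, ((ArithmeticFunction.vonMangoldt k : ℝ) : ℂ))
            = (Chebyshev.psi (Real.exp u) : ℂ) := by
          rw [Chebyshev.psi]; push_cast; rfl
        simp only [e5, pB]
        rw [Complex.cpow_def_of_ne_zero (by exact_mod_cast (Real.exp_pos u).ne'),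
          ← Complex.ofReal_log (Real.exp_pos u).le, Real.log_exp, Complex.real_smul]
        push_cast
        rw [mul_left_comm, ← Complex.exp_add, mul_assoc, ← Complex.exp_add]
        congr 2
        ring
      rw [e3, e4]
      have e6 : ∫ u in Ioi (0:ℝ), Complex.exp (-(s - 1) * u) = 1 / (s - 1) := by
        rw [integral_exp_mul_complex_Ioi (by simp; linarith)]
        simp
        rw [show (1 - s) = -(s-1) by ring, neg_div_neg_eq, one_div]
      have e7 : ∫ u in Ioi (0:ℝ), ((pB u : ℝ) : ℂ) * Complex.exp (-(s - 1) * u)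
          = (∫ u in Ioi (0:ℝ), ((pB u - 1 : ℝ) : ℂ) * Complex.exp (-(s - 1) * u)) + 1 / (s-1) := by
        rw [← e6, ← integral_add (pB_integrable hs)
          (integrableOn_exp_mul_complex_Ioi (by simp; linarith) 0)]
        refine integral_congr_ae (Eventually.of_forall fun u => ?_)
        push_cast; ring
      rw [e7]
      simp only [Nat.totient_one]
      field_simp
      push_cast
      ring
    · refine Asymptotics.IsBigO.of_bound (Real.log 4 + 4) (Eventually.of_forall fun n => ?_)
      have h := Chebyshev.psi_le_const_mul_self (x := n) (by positivity)
      rw [Real.norm_of_nonneg (Finset.sum_nonneg fun _ _ => ArithmeticFunction.vonMangoldt_nonneg),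
        Real.rpow_one, Real.norm_of_nonneg (by positivity)]
      simp only [Chebyshev.psi, Nat.floor_natCast] at h
      exact h

noncomputable def fK (v : ℝ) : ℝ := 2 * (1 - Real.cos v) / v ^ 2

lemma fK_nonneg (v : ℝ) : 0 ≤ fK v := by
  unfold fK
  have := Real.cos_le_one v
  exact div_nonneg (by linarith) (sq_nonneg v)

lemma fK_integrable : Integrable fK := by
  refine Integrable.mono' ((integrable_inv_one_add_sq).const_mul 8) ?_ ?_
  · unfold fK
    exact Measurable.aestronglyMeasurable (by fun_prop)
  · refine Eventually.of_forall fun v => ?_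
    rw [Real.norm_of_nonneg (fK_nonneg v)]
    unfold fK
    rcases eq_or_ne v 0 with rfl | hv
    · simp
    have hv2 : 0 < v ^ 2 := by positivity
    rw [div_le_iff₀ hv2, ← div_eq_mul_inv, div_mul_eq_mul_div, le_div_iff₀ (by positivity)]
    have h1 := Real.one_sub_sq_div_two_le_cos (x := v)
    have h2 := Real.neg_one_le_cos v
    nlinarith [Real.cos_le_one v]

lemma fK_fourier {T v : ℝ} (hT : 0 < T) (hv : v ≠ 0) :
    ∫ t in (-T)..T, ((1 - |t| / T : ℝ) : ℂ) * Complex.exp (t * v * Complex.I)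
      = ((T * fK (T * v) : ℝ) : ℂ) := by
  have hc : Continuous fun t : ℝ => ((1 - |t| / T : ℝ) : ℂ) * Complex.exp (t * v * Complex.I) := by
    fun_prop
  have hi := fun a b => hc.intervalIntegrable (μ := volume) a b
  rw [← intervalIntegral.integral_add_adjacent_intervals (hi (-T) 0) (hi 0 T)]
  have e1 := intervalIntegral.integral_comp_neg (a := 0) (b := T)
    (fun t : ℝ => ((1 - |t| / T : ℝ) : ℂ) * Complex.exp (t * v * Complex.I))
  rw [neg_zero] at e1
  rw [← e1, ← intervalIntegral.integral_add (Continuous.intervalIntegrable (by fun_prop) _ _)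
    (hi 0 T)]
  have e2 : ∫ t in (0:ℝ)..T, (((1 - |(-t)| / T : ℝ) : ℂ) * Complex.exp ((-t : ℝ) * v * Complex.I)
      + ((1 - |t| / T : ℝ) : ℂ) * Complex.exp (t * v * Complex.I))
      = ∫ t in (0:ℝ)..T, (((1 - t / T) * (2 * Real.cos (t * v)) : ℝ) : ℂ) := by
    refine intervalIntegral.integral_congr fun t ht => ?_
    rw [uIcc_of_le hT.le] at ht
    simp only [abs_neg, abs_of_nonneg ht.1]
    push_cast
    rw [Complex.two_cos]
    rw [show (-(t:ℂ)) * v * Complex.I = -(t * v) * Complex.I by ring]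
    ring
  rw [e2, intervalIntegral.integral_ofReal]
  congr 1
  have e3 : ∀ t ∈ uIcc 0 T, HasDerivAt (fun t : ℝ => 2 * ((1 - t / T) * Real.sin (t * v) / v
      - Real.cos (t * v) / (T * v ^ 2))) ((1 - t / T) * (2 * Real.cos (t * v))) t := by
    intro t _
    have d0 : HasDerivAt (fun t : ℝ => t * v) v t := by simpa using (hasDerivAt_id t).mul_const v
    have d1 := d0.sin
    have d2 := d0.cos
    have d3 : HasDerivAt (fun t : ℝ => 1 - t / T) (-(1 / T)) t := by
      simpa using ((hasDerivAt_id t).div_const T).const_sub 1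
    convert! (((d3.mul d1).div_const v).sub (d2.div_const (T * v ^ 2))).const_mul 2 using 1
    field_simp
    ring
  rw [intervalIntegral.integral_eq_sub_of_hasDerivAt e3
    (Continuous.intervalIntegrable (by fun_prop) _ _)]
  unfold fK
  simp
  field_simp
  ring

lemma pB_fubini {G : ℂ → ℂ} (hG : ∀ s : ℂ, 1 < s.re →
    ∫ u in Ioi (0:ℝ), ((pB u - 1 : ℝ) : ℂ) * Complex.exp (-(s - 1) * u) = G s)
    {T η : ℝ} (hT : 0 < T) (hη : 0 < η) (y : ℝ) :
    ∫ t in (-T)..T, ((1 - |t| / T : ℝ) : ℂ) * Complex.exp (t * y * Complex.I)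
        * G (1 + η + t * Complex.I)
      = ((∫ u in Ioi (0:ℝ), (pB u - 1) * Real.exp (-η * u) * (T * fK (T * (y - u))) : ℝ) : ℂ) := by
  have e1 : ∀ t : ℝ, ((1 - |t| / T : ℝ) : ℂ) * Complex.exp (t * y * Complex.I)
        * G (1 + η + t * Complex.I) = ∫ u in Ioi (0:ℝ),
        (((1 - |t| / T : ℝ) : ℂ) * Complex.exp (t * (y - u) * Complex.I)) *
          (((pB u - 1) * Real.exp (-η * u) : ℝ) : ℂ) := by
    intro t
    rw [← hG _ (by simp; linarith), ← integral_const_mul]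
    refine integral_congr_ae (Eventually.of_forall fun u => ?_)
    simp only
    push_cast
    rw [show (t:ℂ) * (y - u) * Complex.I = t * y * Complex.I + (-(t * Complex.I) * u) by ring,
      Complex.exp_add, show (-((1:ℂ) + η + t * Complex.I - 1) * u) = -η * u + (-(t * Complex.I) * u)
      by ring, Complex.exp_add]
    ring
  simp_rw [e1]
  rw [intervalIntegral_integral_swap, ← integral_complex_ofReal]
  · refine integral_congr_ae ?_
    have : ∀ᵐ u ∂(volume.restrict (Ioi (0:ℝ))), u ≠ y :=
      ae_restrict_of_ae (by simp [ae_iff, measure_singleton])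
    filter_upwards [this] with u hu
    rw [intervalIntegral.integral_mul_const]
    have := fK_fourier hT (v := y - u) (sub_ne_zero.mpr hu.symm)
    push_cast at this ⊢
    rw [this]
    ring
  · have h1 : Integrable (fun u : ℝ => (((pB u - 1) * Real.exp (-η * u) : ℝ) : ℂ))
        (volume.restrict (Ioi 0)) := by
      have := pB_integrable (s := 1 + η) (by simp; linarith)
      refine this.congr (Eventually.of_forall fun u => ?_)
      simp only
      push_cast
      congr 2
      ring
    have h2 : Integrable (fun t : ℝ => ((1 - |t| / T : ℝ) : ℂ)) (volume.restrict (uIoc (-T) T)) := by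
      have : Continuous fun t : ℝ => ((1 - |t| / T : ℝ) : ℂ) := by fun_prop
      exact intervalIntegrable_iff.mp (this.intervalIntegrable (-T) T)
    have h3 := h2.mul_prod h1
    refine (h3.bdd_mul (c := 1) (f := fun z : ℝ × ℝ => Complex.exp (z.1 * (y - z.2) * Complex.I))
      ?_ ?_).congr ?_
    · exact Continuous.aestronglyMeasurable (by fun_prop)
    · refine Eventually.of_forall fun z => ?_
      have : (z.1 : ℂ) * (y - z.2) * Complex.I = ((z.1 * (y - z.2) : ℝ) : ℂ) * Complex.I := by
        push_cast; ring
      rw [this, Complex.norm_exp_ofReal_mul_I]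
    · refine Eventually.of_forall fun z => ?_
      simp only [Function.uncurry]
      ring

lemma fK_scale (T y : ℝ) (hT : 0 < T) : ∫ u, T * fK (T * (y - u)) = ∫ v, fK v := by
  rw [integral_const_mul, integral_sub_left_eq_self (fun u => fK (T * u)) volume y,
    Measure.integral_comp_mul_left, abs_of_pos (by positivity), smul_eq_mul,
    mul_inv_cancel_left₀ hT.ne']

lemma fK_scale_int (T y : ℝ) (hT : 0 < T) : Integrable fun u => T * fK (T * (y - u)) := by
  have h1 : Integrable fun v => fK (T * v) := fK_integrable.comp_mul_left' hT.ne'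
  exact (h1.comp_sub_left y).const_mul T

lemma fK_window (T y δ : ℝ) (hT : 0 < T) (hδ : 0 < δ) :
    ∫ u in Ioc (y - δ) (y + δ), T * fK (T * (y - u)) = ∫ v in (-(T*δ))..(T*δ), fK v := by
  rw [← intervalIntegral.integral_of_le (by linarith), intervalIntegral.integral_const_mul,
    intervalIntegral.integral_comp_sub_left (fun u => fK (T * u)) y]
  rw [intervalIntegral.integral_comp_mul_left fK hT.ne', smul_eq_mul, mul_inv_cancel_left₀ hT.ne']
  congr 1 <;> ring

lemma pB_key {G : ℂ → ℂ} (hG : ∀ s : ℂ, 1 < s.re →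
    ∫ u in Ioi (0:ℝ), ((pB u - 1 : ℝ) : ℂ) * Complex.exp (-(s - 1) * u) = G s)
    {T η δ y : ℝ} (hT : 0 < T) (hη : 0 < η) (hδ : 0 < δ) (hy : δ < y) :
    pB (y - δ) * Real.exp (-2 * δ) * Real.exp (-η * (y + δ)) * (∫ v in (-(T*δ))..(T*δ), fK v)
      ≤ (∫ v, fK v) + ‖∫ t in (-T)..T, ((1 - |t| / T : ℝ) : ℂ) * Complex.exp (t * y * Complex.I)
        * G (1 + η + t * Complex.I)‖ := by
  have hk : ∀ u, 0 ≤ T * fK (T * (y - u)) := fun u => mul_nonneg hT.le (fK_nonneg _)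
  have hF := fK_scale_int T y hT
  have hexp : ∀ u : ℝ, u ∈ Ioi (0:ℝ) → Real.exp (-η * u) ≤ 1 := fun u hu => by
    rw [Real.exp_le_one_iff]; have : 0 < u := hu; nlinarith
  have hl4 : 0 ≤ Real.log 4 := Real.log_nonneg (by norm_num)
  have hI1 : IntegrableOn (fun u => Real.exp (-η * u) * (T * fK (T * (y - u)))) (Ioi 0) := by
    refine (hF.integrableOn (s := Ioi 0)).bdd_mul (c := 1)
      (Continuous.aestronglyMeasurable (by fun_prop)) ?_
    refine (ae_restrict_iff' measurableSet_Ioi).mpr (Eventually.of_forall fun u hu => ?_)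
    rw [Real.norm_of_nonneg (Real.exp_pos _).le]
    exact hexp u hu
  have hI2 : IntegrableOn (fun u => pB u * (Real.exp (-η * u) * (T * fK (T * (y - u))))) (Ioi 0) := by
    refine hI1.bdd_mul (c := Real.log 4 + 4) pB_meas.aestronglyMeasurable
      (Eventually.of_forall fun u => ?_)
    rw [Real.norm_of_nonneg (pB_nonneg u)]
    exact pB_le u
  have e1 : ∫ u in Ioi (0:ℝ), (pB u - 1) * Real.exp (-η * u) * (T * fK (T * (y - u)))
      = (∫ u in Ioi (0:ℝ), pB u * (Real.exp (-η * u) * (T * fK (T * (y - u)))))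
        - ∫ u in Ioi (0:ℝ), Real.exp (-η * u) * (T * fK (T * (y - u))) := by
    rw [← integral_sub hI2 hI1]
    refine integral_congr_ae (Eventually.of_forall fun u => ?_)
    simp only
    ring
  have e2 : ∫ u in Ioi (0:ℝ), Real.exp (-η * u) * (T * fK (T * (y - u))) ≤ ∫ v, fK v := by
    rw [← fK_scale T y hT]
    calc _ ≤ ∫ u in Ioi (0:ℝ), T * fK (T * (y - u)) := by
          refine setIntegral_mono_on hI1 hF.integrableOn measurableSet_Ioi fun u hu => ?_
          exact mul_le_of_le_one_left (hk u) (hexp u hu)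
      _ ≤ _ := setIntegral_le_integral hF (Eventually.of_forall hk)
  have e3 : ∫ u in Ioi (0:ℝ), (pB u - 1) * Real.exp (-η * u) * (T * fK (T * (y - u))) ≤
      ‖∫ t in (-T)..T, ((1 - |t| / T : ℝ) : ℂ) * Complex.exp (t * y * Complex.I)
        * G (1 + η + t * Complex.I)‖ := by
    rw [pB_fubini hG hT hη y, Complex.norm_real]
    exact le_abs_self _
  have e4 : pB (y - δ) * Real.exp (-2 * δ) * Real.exp (-η * (y + δ)) *
      (∫ v in (-(T*δ))..(T*δ), fK v)
      ≤ ∫ u in Ioi (0:ℝ), pB u * (Real.exp (-η * u) * (T * fK (T * (y - u)))) := by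
    rw [← fK_window T y δ hT hδ, ← integral_const_mul]
    have hsub : Ioc (y - δ) (y + δ) ⊆ Ioi (0:ℝ) := fun u hu => by
      have := hu.1; show (0:ℝ) < u; linarith
    calc _ ≤ ∫ u in Ioc (y - δ) (y + δ), pB u * (Real.exp (-η * u) * (T * fK (T * (y - u)))) := by
          refine setIntegral_mono_on (hF.integrableOn.const_mul _) (hI2.mono_set hsub)
            measurableSet_Ioc fun u hu => ?_
          rw [← mul_assoc (pB u)]
          refine mul_le_mul_of_nonneg_right ?_ (hk u)
          refine mul_le_mul ?_ ?_ (Real.exp_pos _).le (pB_nonneg _)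
          · refine le_trans ?_ (pB_window hu.1.le)
            refine mul_le_mul_of_nonneg_left ?_ (pB_nonneg _)
            rw [Real.exp_le_exp]
            linarith [hu.2]
          · rw [Real.exp_le_exp]
            nlinarith [hu.2]
      _ ≤ _ := by
          refine setIntegral_mono_set hI2 (Eventually.of_forall fun u => ?_) hsub.eventuallyLE
          exact mul_nonneg (pB_nonneg u) (mul_nonneg (Real.exp_pos _).le (hk u))
  linarith

lemma pB_key' {G : ℂ → ℂ} (hGc : ContinuousOn G {s | 1 ≤ s.re}) (hG : ∀ s : ℂ, 1 < s.re →
    ∫ u in Ioi (0:ℝ), ((pB u - 1 : ℝ) : ℂ) * Complex.exp (-(s - 1) * u) = G s)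
    {T δ y : ℝ} (hT : 0 < T) (hδ : 0 < δ) (hy : δ < y) :
    pB (y - δ) * Real.exp (-2 * δ) * (∫ v in (-(T*δ))..(T*δ), fK v)
      ≤ (∫ v, fK v) + ‖∫ t in (-T)..T, ((1 - |t| / T : ℝ) : ℂ) * Complex.exp (t * y * Complex.I)
        * G (1 + t * Complex.I)‖ := by
  have hc : Continuous (Function.uncurry fun (η t : ℝ) => ((1 - |t| / T : ℝ) : ℂ) *
      Complex.exp (t * y * Complex.I) * G (1 + (|η| : ℝ) + t * Complex.I)) := by
    have : Continuous fun z : ℝ × ℝ => G (1 + (|z.1| : ℝ) + z.2 * Complex.I) := by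
      refine hGc.comp_continuous (by fun_prop) fun z => ?_
      simp
    simp only [Function.uncurry_def]
    exact Continuous.mul (by fun_prop) this
  have hc2 := intervalIntegral.continuous_parametric_intervalIntegral_of_continuous
    (μ := volume) (a₀ := -T) hc (continuous_const (y := T))
  have t1 := (hc2.norm.const_add (∫ v, fK v)).tendsto 0
  have t2 : Continuous fun η : ℝ => pB (y - δ) * Real.exp (-2 * δ) * Real.exp (-η * (y + δ)) *
      (∫ v in (-(T*δ))..(T*δ), fK v) := by fun_prop
  have t2 := t2.tendsto 0
  have := le_of_tendsto_of_tendsto (t2.mono_left (nhdsWithin_le_nhds (s := Ioi 0)))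
    (t1.mono_left (nhdsWithin_le_nhds (s := Ioi 0))) ?_
  · simpa using this
  · filter_upwards [self_mem_nhdsWithin] with η hη
    have hη : 0 < η := hη
    rw [abs_of_pos hη]
    exact pB_key hG hT hη hδ hy

lemma pB_limsup {ε : ℝ} (hε : 0 < ε) : ∀ᶠ y in atTop, pB y ≤ 1 + ε := by
  obtain ⟨G, hGc, hG⟩ := pB_laplace
  set κ := ∫ v, fK v with hκ
  have hκ0 : 0 < κ := by
    have hsup : 0 < ∫ v in (1:ℝ)..2, fK v := by
      refine intervalIntegral.intervalIntegral_pos_of_pos_on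
        (fK_integrable.intervalIntegrable) (fun v hv => ?_) (by norm_num)
      unfold fK
      have : Real.cos v < 1 := by
        have := Real.cos_lt_cos_of_nonneg_of_le_pi (x := 0) (y := v) le_rfl
          (by linarith [hv.2, Real.pi_gt_three]) (by linarith [hv.1])
        simpa using this
      have hv0 : 0 < v := by linarith [hv.1]
      exact div_pos (by linarith) (by positivity)
    refine hsup.trans_le ?_
    rw [intervalIntegral.integral_of_le (by norm_num)]
    exact setIntegral_le_integral fK_integrable (Eventually.of_forall fK_nonneg)
  -- choose δ
  obtain ⟨δ, hδ, hδ2⟩ : ∃ δ : ℝ, 0 < δ ∧ Real.exp (2 * δ) < 1 + ε / 2 := by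
    have : Continuous fun δ : ℝ => Real.exp (2 * δ) := by fun_prop
    have t := this.tendsto 0
    have := (t.mono_left (nhdsWithin_le_nhds (s := Ioi 0))).eventually
      (gt_mem_nhds (show Real.exp (2 * 0) < 1 + ε / 2 by simp; linarith))
    obtain ⟨δ, h1, h2⟩ := (this.and self_mem_nhdsWithin).exists
    exact ⟨δ, h2, h1⟩
  -- need A with (κ + A)/(κ_T) e^{2δ} ≤ 1 + ε
  obtain ⟨T, hT, hT2⟩ : ∃ T : ℝ, 0 < T ∧
      Real.exp (2 * δ) * κ < (1 + ε) * (∫ v in (-(T*δ))..(T*δ), fK v) := by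
    have hTd : Tendsto (fun T : ℝ => T * δ) atTop atTop := tendsto_id.atTop_mul_const hδ
    have t := (intervalIntegral_tendsto_integral fK_integrable
      (tendsto_neg_atTop_atBot.comp hTd) hTd).const_mul (1 + ε)
    have := t.eventually (lt_mem_nhds (show Real.exp (2 * δ) * κ < (1 + ε) * ∫ v, fK v by
      rw [← hκ]; exact mul_lt_mul_of_pos_right (by linarith) hκ0))
    obtain ⟨T, h1, h2⟩ := (this.and (eventually_gt_atTop 0)).exists
    exact ⟨T, h2, h1⟩
  set κT := ∫ v in (-(T*δ))..(T*δ), fK v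
  have hκT : 0 < κT := by
    have : 0 < Real.exp (2 * δ) * κ := by positivity
    by_contra h
    push Not at h
    nlinarith
  -- Riemann-Lebesgue
  set f : ℝ → ℂ := (Ioc (-T) T).indicator fun t =>
    ((1 - |t| / T : ℝ) : ℂ) * G (1 + t * Complex.I) with hf
  have rl := Real.tendsto_integral_exp_smul_cocompact f
  have htop : Tendsto (fun y : ℝ => -y / (2 * Real.pi)) atTop (cocompact ℝ) := by
    refine Tendsto.mono_right ?_ atBot_le_cocompact
    exact (tendsto_neg_atTop_atBot).atBot_div_const (by positivity)
  have rl2 := (rl.comp htop).norm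
  simp only [norm_zero] at rl2
  have hpos : 0 < (1 + ε) * κT * Real.exp (-2 * δ) - κ := by
    have : Real.exp (2 * δ) * Real.exp (-2 * δ) = 1 := by
      rw [← Real.exp_add]; simp
    have h2 := mul_lt_mul_of_pos_right hT2 (Real.exp_pos (-2 * δ))
    have : Real.exp (2 * δ) * κ * Real.exp (-2 * δ) = κ := by
      calc _ = (Real.exp (2 * δ) * Real.exp (-2 * δ)) * κ := by ring
        _ = κ := by rw [this, one_mul]
    linarith
  have ev := rl2.eventually (gt_mem_nhds hpos)
  have hshift : Tendsto (fun y : ℝ => y + δ) atTop atTop := tendsto_atTop_add_const_right _ _ tendsto_id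
  filter_upwards [hshift.eventually ev, eventually_gt_atTop 0] with y hy hy0
  have key := pB_key' hGc hG hT hδ (y := y + δ) (by linarith)
  have e : (∫ v : ℝ, Real.fourierChar (-(v * (-(y + δ) / (2 * Real.pi)))) • f v)
      = ∫ t in (-T)..T, ((1 - |t| / T : ℝ) : ℂ) * Complex.exp (t * (y + δ : ℝ) * Complex.I)
        * G (1 + t * Complex.I) := by
    rw [intervalIntegral.integral_of_le (by linarith), ← integral_indicator measurableSet_Ioc]
    refine integral_congr_ae (Eventually.of_forall fun t => ?_)
    simp only [hf, indicator]
    split_ifs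
    · rw [Circle.smul_def, Real.fourierChar_apply, smul_eq_mul]
      have : ((2 * Real.pi * -(t * (-(y + δ) / (2 * Real.pi))) : ℝ) : ℂ) = t * (y + δ : ℝ) := by
        have : (2 * Real.pi * -(t * (-(y + δ) / (2 * Real.pi))) : ℝ) = t * (y + δ) := by
          have := Real.pi_pos.ne'
          field_simp
        rw [this]; push_cast; ring
      rw [this]; ring
    · simp
  simp only [Function.comp] at hy
  rw [e] at hy
  rw [add_sub_cancel_right] at key
  have : pB y * (Real.exp (-2 * δ) * κT) < (1 + ε) * (Real.exp (-2 * δ) * κT) := by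
    have : (1 + ε) * κT * Real.exp (-2 * δ) = (1 + ε) * (Real.exp (-2 * δ) * κT) := by ring
    linarith
  exact (lt_of_mul_lt_mul_right this (by positivity)).le

theorem lcm_bound {ε : ℝ} (hε : 0 < ε) :
    ∃ N : ℕ, ∀ n : ℕ, N ≤ n → (Nat.lcmUpto n : ℝ) ≤ Real.exp ((1 + ε) * n) := by
  have h1 := (Real.tendsto_log_atTop.comp tendsto_natCast_atTop_atTop).eventually (pB_limsup hε)
  obtain ⟨N, hN⟩ := eventually_atTop.mp (h1.and (eventually_gt_atTop 0))
  refine ⟨N, fun n hn => ?_⟩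
  obtain ⟨h2, h3⟩ := hN n hn
  have h3 : (0:ℝ) < n := by exact_mod_cast h3
  simp only [Function.comp, pB, Real.exp_log h3, Real.exp_neg] at h2
  rw [← div_eq_mul_inv, div_le_iff₀ h3, Chebyshev.psi_eq_log_lcmUpto] at h2
  rwa [← Real.log_le_iff_le_exp (by exact_mod_cast Nat.lcmUpto_pos n)]

end PNT

section Nesterenko
open Filter Topology

lemma dirichlet_sim (d : ℕ) (x : Fin d → ℝ) (Q : ℕ) (hQ : 1 ≤ Q) :
    ∃ q : ℕ, 1 ≤ q ∧ q ≤ Q ^ d ∧ ∃ z : Fin d → ℤ, ∀ j, |(q:ℝ) * x j - z j| ≤ 1 / Q := by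
  have hQ0 : (0:ℝ) < Q := by exact_mod_cast hQ
  have hb : ∀ (k : ℕ) (j : Fin d), ⌊(Q:ℝ) * Int.fract ((k:ℝ) * x j)⌋₊ < Q := by
    intro k j
    rw [Nat.floor_lt (by positivity)]
    nlinarith [Int.fract_lt_one ((k:ℝ) * x j)]
  let f : Fin (Q ^ d + 1) → (Fin d → Fin Q) := fun k j => ⟨_, hb k j⟩
  obtain ⟨k1, k2, hne, hf⟩ := Fintype.exists_ne_map_eq_of_card_lt f (by simp)
  wlog hlt : k1 < k2 generalizing k1 k2
  · exact this k2 k1 hne.symm hf.symm (lt_of_le_of_ne (not_lt.mp hlt) hne.symm)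
  have hlt' : (k1:ℕ) < k2 := hlt
  refine ⟨(k2:ℕ) - k1, by omega, by have := k2.2; omega,
    fun j => ⌊((k2:ℕ):ℝ) * x j⌋ - ⌊((k1:ℕ):ℝ) * x j⌋, fun j => ?_⟩
  have h1 := congrArg Fin.val (congrFun hf j)
  simp only [f] at h1
  have a1 := Nat.floor_le (show 0 ≤ (Q:ℝ) * Int.fract (((k1:ℕ):ℝ) * x j) by positivity)
  have a2 := Nat.lt_floor_add_one ((Q:ℝ) * Int.fract (((k1:ℕ):ℝ) * x j))
  have b1 := Nat.floor_le (show 0 ≤ (Q:ℝ) * Int.fract (((k2:ℕ):ℝ) * x j) by positivity)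
  have b2 := Nat.lt_floor_add_one ((Q:ℝ) * Int.fract (((k2:ℕ):ℝ) * x j))
  rw [h1] at a1 a2
  have e : (((k2:ℕ) - (k1:ℕ) : ℕ) : ℝ) * x j - ((⌊((k2:ℕ):ℝ) * x j⌋ - ⌊((k1:ℕ):ℝ) * x j⌋ : ℤ) : ℝ)
      = Int.fract (((k2:ℕ):ℝ) * x j) - Int.fract (((k1:ℕ):ℝ) * x j) := by
    rw [Nat.cast_sub hlt'.le]; push_cast
    rw [Int.fract, Int.fract]; ring
  rw [e, le_div_iff₀ hQ0, show ∀ y : ℝ, |y| * Q = |y * Q| from fun y => by rw [abs_mul, abs_of_pos hQ0], abs_le]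
  constructor <;> nlinarith

lemma common_den {ι : Type*} (s : Finset ι) (r : ι → ℚ) :
    ∃ D : ℕ, 0 < D ∧ ∀ i ∈ s, ∃ z : ℤ, (D:ℚ) * r i = z := by
  classical
  refine ⟨∏ i ∈ s, (r i).den, Finset.prod_pos fun i _ => (r i).pos, fun i hi => ?_⟩
  rw [← Finset.mul_prod_erase s _ hi]
  refine ⟨(r i).num * ∏ x ∈ s.erase i, ((r x).den : ℤ), ?_⟩
  push_cast
  have := Rat.mul_den_eq_num (r i)
  rw [← this]; ring

theorem nesterenko (V : Submodule ℚ ℝ) [FiniteDimensional ℚ V] (s : Finset ℕ) (θ : ℕ → ℝ)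
    (hθ : ∀ i ∈ s, θ i ∈ V) (p : ℕ → ℕ → ℤ) (ℓ : ℕ → ℝ) (N0 : ℕ) (α β c : ℝ)
    (hα : 0 < α) (hβ : 0 < β) (hc : 0 < c)
    (hℓ : ∀ N ≥ N0, ℓ N = ∑ i ∈ s, (p N i : ℝ) * θ i)
    (hp : ∀ N ≥ N0, ∀ i ∈ s, |(p N i : ℝ)| ≤ Real.exp (β * N))
    (hpos : ∀ N ≥ N0, 0 < ℓ N) (hle : ∀ N ≥ N0, ℓ N ≤ Real.exp (-α * N))
    (hr : ∀ N ≥ N0, c * ℓ N ≤ ℓ (N + 1)) :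
    α ≤ β * ((Module.finrank ℚ V : ℝ) - 1) := by
  obtain ⟨m, hm⟩ : ∃ m, m = Module.finrank ℚ V := ⟨_, rfl⟩
  let b0 : Module.Basis (Fin m) ℚ V := Module.finBasisOfFinrankEq ℚ V hm.symm
  rcases m with _ | d
  · exfalso
    have : Subsingleton V := by
      rw [← Module.finrank_zero_iff (R := ℚ)]; exact hm.symm
    have h0 : ℓ N0 = 0 := by
      rw [hℓ N0 le_rfl]
      refine Finset.sum_eq_zero fun i hi => ?_
      have := congrArg Subtype.val (Subsingleton.elim (⟨θ i, hθ i hi⟩ : V) 0)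
      simp only [ZeroMemClass.coe_zero] at this
      rw [this, mul_zero]
    exact (hpos N0 le_rfl).ne' h0
  rw [← hm]
  push_cast
  rw [add_sub_cancel_right]
  by_contra hcon
  push Not at hcon
  -- the coefficients
  classical
  let v : Fin (d+1) → ℝ := fun j => (b0 j : ℝ)
  have hv0 : v 0 ≠ 0 := by
    have := b0.ne_zero 0
    simpa [v] using this
  let r : ℕ → Fin (d+1) → ℚ := fun i j => if h : θ i ∈ V then b0.repr ⟨θ i, h⟩ j else 0
  have hrθ : ∀ i ∈ s, θ i = ∑ j, (r i j : ℝ) * v j := by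
    intro i hi
    have h1 := b0.sum_repr ⟨θ i, hθ i hi⟩
    have h2 := congrArg Subtype.val h1
    simp only [AddSubmonoidClass.coe_finsetSum, SetLike.val_smul] at h2
    rw [← h2]
    refine Finset.sum_congr rfl fun j _ => ?_
    simp only [r, v, dif_pos (hθ i hi)]
    rw [Rat.smul_def]
  obtain ⟨D, hD, hDz⟩ := common_den (s ×ˢ (Finset.univ : Finset (Fin (d+1)))) (fun ij => r ij.1 ij.2)
  have hDz' : ∀ i ∈ s, ∀ j, ∃ z : ℤ, (D:ℝ) * r i j = z := fun i hi j => by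
    obtain ⟨z, hz⟩ := hDz (i, j) (by simp [hi])
    exact ⟨z, by exact_mod_cast hz⟩
  have hDz'' : ∀ i, ∀ j, ∃ z : ℤ, i ∈ s → (D:ℝ) * r i j = z := fun i j => by
    by_cases hi : i ∈ s
    · obtain ⟨z, hz⟩ := hDz' i hi j
      exact ⟨z, fun _ => hz⟩
    · exact ⟨0, fun h => absurd h hi⟩
  choose M hM using hDz''
  let P : ℕ → Fin (d+1) → ℤ := fun N j => ∑ i ∈ s, p N i * M i j
  have hDℓ : ∀ N ≥ N0, (D:ℝ) * ℓ N = ∑ j, (P N j : ℝ) * v j := by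
    intro N hN
    rw [hℓ N hN, Finset.mul_sum]
    simp only [P, Int.cast_sum, Finset.sum_mul, Int.cast_mul]
    rw [Finset.sum_comm]
    refine Finset.sum_congr rfl fun i hi => ?_
    rw [hrθ i hi, Finset.mul_sum, Finset.mul_sum]
    refine Finset.sum_congr rfl fun j _ => ?_
    rw [← hM i j hi]; ring
  let C : ℝ := 1 + ∑ j, ∑ i ∈ s, |(M i j : ℝ)|
  have hC : 0 < C := by positivity
  have hPb : ∀ N ≥ N0, ∑ j, |(P N j : ℝ)| ≤ C * Real.exp (β * N) := by
    intro N hN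
    have : ∑ j, |(P N j : ℝ)| ≤ (∑ j, ∑ i ∈ s, |(M i j : ℝ)|) * Real.exp (β * N) := by
      rw [Finset.sum_mul]
      refine Finset.sum_le_sum fun j _ => ?_
      simp only [P, Int.cast_sum, Int.cast_mul]
      refine (Finset.abs_sum_le_sum_abs _ _).trans ?_
      rw [Finset.sum_mul]
      refine Finset.sum_le_sum fun i hi => ?_
      rw [abs_mul, mul_comm]
      exact mul_le_mul_of_nonneg_left (hp N hN i hi) (abs_nonneg _)
    refine this.trans (mul_le_mul_of_nonneg_right ?_ (Real.exp_pos _).le)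
    simp [C]
  let κ : ℝ := D / |v 0|
  have hκ : 0 < κ := div_pos (by exact_mod_cast hD) (abs_pos.mpr hv0)
  -- key step
  have key : ∀ Q : ℕ, 1 ≤ Q → ∃ q : ℕ, 1 ≤ q ∧ q ≤ Q ^ d ∧ ∀ N ≥ N0, (q:ℝ) * κ * ℓ N < 1 / 2 →
      C * Real.exp (β * N) / Q ≤ 1 / 2 → (q:ℝ) * κ * ℓ N ≤ C * Real.exp (β * N) / Q := by
    intro Q hQ
    have hQ0 : (0:ℝ) < Q := by exact_mod_cast hQ
    obtain ⟨q, hq1, hq2, z, hz⟩ := dirichlet_sim d (fun j => v j.succ / v 0) Q hQ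
    refine ⟨q, hq1, hq2, fun N hN h1 h2 => ?_⟩
    let I : ℤ := P N 0 * q + ∑ j : Fin d, P N j.succ * z j
    have e1 : (q:ℝ) * (D * ℓ N) / v 0 =
        I + ∑ j : Fin d, (P N j.succ : ℝ) * ((q:ℝ) * (v j.succ / v 0) - z j) := by
      rw [hDℓ N hN, Fin.sum_univ_succ]
      simp only [I]
      push_cast
      simp only [mul_sub, Finset.sum_sub_distrib]
      rw [mul_add, add_div, Finset.mul_sum, Finset.sum_div]
      have : ∀ j : Fin d, (q:ℝ) * ((P N j.succ : ℝ) * v j.succ) / v 0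
          = (P N j.succ : ℝ) * ((q:ℝ) * (v j.succ / v 0)) := fun j => by ring
      simp only [this]
      field_simp
      ring
    have e2 : |∑ j : Fin d, (P N j.succ : ℝ) * ((q:ℝ) * (v j.succ / v 0) - z j)|
        ≤ C * Real.exp (β * N) / Q := by
      calc _ ≤ ∑ j : Fin d, |(P N j.succ : ℝ)| * (1 / Q) := by
            refine (Finset.abs_sum_le_sum_abs _ _).trans (Finset.sum_le_sum fun j _ => ?_)
            rw [abs_mul]
            exact mul_le_mul_of_nonneg_left (hz j) (abs_nonneg _)
        _ = (∑ j : Fin d, |(P N j.succ : ℝ)|) / Q := by rw [← Finset.sum_mul]; ring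
        _ ≤ _ := by
            gcongr
            refine le_trans ?_ (hPb N hN)
            rw [Fin.sum_univ_succ (fun j => |(P N j : ℝ)|)]
            linarith [abs_nonneg (P N 0 : ℝ)]
    have e3 : |(q:ℝ) * (D * ℓ N) / v 0| = (q:ℝ) * κ * ℓ N := by
      rw [abs_div, abs_of_nonneg (by have := hpos N hN; positivity)]
      simp only [κ]; ring
    have hI : I = 0 := by
      have : |(I:ℝ)| < 1 := by
        have e4 : (I:ℝ) = (q:ℝ) * (D * ℓ N) / v 0 -
          ∑ j : Fin d, (P N j.succ : ℝ) * ((q:ℝ) * (v j.succ / v 0) - z j) := by rw [e1]; ring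
        rw [e4]
        refine (abs_sub _ _).trans_lt ?_
        rw [e3]; linarith
      exact Int.abs_lt_one_iff.mp (by exact_mod_cast this)
    rw [← e3, e1, hI, Int.cast_zero, zero_add]
    exact e2
  -- constants
  let μ : ℝ := min (κ * ℓ N0) (c / 2)
  have hμ : 0 < μ := lt_min (mul_pos hκ (hpos N0 le_rfl)) (by positivity)
  let C2 : ℝ := max (2 * κ * Real.exp α) (Real.exp (α * N0))
  have hC2 : 0 < C2 := lt_max_of_lt_right (Real.exp_pos _)
  have fin : ∀ Q : ℕ, 1 ≤ Q → min μ (1/2) ≤ C * (C2 ^ (β/α) * (Q:ℝ) ^ (d * (β / α))) / Q := by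
    intro Q hQ
    have hQ1 : (1:ℝ) ≤ Q := by exact_mod_cast hQ
    have hQ0 : (0:ℝ) < Q := by linarith
    obtain ⟨q, hq1, hq2, hk⟩ := key Q hQ
    have hq1' : (1:ℝ) ≤ q := by exact_mod_cast hq1
    have hq2' : (q:ℝ) ≤ (Q:ℝ)^d := by exact_mod_cast hq2
    have hex : ∃ N, N0 ≤ N ∧ (q:ℝ) * κ * ℓ N < 1 / 2 := by
      have ht : Tendsto (fun N : ℕ => (q:ℝ) * κ * Real.exp (-α * N)) atTop (𝓝 0) := by
        have : Tendsto (fun N : ℕ => Real.exp (-α * N)) atTop (𝓝 0) := by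
          refine Real.tendsto_exp_atBot.comp ?_
          exact (tendsto_natCast_atTop_atTop).const_mul_atTop_of_neg (by linarith)
        simpa using this.const_mul ((q:ℝ) * κ)
      obtain ⟨N, h1, h2⟩ := ((ht.eventually_lt_const (show (0:ℝ) < 1/2 by norm_num)).and
        (eventually_ge_atTop N0)).exists
      refine ⟨N, h2, lt_of_le_of_lt ?_ h1⟩
      exact mul_le_mul_of_nonneg_left (hle N h2) (by positivity)
    classical
    obtain ⟨hN0, hNs⟩ := Nat.find_spec hex
    have hmin := fun k => Nat.find_min hex (m := k)
    generalize Nat.find hex = N at hN0 hNs hmin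
    have claim : μ ≤ (q:ℝ) * κ * ℓ N ∧ Real.exp (α * N) ≤ C2 * (Q:ℝ)^d := by
      rcases Nat.eq_or_lt_of_le hN0 with h | h
      · subst h
        constructor
        · refine (min_le_left _ _).trans ?_
          have := mul_pos hκ (hpos N0 le_rfl)
          nlinarith
        · refine (le_max_right (2 * κ * Real.exp α) _).trans ?_
          exact le_mul_of_one_le_right hC2.le (one_le_pow₀ hQ1)
      · obtain ⟨K, rfl⟩ : ∃ K, N = K + 1 := ⟨N - 1, by omega⟩
        have hK : N0 ≤ K := by omega
        have h1 := hmin K (by omega)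
        push Not at h1
        have h1 := h1 hK
        have h2 := hr K hK
        have hqk : 0 < (q:ℝ) * κ := by positivity
        constructor
        · refine (min_le_right _ _).trans ?_
          have := mul_le_mul_of_nonneg_left h2 hqk.le
          nlinarith
        · have h3 : (1:ℝ)/2 ≤ (Q:ℝ)^d * κ * Real.exp (-α * K) := by
            refine h1.trans ?_
            have := hle K hK
            have := (hpos K hK).le
            gcongr
          have h4 : Real.exp (-α * K) * Real.exp (α * ((K + 1 : ℕ):ℝ)) = Real.exp α := by
            rw [← Real.exp_add]; congr 1; push_cast; ring
          have h5 : 2 * κ * Real.exp α ≤ C2 := le_max_left _ _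
          have h6 : 0 < Real.exp (α * ((K + 1 : ℕ):ℝ)) := Real.exp_pos _
          have h7 := mul_le_mul_of_nonneg_right h3 h6.le
          rw [mul_assoc _ (Real.exp _), h4] at h7
          have h8 : (0:ℝ) ≤ (Q:ℝ)^d := by positivity
          nlinarith
    obtain ⟨c1, c2⟩ := claim
    have hexp : Real.exp (β * N) ≤ C2 ^ (β/α) * (Q:ℝ) ^ (d * (β / α)) := by
      have : Real.exp (β * N) = (Real.exp (α * N)) ^ (β/α) := by
        rw [← Real.exp_mul]; congr 1; field_simp
      rw [this]
      refine (Real.rpow_le_rpow (Real.exp_pos _).le c2 (by positivity)).trans ?_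
      rw [Real.mul_rpow hC2.le (by positivity), ← Real.rpow_natCast, ← Real.rpow_mul hQ0.le]
    have hfin : min μ (1/2) ≤ C * Real.exp (β * N) / Q := by
      by_cases h : C * Real.exp (β * N) / Q ≤ 1 / 2
      · exact (min_le_left _ _).trans (c1.trans (hk N hN0 hNs h))
      · exact (min_le_right _ _).trans (not_le.mp h).le
    exact hfin.trans (by gcongr)
  have hlim : Tendsto (fun Q : ℕ => C * (C2 ^ (β/α) * (Q:ℝ) ^ (d * (β / α))) / Q) atTop (𝓝 0) := by
    have hlt : 0 < 1 - d * (β/α) := by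
      rw [sub_pos, ← mul_div_assoc, div_lt_one hα]; linarith
    have h1 : Tendsto (fun Q : ℕ => (Q:ℝ) ^ (-(1 - d * (β/α)))) atTop (𝓝 0) :=
      (tendsto_rpow_neg_atTop hlt).comp tendsto_natCast_atTop_atTop
    have h2 := h1.const_mul (C * C2 ^ (β/α))
    rw [mul_zero] at h2
    refine h2.congr' ?_
    filter_upwards [eventually_gt_atTop 0] with Q hQ
    have : (0:ℝ) < Q := by exact_mod_cast hQ
    rw [show -(1 - d * (β/α)) = d * (β/α) - 1 by ring, Real.rpow_sub_one this.ne']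
    ring
  obtain ⟨Q, h1, h2⟩ := ((hlim.eventually_lt_const (lt_min hμ (by norm_num : (0:ℝ) < 1/2))).and
    (eventually_ge_atTop 1)).exists
  exact absurd (fin Q h2) (not_le.mpr h1)

end Nesterenko

section PartialFractions
open Finset

noncomputable def den (n : ℕ) (t : ℝ) : ℝ := ∏ j ∈ range (n+1), (t + j)

lemma den_ne {n : ℕ} {t : ℝ} (ht : ∀ j ≤ n, t + (j:ℕ) ≠ 0) : den n t ≠ 0 :=
  prod_ne_zero_iff.mpr fun j hj => ht j (by simpa [Nat.lt_succ_iff] using hj)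

lemma prod_erase_fact (n p : ℕ) (hp : p ≤ n) :
    ∏ j ∈ (range (n+1)).erase p, ((j:ℝ) - p) = (-1)^p * (p.factorial * (n-p).factorial) := by
  have h1 : ∏ j ∈ range p, ((j:ℝ) - p) = (-1)^p * p.factorial := by
    rw [← prod_range_reflect, ← prod_range_add_one_eq_factorial]
    push_cast
    have : ((-1:ℝ))^p = ∏ _j ∈ range p, (-1:ℝ) := by simp
    rw [this, ← prod_mul_distrib]
    refine prod_congr rfl fun j hj => ?_
    have hj := mem_range.mp hj
    rw [show p - 1 - j = p - (j+1) by omega, Nat.cast_sub (by omega)]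
    push_cast; ring
  have h2 : ∏ j ∈ Ico (p+1) (n+1), ((j:ℝ) - p) = (n-p).factorial := by
    rw [prod_Ico_eq_prod_range, show n + 1 - (p+1) = n - p by omega,
      ← prod_range_add_one_eq_factorial]
    push_cast
    refine prod_congr rfl fun j hj => ?_
    ring
  have h3 : (range (n+1)).erase p = range p ∪ Ico (p+1) (n+1) := by
    ext x; simp; omega
  rw [h3, prod_union, h1, h2]; · ring
  rw [disjoint_left]; intro x; simp; omega

lemma pf_simple (n : ℕ) (f : Polynomial ℝ) (hf : f.degree < (n+1 : ℕ)) (t : ℝ)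
    (ht : ∀ j ≤ n, t + (j:ℕ) ≠ 0) :
    f.eval t / den n t = ∑ p ∈ range (n+1),
      ((-1)^p * (n.choose p) * (f.eval (-(p:ℝ)) / n.factorial)) / (t + p) := by
  have h1 := Lagrange.eq_interpolate (s := range (n+1)) (v := fun i : ℕ => -(i:ℝ)) (f := f)
    (fun x _ y _ h => by simpa using h) (by simpa using hf)
  have h2 := Lagrange.eval_interpolate_not_at_node (s := range (n+1)) (v := fun i : ℕ => -(i:ℝ))
    (x := t) (fun i => Polynomial.eval (-(i:ℝ)) f) (fun i hi h => ht i (by simpa [Nat.lt_succ_iff] using hi) (by rw [h]; ring))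
  rw [← h1, Lagrange.eval_nodal] at h2
  have h3 : ∏ i ∈ range (n+1), (t - -(i:ℝ)) = den n t := by simp [den]
  rw [h3] at h2
  rw [h2, mul_div_cancel_left₀ _ (den_ne ht)]
  refine sum_congr rfl fun p hp => ?_
  have hp' : p ≤ n := by simpa [Nat.lt_succ_iff] using hp
  have h4 : Lagrange.nodalWeight (range (n+1)) (fun i : ℕ => -(i:ℝ)) p
      = ((-1)^p * (p.factorial * (n-p).factorial) : ℝ)⁻¹ := by
    rw [Lagrange.nodalWeight, prod_inv_distrib, ← prod_erase_fact n p hp']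
    congr 1
    exact prod_congr rfl fun j _ => by ring
  rw [h4]
  have h5 : ((n.choose p : ℕ):ℝ) * (p.factorial * (n-p).factorial) = n.factorial := by
    rw [← Nat.choose_mul_factorial_mul_factorial hp']; push_cast; ring
  have h6 : ((-1:ℝ)^p) * (-1)^p = 1 := by rw [← mul_pow]; simp
  have h7 := Nat.factorial_ne_zero n
  have h8 := Nat.factorial_ne_zero p
  have h9 := Nat.factorial_ne_zero (n-p)
  have h10 := ht p hp'
  rw [sub_neg_eq_add, ← h5]
  have h11 : ((n.choose p : ℕ):ℝ) ≠ 0 := by exact_mod_cast (Nat.choose_pos hp').ne'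
  have h12 : ((-1:ℝ)^p) ≠ 0 := by positivity
  field_simp
  linear_combination (-(Polynomial.eval (-(p:ℝ)) f)) * h6

def Brick (n : ℕ) (B : ℝ) (F : ℝ → ℝ) : Prop :=
  ∃ b : ℕ → ℤ, (∀ p ≤ n, |(b p : ℝ)| ≤ B) ∧ ∀ t : ℝ, (∀ j ≤ n, t + (j:ℕ) ≠ 0) →
    F t = ∑ p ∈ range (n+1), (b p : ℝ) / (t + p)

lemma brickA (n : ℕ) : Brick n (2^n) (fun t => n.factorial / den n t) := by
  refine ⟨fun p => (-1)^p * n.choose p, fun p _ => ?_, fun t ht => ?_⟩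
  · push_cast
    rw [abs_mul, abs_pow, abs_neg, abs_one, one_pow, one_mul, Nat.abs_cast]
    exact_mod_cast Nat.choose_le_two_pow n p
  · have h := pf_simple n (Polynomial.C (n.factorial : ℝ)) (by
      refine lt_of_le_of_lt Polynomial.degree_C_le ?_
      exact_mod_cast Nat.succ_pos n) t ht
    simp only [Polynomial.eval_C] at h
    beta_reduce
    rw [h]
    refine sum_congr rfl fun p _ => ?_
    rw [div_self (by exact_mod_cast Nat.factorial_ne_zero n)]
    push_cast; ring

lemma brickB (n r : ℕ) (u : ℤ)
    (hu : ∀ p ≤ n, ∀ s < n, |((u:ℝ) - p + s)| ≤ (r+1) * n) :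
    Brick n ((6 * (r+1))^n) (fun t => (∏ s ∈ range n, (t + u + s)) / den n t) := by
  have hdvd := fun p : ℕ => Nat.factorial_coe_dvd_prod n (u - p)
  choose z hz using hdvd
  have hz' : ∀ p : ℕ, (∏ s ∈ range n, ((u:ℝ) - p + s)) / n.factorial = z p := fun p => by
    rw [div_eq_iff (by exact_mod_cast Nat.factorial_ne_zero n)]
    have := congrArg (fun x : ℤ => (x:ℝ)) (hz p)
    push_cast at this
    rw [this]; ring
  refine ⟨fun p => (-1)^p * n.choose p * z p, fun p hp => ?_, fun t ht => ?_⟩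
  · push_cast
    rw [← hz' p, abs_mul, abs_mul, abs_pow, abs_neg, abs_one, one_pow, one_mul, Nat.abs_cast,
      abs_div, abs_prod, Nat.abs_cast]
    have h1 : ((n.choose p : ℕ):ℝ) ≤ 2^n := by exact_mod_cast Nat.choose_le_two_pow n p
    have h2 : ∏ s ∈ range n, |(u:ℝ) - p + s| ≤ ((r+1) * n)^n := by
      have := prod_le_prod (s := range n) (f := fun s : ℕ => |(u:ℝ) - p + s|)
        (g := fun _ => ((r:ℝ)+1) * n) (fun _ _ => abs_nonneg _)
        (fun s hs => hu p hp s (mem_range.mp hs))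
      simpa using this
    have h3 := Real.pow_div_factorial_le_exp n (Nat.cast_nonneg n) n
    have h4 : Real.exp n ≤ 3^n := by
      rw [← Real.exp_one_pow]
      exact pow_le_pow_left₀ (Real.exp_pos _).le (by linarith [Real.exp_one_lt_d9]) n
    calc _ ≤ (2:ℝ)^n * (((r+1) * n)^n / n.factorial) := by gcongr
      _ = (2 * (r+1))^n * ((n:ℝ)^n / n.factorial) := by rw [mul_pow, mul_pow]; ring
      _ ≤ (2 * (r+1))^n * 3^n := by gcongr; linarith
      _ = _ := by rw [← mul_pow]; ring
  · let f : Polynomial ℝ := ∏ s ∈ range n, (Polynomial.X + Polynomial.C ((u:ℝ) + s))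
    have hfe : ∀ x, f.eval x = ∏ s ∈ range n, (x + u + s) := fun x => by
      simp [f, Polynomial.eval_prod, add_assoc]
    have h := pf_simple n f (by
      have hm : f.Monic := Polynomial.monic_prod_of_monic _ _ fun s _ => Polynomial.monic_X_add_C _
      have : f.degree ≤ (n:ℕ) := by
        refine (Polynomial.degree_prod_le _ _).trans ?_
        simp only [Polynomial.degree_X_add_C, sum_const, card_range]
        simp
      exact lt_of_le_of_lt this (by exact_mod_cast Nat.lt_succ_self n)) t ht
    simp only [hfe] at h
    beta_reduce
    rw [h]
    refine sum_congr rfl fun p _ => ?_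
    have : ∏ s ∈ range n, (-(p:ℝ) + u + s) = ∏ s ∈ range n, ((u:ℝ) - p + s) :=
      prod_congr rfl fun s _ => by ring
    rw [this, hz' p]
    push_cast; ring

def PF (n w : ℕ) (M : ℝ) (F : ℝ → ℝ) : Prop :=
  ∃ c : ℕ → ℕ → ℝ, (∀ i < w, ∀ j ≤ n, |c i j| ≤ M) ∧
    (∀ i < w, ∀ j ≤ n, ∃ z : ℤ, c i j * (Nat.lcmUpto n : ℝ) ^ w = z * (Nat.lcmUpto n : ℝ) ^ (i+1)) ∧
    ∀ t : ℝ, (∀ j ≤ n, t + (j:ℕ) ≠ 0) →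
      F t = ∑ i ∈ range w, ∑ j ∈ range (n+1), c i j / (t + j) ^ (i+1)

lemma lcmUpto_div (n : ℕ) (k : ℤ) (hk : k ≠ 0) (hkn : |k| ≤ n) :
    ∃ z : ℤ, (Nat.lcmUpto n : ℝ) / k = z := by
  have h0 : k.natAbs ∈ Finset.Icc 1 n := by
    have := abs_le.mp hkn
    rw [Finset.mem_Icc]; constructor <;> omega
  have h1 : k.natAbs ∣ Nat.lcmUpto n := Finset.dvd_lcm (f := id) h0
  have h2 : k ∣ (Nat.lcmUpto n : ℤ) := by
    rwa [← Int.natAbs_dvd, Int.natCast_dvd_natCast]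
  obtain ⟨z, hz⟩ := h2
  refine ⟨z, ?_⟩
  rw [div_eq_iff (by exact_mod_cast hk)]
  have : ((Nat.lcmUpto n : ℤ) : ℝ) = ((k * z : ℤ) : ℝ) := by rw [hz]
  push_cast at this
  rw [this]; ring

lemma elem_pf (n j p : ℕ) (hj : j ≤ n) (hp : p ≤ n) (m : ℕ) :
    ∃ e : ℕ → ℕ → ℝ, (∀ i' j', |e i' j'| ≤ m + 1) ∧ (∀ i' j', m + 1 ≤ i' → e i' j' = 0) ∧
      (∀ i' j', ∃ z : ℤ, e i' j' * (Nat.lcmUpto n : ℝ) ^ (m+1) = z * (Nat.lcmUpto n : ℝ) ^ (i'+1)) ∧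
      ∀ t : ℝ, (∀ j ≤ n, t + (j:ℕ) ≠ 0) →
        1 / ((t + j) ^ m * (t + p)) =
          ∑ i' ∈ range (m+1), ∑ j' ∈ range (n+1), e i' j' / (t + j') ^ (i'+1) := by
  rcases eq_or_ne j p with rfl | hne
  · refine ⟨fun i' j' => if i' = m ∧ j' = j then 1 else 0, fun i' j' => ?_, fun i' j' h => ?_,
      fun i' j' => ?_, fun t ht => ?_⟩
    · beta_reduce
      split_ifs <;> (simp; try positivity)
    · exact if_neg (by omega)
    · beta_reduce
      split_ifs with h
      · exact ⟨1, by rw [h.1]; simp⟩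
      · exact ⟨0, by simp⟩
    · rw [sum_eq_single m, sum_eq_single j]
      · simp [pow_succ]
      · intro b _ hb; simp [hb]
      · intro h; exact absurd (mem_range.mpr (by omega)) h
      · intro b _ hb; simp [hb]
      · simp
  · have hpj : ((p:ℝ) - j) ≠ 0 := by
      rw [sub_ne_zero]; exact_mod_cast hne.symm
    have hpj1 : 1 ≤ |((p:ℝ) - j)| := by
      have : (1:ℤ) ≤ |((p:ℤ) - j)| := Int.one_le_abs (by omega)
      exact_mod_cast this
    obtain ⟨y, hy⟩ := lcmUpto_div n ((p:ℤ) - j) (by omega) (by rw [abs_le]; omega)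
    induction m with
    | zero =>
      refine ⟨fun i' j' => if i' = 0 ∧ j' = p then 1 else 0, fun i' j' => ?_, fun i' j' h => ?_,
        fun i' j' => ?_, fun t ht => ?_⟩
      · beta_reduce
        split_ifs <;> simp
      · exact if_neg (by omega)
      · beta_reduce
        split_ifs with h
        · exact ⟨1, by rw [h.1]; simp⟩
        · exact ⟨0, by simp⟩
      · rw [sum_eq_single 0, sum_eq_single p]
        · simp
        · intro b _ hb; simp [hb]
        · intro h; exact absurd (mem_range.mpr (by omega)) h
        · intro b _ hb; simp [hb]
        · simp
    | succ m ih =>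
      obtain ⟨e, he1, he2, he3, he4⟩ := ih
      refine ⟨fun i' j' => ((if i' = m ∧ j' = j then 1 else 0) - e i' j') / ((p:ℝ) - j),
        fun i' j' => ?_, fun i' j' h => ?_, fun i' j' => ?_, fun t ht => ?_⟩
      · beta_reduce
        rw [abs_div]
        refine (div_le_self (abs_nonneg _) hpj1).trans ?_
        refine (abs_sub _ _).trans ?_
        have : |(if i' = m ∧ j' = j then (1:ℝ) else 0)| ≤ 1 := by split_ifs <;> simp
        push_cast
        linarith [he1 i' j']
      · beta_reduce
        rw [he2 i' j' (by omega), if_neg (by omega)]; simp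
      · beta_reduce
        obtain ⟨z, hz⟩ := he3 i' j'
        have hd : ∃ w : ℤ, (if i' = m ∧ j' = j then (1:ℝ) else 0) * (Nat.lcmUpto n : ℝ)^(m+1)
            = w * (Nat.lcmUpto n : ℝ) ^ (i'+1) := by
          split_ifs with h
          · exact ⟨1, by rw [h.1]; simp⟩
          · exact ⟨0, by simp⟩
        obtain ⟨w, hw⟩ := hd
        refine ⟨y * (w - z), ?_⟩
        push_cast at hy ⊢
        rw [← hy]
        generalize (if i' = m ∧ j' = j then (1:ℝ) else 0) = δ at *
        rw [pow_succ _ (m+1)]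
        field_simp
        linear_combination (Nat.lcmUpto n : ℝ) * hw - (Nat.lcmUpto n : ℝ) * hz
      · have h1 := he4 t ht
        have hs : ∑ i' ∈ range (m+1), ∑ j' ∈ range (n+1),
            (if i' = m ∧ j' = j then (1:ℝ) else 0) / (t + j') ^ (i'+1) = 1 / (t + j)^(m+1) := by
          rw [sum_eq_single m, sum_eq_single j]
          · simp
          · intro b _ hb; simp [hb]
          · intro h; exact absurd (mem_range.mpr (by omega)) h
          · intro b _ hb; simp [hb]
          · simp
        rw [sum_range_succ]
        have hz : ∑ j' ∈ range (n+1), (((if m + 1 = m ∧ j' = j then (1:ℝ) else 0) - e (m+1) j') /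
            ((p:ℝ) - j)) / (t + j') ^ (m+1+1) = 0 :=
          sum_eq_zero fun j' _ => by rw [he2 (m+1) j' le_rfl]; simp
        rw [hz, add_zero]
        have : ∀ i' j' : ℕ, (((if i' = m ∧ j' = j then (1:ℝ) else 0) - e i' j') /
            ((p:ℝ) - j)) / (t + j') ^ (i'+1) = ((if i' = m ∧ j' = j then (1:ℝ) else 0) / (t + j') ^ (i'+1)
              - e i' j' / (t + j') ^ (i'+1)) / ((p:ℝ) - j) := fun i' j' => by ring
        simp only [this]
        simp only [← sum_div, sum_sub_distrib]
        rw [hs, ← h1]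
        have t1 := ht j hj
        have t2 := ht p hp
        field_simp
        ring

lemma PF_mul {n w : ℕ} {M B : ℝ} {F G : ℝ → ℝ} (hM : 0 ≤ M) (hF : PF n w M F) (hG : Brick n B G) :
    PF n (w+1) (((w:ℝ)+1)^2 * ((n:ℝ)+1)^2 * (M * B)) (fun t => F t * G t) := by
  obtain ⟨c, hc1, hc2, hc3⟩ := hF
  obtain ⟨b, hb1, hb2⟩ := hG
  have hel : ∀ i j p : ℕ, ∃ e : ℕ → ℕ → ℝ, j ≤ n → p ≤ n →
      ((∀ i' j', |e i' j'| ≤ (i+1 : ℕ) + 1) ∧ (∀ i' j', i + 1 + 1 ≤ i' → e i' j' = 0) ∧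
      (∀ i' j', ∃ z : ℤ, e i' j' * (Nat.lcmUpto n : ℝ) ^ (i+1+1) = z * (Nat.lcmUpto n : ℝ) ^ (i'+1)) ∧
      ∀ t : ℝ, (∀ j ≤ n, t + (j:ℕ) ≠ 0) →
        1 / ((t + j) ^ (i+1) * (t + p)) =
          ∑ i' ∈ range (i+1+1), ∑ j' ∈ range (n+1), e i' j' / (t + j') ^ (i'+1)) := by
    intro i j p
    by_cases h : j ≤ n ∧ p ≤ n
    · obtain ⟨e, he⟩ := elem_pf n j p h.1 h.2 (i+1)
      exact ⟨e, fun _ _ => he⟩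
    · exact ⟨0, fun h1 h2 => absurd ⟨h1, h2⟩ h⟩
  choose e he using hel
  have hd : (Nat.lcmUpto n : ℝ) ≠ 0 := by exact_mod_cast (Nat.lcmUpto_pos n).ne'
  have hr : ∀ {j}, j ∈ range (n+1) → j ≤ n := fun h => by simpa [Nat.lt_succ_iff] using h
  refine ⟨fun i' j' => ∑ i ∈ range w, ∑ j ∈ range (n+1), ∑ p ∈ range (n+1),
    c i j * b p * e i j p i' j', fun i' hi' j' hj' => ?_, fun i' hi' j' hj' => ?_, fun t ht => ?_⟩
  · have hB : 0 ≤ B := (abs_nonneg _).trans (hb1 0 (Nat.zero_le _))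
    calc _ ≤ ∑ i ∈ range w, ∑ j ∈ range (n+1), ∑ p ∈ range (n+1), M * B * ((w:ℝ)+1) := by
          refine (abs_sum_le_sum_abs _ _).trans (sum_le_sum fun i hi => ?_)
          refine (abs_sum_le_sum_abs _ _).trans (sum_le_sum fun j hj => ?_)
          refine (abs_sum_le_sum_abs _ _).trans (sum_le_sum fun p hp => ?_)
          rw [abs_mul, abs_mul]
          have h1 := hc1 i (mem_range.mp hi) j (hr hj)
          have h2 := hb1 p (hr hp)
          have h3 := (he i j p (hr hj) (hr hp)).1 i' j'
          have h4 : ((i+1:ℕ):ℝ) + 1 ≤ (w:ℝ) + 1 := by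
            have := mem_range.mp hi
            have : ((i+1:ℕ):ℝ) ≤ w := by exact_mod_cast this
            linarith
          have h5 := h3.trans h4
          gcongr
      _ = (w:ℝ) * ((w:ℝ)+1) * ((n:ℝ)+1)^2 * (M * B) := by
          simp only [sum_const, card_range, nsmul_eq_mul]
          push_cast; ring
      _ ≤ _ := by
          have : (0:ℝ) ≤ w := Nat.cast_nonneg w
          gcongr
          nlinarith
  · have hz : ∀ i j p : ℕ, ∃ z : ℤ, i < w → j ≤ n → p ≤ n →
        c i j * b p * e i j p i' j' * (Nat.lcmUpto n : ℝ) ^ (w+1) = z * (Nat.lcmUpto n : ℝ)^(i'+1) := by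
      intro i j p
      by_cases h : i < w ∧ j ≤ n ∧ p ≤ n
      · obtain ⟨z1, hz1⟩ := hc2 i h.1 j h.2.1
        obtain ⟨z2, hz2⟩ := (he i j p h.2.1 h.2.2).2.2.1 i' j'
        refine ⟨z1 * z2 * b p, fun _ _ _ => ?_⟩
        push_cast
        have hpw : (Nat.lcmUpto n : ℝ)^(i+1) ≠ 0 := pow_ne_zero _ hd
        refine mul_right_cancel₀ hpw ?_
        calc _ = (c i j * (Nat.lcmUpto n : ℝ)^w) * (e i j p i' j' * (Nat.lcmUpto n : ℝ)^(i+1+1)) * b p := by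
              ring
          _ = _ := by rw [hz1, hz2]; ring
      · exact ⟨0, fun h1 h2 h3 => absurd ⟨h1, h2, h3⟩ h⟩
    choose z hz using hz
    refine ⟨∑ i ∈ range w, ∑ j ∈ range (n+1), ∑ p ∈ range (n+1), z i j p, ?_⟩
    push_cast
    simp only [sum_mul]
    refine sum_congr rfl fun i hi => sum_congr rfl fun j hj => sum_congr rfl fun p hp => ?_
    exact hz i j p (mem_range.mp hi) (hr hj) (hr hp)
  · beta_reduce
    rw [hc3 t ht, hb2 t ht]
    have step : ∀ i ∈ range w, ∀ j ∈ range (n+1), ∀ p ∈ range (n+1),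
        c i j / (t + j)^(i+1) * (b p / (t + p)) =
        ∑ i' ∈ range (w+1), ∑ j' ∈ range (n+1), c i j * b p * e i j p i' j' / (t + j')^(i'+1) := by
      intro i hi j hj p hp
      obtain ⟨_, h2, _, h4⟩ := he i j p (hr hj) (hr hp)
      have h5 := h4 t ht
      have h6 : ∑ i' ∈ range (i+1+1), ∑ j' ∈ range (n+1), e i j p i' j' / (t + j')^(i'+1)
          = ∑ i' ∈ range (w+1), ∑ j' ∈ range (n+1), e i j p i' j' / (t + j')^(i'+1) := by
        refine sum_subset (range_mono (by have := mem_range.mp hi; omega)) fun x _ hx => ?_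
        refine sum_eq_zero fun j' _ => ?_
        rw [h2 x j' (by simpa using hx)]; simp
      rw [h6] at h5
      calc _ = c i j * b p * (1 / ((t + j)^(i+1) * (t+p))) := by
            rw [div_mul_div_comm]; ring
        _ = _ := by
            rw [h5, mul_sum]
            refine sum_congr rfl fun _ _ => ?_
            rw [mul_sum]
            refine sum_congr rfl fun _ _ => ?_
            ring
    have lhs : (∑ i ∈ range w, ∑ j ∈ range (n+1), c i j / (t + j)^(i+1)) *
        (∑ p ∈ range (n+1), (b p : ℝ) / (t + p)) =
        ∑ i ∈ range w, ∑ j ∈ range (n+1), ∑ p ∈ range (n+1),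
          ∑ i' ∈ range (w+1), ∑ j' ∈ range (n+1), c i j * b p * e i j p i' j' / (t + j')^(i'+1) := by
      rw [sum_mul]
      refine sum_congr rfl fun i hi => ?_
      rw [sum_mul]
      refine sum_congr rfl fun j hj => ?_
      rw [mul_sum]
      exact sum_congr rfl fun p hp => step i hi j hj p hp
    rw [lhs]
    simp only [sum_div]
    have s1 : ∀ i j : ℕ, ∑ p ∈ range (n+1), ∑ i' ∈ range (w+1), ∑ j' ∈ range (n+1),
        c i j * b p * e i j p i' j' / (t + j')^(i'+1) =
        ∑ i' ∈ range (w+1), ∑ j' ∈ range (n+1), ∑ p ∈ range (n+1),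
        c i j * b p * e i j p i' j' / (t + j')^(i'+1) := fun i j => by
      rw [sum_comm]; exact sum_congr rfl fun _ _ => sum_comm
    simp only [s1]
    have s2 : ∀ i : ℕ, ∑ j ∈ range (n+1), ∑ i' ∈ range (w+1), ∑ j' ∈ range (n+1), ∑ p ∈ range (n+1),
        c i j * b p * e i j p i' j' / (t + j')^(i'+1) =
        ∑ i' ∈ range (w+1), ∑ j' ∈ range (n+1), ∑ j ∈ range (n+1), ∑ p ∈ range (n+1),
        c i j * b p * e i j p i' j' / (t + j')^(i'+1) := fun i => by
      rw [sum_comm]; exact sum_congr rfl fun _ _ => sum_comm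
    simp only [s2]
    rw [sum_comm]; exact sum_congr rfl fun _ _ => sum_comm

lemma PF_brick {n : ℕ} {B : ℝ} {G : ℝ → ℝ} (hG : Brick n B G) : PF n 1 B G := by
  obtain ⟨b, hb1, hb2⟩ := hG
  refine ⟨fun _ j => b j, fun _ _ j hj => hb1 j hj, fun i hi j _ => ⟨b j, ?_⟩, fun t ht => ?_⟩
  · have : i = 0 := by omega
    subst this; simp
  · rw [hb2 t ht]; simp

lemma PF_mono {n w : ℕ} {M M' : ℝ} {F : ℝ → ℝ} (h : M ≤ M') (hF : PF n w M F) : PF n w M' F := by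
  obtain ⟨c, h1, h2, h3⟩ := hF
  exact ⟨c, fun i hi j hj => (h1 i hi j hj).trans h, h2, h3⟩

lemma PF_pow {n w : ℕ} {M B : ℝ} {F G : ℝ → ℝ} (a : ℕ) (hM : 0 ≤ M) (hB : 0 ≤ B) (hF : PF n w M F)
    (hG : Brick n B G) (k : ℕ) (hk : w + k ≤ a) :
    PF n (w+k) (M * (((a:ℝ)+1)^2 * ((n:ℝ)+1)^2 * B)^k) (fun t => F t * G t ^ k) := by
  induction k with
  | zero => simpa using hF
  | succ k ih =>
    have h1 := PF_mul (by positivity) (ih (by omega)) hG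
    have h2 : (fun t => F t * G t ^ (k+1)) = fun t => F t * G t ^ k * G t := by
      funext t; ring
    rw [h2]
    refine PF_mono ?_ h1
    have h3 : ((w+k:ℕ):ℝ) ≤ a := by exact_mod_cast (by omega : w + k ≤ a)
    calc _ ≤ ((a:ℝ)+1)^2 * ((n:ℝ)+1)^2 * ((M * (((a:ℝ)+1)^2 * ((n:ℝ)+1)^2 * B)^k) * B) := by gcongr
      _ = _ := by rw [pow_succ]; ring

noncomputable def num (r n : ℕ) (t : ℝ) : ℝ :=
  (∏ j ∈ range (r*n), (t - 1 - j)) * ∏ j ∈ range (r*n), (t + n + 1 + j)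

noncomputable def RR (a r n : ℕ) (t : ℝ) : ℝ :=
  (n.factorial : ℝ)^(a - 6*r) * num r n t ^ 3 / den n t ^ a

lemma num_succ (r n : ℕ) (t : ℝ) : num (r+1) n t = num r n t *
    ((∏ s ∈ range n, (t + (-((r+1)*n) : ℤ) + s)) * (∏ s ∈ range n, (t + ((r+1)*n+1 : ℤ) + s))) := by
  rw [num, num, add_mul, one_mul, prod_range_add, prod_range_add]
  have h1 : ∏ x ∈ range n, (t - 1 - ((r*n+x:ℕ):ℝ)) = ∏ s ∈ range n, (t + (-((r+1)*n) : ℤ) + s) := by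
    rw [← prod_range_reflect]
    refine prod_congr rfl fun j hj => ?_
    have hj := mem_range.mp hj
    rw [show r * n + (n - 1 - j) = (r+1)*n - (j+1) by rw [add_mul]; omega, Nat.cast_sub (by nlinarith)]
    push_cast; ring
  have h2 : ∏ x ∈ range n, (t + n + 1 + ((r*n+x:ℕ):ℝ)) = ∏ s ∈ range n, (t + ((r+1)*n+1 : ℤ) + s) := by
    refine prod_congr rfl fun j hj => ?_
    push_cast; ring
  rw [h1, h2]; ring

theorem PF_RR (a r n : ℕ) (ha : 6 * r + 1 ≤ a) :
    PF n a ((((a:ℝ)+1)^2 * ((n:ℝ)+1)^2)^a * (((2:ℝ)^n)^(a-6*r) * (((6 * ((r:ℝ)+1))^n)^(6*r))))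
      (RR a r n) := by
  set K : ℝ := ((a:ℝ)+1)^2 * ((n:ℝ)+1)^2 with hK
  have hK1 : 1 ≤ K := by
    have h1 : (1:ℝ) ≤ ((a:ℝ)+1)^2 := one_le_pow₀ (by linarith [Nat.cast_nonneg (α := ℝ) a])
    have h2 : (1:ℝ) ≤ ((n:ℝ)+1)^2 := one_le_pow₀ (by linarith [Nat.cast_nonneg (α := ℝ) n])
    exact one_le_mul_of_one_le_of_one_le h1 h2
  set m := a - 6*r with hm
  set B : ℝ := (6 * ((r:ℝ)+1))^n with hB
  have hB0 : 0 ≤ B := by positivity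
  have base : PF n m (K^m * ((2:ℝ)^n)^m) (fun t => (n.factorial / den n t)^m) := by
    have h1 := PF_pow a (by positivity) (by positivity) (PF_brick (brickA n)) (brickA n) (m-1) (by omega)
    rw [show 1 + (m-1) = m by omega] at h1
    have h2 : (fun t => (n.factorial / den n t)^m) =
        fun t => (n.factorial / den n t) * (n.factorial / den n t)^(m-1) := by
      funext t; rw [← pow_succ', show m - 1 + 1 = m by omega]
    rw [h2]
    refine PF_mono ?_ h1
    rw [← hK, mul_pow, ← show m - 1 + 1 = m by omega]
    simp only [Nat.add_sub_cancel]
    rw [pow_succ K, pow_succ ((2:ℝ)^n)]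
    have : (0:ℝ) ≤ 2^n * (K^(m-1) * (2^n)^(m-1)) := by positivity
    nlinarith
  have key : ∀ r' ≤ r, PF n (m + 6*r') (K^(m+6*r') * (((2:ℝ)^n)^m * B^(6*r')))
      (fun t => (n.factorial / den n t)^m * num r' n t ^ 3 / den n t ^ (6*r')) := by
    intro r'
    induction r' with
    | zero => intro _; simpa [num] using base
    | succ q ih =>
      intro hq
      have hqr : (q:ℝ) + 1 ≤ r := by exact_mod_cast hq
      have hq0 : (0:ℝ) ≤ q := Nat.cast_nonneg q
      have hqn : ((q:ℝ)+1)*n ≤ r * n := by gcongr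
      have hqn0 : (n:ℝ) ≤ ((q:ℝ)+1)*n := by nlinarith [Nat.cast_nonneg (α := ℝ) n]
      have b1 := brickB n r (-((q+1)*n)) (by
        intro p hp s hs
        have hp' : (p:ℝ) ≤ n := by exact_mod_cast hp
        have hs' : (s:ℝ) ≤ n := by exact_mod_cast hs.le
        have := Nat.cast_nonneg (α := ℝ) p
        have := Nat.cast_nonneg (α := ℝ) s
        push_cast
        rw [abs_le]; constructor <;> nlinarith)
      have b2 := brickB n r (((q+1)*n+1)) (by
        intro p hp s hs
        have hp' : (p:ℝ) ≤ n := by exact_mod_cast hp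
        have hs' : (s:ℝ) + 1 ≤ n := by exact_mod_cast hs
        have := Nat.cast_nonneg (α := ℝ) p
        have := Nat.cast_nonneg (α := ℝ) s
        push_cast
        rw [abs_le]; constructor <;> nlinarith)
      have h1 := PF_pow a (by positivity) hB0 (ih (by omega)) b1 3 (by omega)
      have h2 := PF_pow a (by positivity) hB0 h1 b2 3 (by omega)
      rw [show m + 6 * q + 3 + 3 = m + 6*(q+1) by ring] at h2
      convert! h2 using 1
      · rw [← hK]; ring
      · funext t
        rw [num_succ]
        push_cast
        rw [div_pow, div_pow, show 6*(q+1) = 6*q+3+3 by ring, pow_add _ (6*q+3), pow_add _ (6*q)]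
        simp only [div_eq_mul_inv, mul_inv]
        ring
  have h := key r le_rfl
  rw [show m + 6*r = a by omega] at h
  convert! h using 1
  funext t
  rw [RR, ← hm, div_pow, show a = m + 6*r by omega, pow_add]
  simp only [div_eq_mul_inv, mul_inv]
  ring

end PartialFractions

section LinForms
open Finset Filter Topology

lemma tel_one (s j : ℕ) (hs : 1 ≤ s) :
    HasSum (fun k : ℕ => 1 / ((k:ℝ) + 1 + j)^s - 1 / ((k:ℝ) + 1 + (j+1:ℕ))^s) (1 / ((j:ℝ)+1)^s) := by
  rw [hasSum_iff_tendsto_nat_of_nonneg]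
  · have : ∀ N : ℕ, ∑ k ∈ range N, (1 / ((k:ℝ) + 1 + j)^s - 1 / ((k:ℝ) + 1 + (j+1:ℕ))^s)
        = 1 / ((j:ℝ)+1)^s - 1 / ((N:ℝ) + 1 + j)^s := by
      intro N
      induction N with
      | zero => simp [add_comm]
      | succ N ih => rw [sum_range_succ, ih]; push_cast; ring
    simp only [this]
    have h : Tendsto (fun N : ℕ => 1 / ((N:ℝ) + 1 + j)^s) atTop (𝓝 0) := by
      simp only [one_div]
      refine Tendsto.inv_tendsto_atTop ?_
      refine (tendsto_pow_atTop (by omega)).comp ?_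
      exact tendsto_atTop_add_const_right _ _ (tendsto_atTop_add_const_right _ _ tendsto_natCast_atTop_atTop)
    simpa using h.const_sub (1 / ((j:ℝ)+1)^s)
  · intro k
    rw [sub_nonneg]
    push_cast
    gcongr
    linarith

lemma tel_all (s j : ℕ) (hs : 1 ≤ s) :
    HasSum (fun k : ℕ => 1 / ((k:ℝ) + 1 + j)^s - 1 / ((k:ℝ) + 1)^s)
      (-∑ k ∈ range j, 1 / ((k:ℝ)+1)^s) := by
  induction j with
  | zero => simp [hasSum_zero]
  | succ j ih =>
    have h := ih.sub (tel_one s j hs)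
    rw [sum_range_succ]
    convert! h using 1
    · funext k; ring
    · ring

lemma zeta_hasSum (s : ℕ) (hs : 2 ≤ s) : HasSum (fun k : ℕ => 1 / ((k:ℝ) + 1)^s) (zeta s) := by
  refine Summable.hasSum ?_
  have h := (summable_nat_add_iff 1).mpr (Real.summable_one_div_nat_pow.mpr (by omega : 1 < s))
  simpa using h

lemma zform (n s : ℕ) (e : ℕ → ℝ) (hs : 1 ≤ s) (h : 2 ≤ s ∨ ∑ j ∈ range (n+1), e j = 0) :
    HasSum (fun k : ℕ => ∑ j ∈ range (n+1), e j / ((k:ℝ) + 1 + j)^s)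
      ((∑ j ∈ range (n+1), e j) * zeta s
        - ∑ j ∈ range (n+1), e j * ∑ k ∈ range j, 1 / ((k:ℝ)+1)^s) := by
  have h1 : HasSum (fun k : ℕ => (∑ j ∈ range (n+1), e j) * (1 / ((k:ℝ)+1)^s))
      ((∑ j ∈ range (n+1), e j) * zeta s) := by
    rcases h with h | h
    · exact (zeta_hasSum s h).mul_left _
    · simp [h, hasSum_zero]
  have h2 : HasSum (fun k : ℕ => ∑ j ∈ range (n+1), e j * (1 / ((k:ℝ) + 1 + j)^s - 1 / ((k:ℝ) + 1)^s))
      (∑ j ∈ range (n+1), e j * (-∑ k ∈ range j, 1 / ((k:ℝ)+1)^s)) :=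
    hasSum_sum fun j _ => (tel_all s j hs).mul_left _
  convert! h1.add h2 using 1
  · funext k
    rw [sum_mul, ← sum_add_distrib]
    exact sum_congr rfl fun j _ => by ring
  · simp only [mul_neg, sum_neg_distrib]; ring

lemma den_symm (n : ℕ) (hn : Even n) (t : ℝ) : den n (-n - t) = - den n t := by
  rw [den, den, ← prod_range_reflect]
  have : ∀ j ∈ range (n+1), (-(n:ℝ) - t + ((n + 1 - 1 - j : ℕ):ℝ)) = (-1) * (t + j) := by
    intro j hj
    have := mem_range.mp hj
    rw [show n + 1 - 1 - j = n - j by omega, Nat.cast_sub (by omega)]; ring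
  rw [prod_congr rfl this, prod_mul_distrib]
  simp [pow_succ, hn.neg_one_pow]

lemma num_symm (r n : ℕ) (t : ℝ) : num r n (-n - t) = num r n t := by
  rw [num, num]
  have h1 : ∏ j ∈ range (r*n), (-(n:ℝ) - t - 1 - j) = (-1)^(r*n) * ∏ j ∈ range (r*n), (t + n + 1 + j) := by
    have : ((-1:ℝ))^(r*n) = ∏ _j ∈ range (r*n), (-1:ℝ) := by simp
    rw [this, ← prod_mul_distrib]
    exact prod_congr rfl fun j _ => by ring
  have h2 : ∏ j ∈ range (r*n), (-(n:ℝ) - t + n + 1 + j) = (-1)^(r*n) * ∏ j ∈ range (r*n), (t - 1 - j) := by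
    have : ((-1:ℝ))^(r*n) = ∏ _j ∈ range (r*n), (-1:ℝ) := by simp
    rw [this, ← prod_mul_distrib]
    exact prod_congr rfl fun j _ => by ring
  rw [h1, h2]
  have h6 : ((-1:ℝ)^(r*n)) * (-1)^(r*n) = 1 := by rw [← mul_pow]; simp
  linear_combination (∏ j ∈ range (r*n), (t + n + 1 + j)) * (∏ j ∈ range (r*n), (t - 1 - j)) * h6

lemma RR_symm (a r n : ℕ) (ha : Odd a) (hn : Even n) (t : ℝ) : RR a r n (-n - t) = - RR a r n t := by
  rw [RR, RR, den_symm n hn, num_symm, ha.neg_pow, div_neg]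

/-- Symmetrized partial fractions. -/
lemma RR_sym_pf (a r n : ℕ) (hodd : Odd a) (hn : Even n) (M : ℝ)
    (hPF : PF n a M (RR a r n)) :
    ∃ e : ℕ → ℕ → ℝ, (∀ i < a, ∀ j ≤ n, |e i j| ≤ 2 * M) ∧
    (∀ i < a, ∀ j ≤ n, ∃ z : ℤ, e i j * (Nat.lcmUpto n : ℝ) ^ a = z * (Nat.lcmUpto n : ℝ) ^ (i+1)) ∧
    (∀ i, Odd i → ∑ j ∈ range (n+1), e i j = 0) ∧
    ∀ t : ℝ, 0 < t → 2 * RR a r n t = ∑ i ∈ range a, ∑ j ∈ range (n+1), e i j / (t + j) ^ (i+1) := by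
  obtain ⟨c, h1, h2, h3⟩ := hPF
  refine ⟨fun i j => c i j + (-1)^i * c i (n-j), fun i hi j hj => ?_, fun i hi j hj => ?_,
    fun i hi => ?_, fun t ht => ?_⟩
  · refine (abs_add_le _ _).trans ?_
    rw [abs_mul, abs_pow, abs_neg, abs_one, one_pow, one_mul]
    linarith [h1 i hi j hj, h1 i hi (n-j) (by omega)]
  · obtain ⟨z1, hz1⟩ := h2 i hi j hj
    obtain ⟨z2, hz2⟩ := h2 i hi (n-j) (by omega)
    refine ⟨z1 + (-1)^i * z2, ?_⟩
    push_cast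
    linear_combination hz1 + (-1)^i * hz2
  · rw [sum_add_distrib, hi.neg_one_pow]
    have := sum_range_reflect (fun j => c i j) (n+1)
    simp only [Nat.add_sub_cancel] at this
    simp only [neg_mul, one_mul, sum_neg_distrib]
    rw [this]; ring
  · -- main identity
    have e1 := h3 t (fun j _ => by positivity)
    have e2 := h3 (-n - t) (fun j hj => by
      have : (j:ℝ) ≤ n := by exact_mod_cast hj
      have : -(n:ℝ) - t + j < 0 := by linarith
      exact this.ne)
    rw [RR_symm a r n hodd hn] at e2
    have e3 : ∑ i ∈ range a, ∑ j ∈ range (n+1), c i j / (-(n:ℝ) - t + j)^(i+1) =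
        - ∑ i ∈ range a, ∑ j ∈ range (n+1), (-1)^i * c i (n-j) / (t + j)^(i+1) := by
      rw [← sum_neg_distrib]
      refine sum_congr rfl fun i _ => ?_
      rw [← sum_range_reflect, ← sum_neg_distrib]
      refine sum_congr rfl fun j hj => ?_
      have hj := mem_range.mp hj
      rw [show n + 1 - 1 - j = n - j by omega, Nat.cast_sub (by omega)]
      rw [show -(n:ℝ) - t + (n - j) = (-1) * (t + j) by ring, mul_pow, pow_succ (-1:ℝ)]
      have h6 : ((-1:ℝ)^i) * (-1)^i = 1 := by rw [← mul_pow]; simp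
      have h7 : (t + j)^(i+1) ≠ 0 := by positivity
      have h8 : ((-1:ℝ)^i) ≠ 0 := by positivity
      field_simp
      linear_combination (c i (n-j)) * h6
    rw [e3] at e2
    have e4 : ∑ i ∈ range a, ∑ j ∈ range (n+1), (c i j + (-1)^i * c i (n-j)) / (t + j)^(i+1)
        = ∑ i ∈ range a, ∑ j ∈ range (n+1), c i j / (t + j)^(i+1) +
          ∑ i ∈ range a, ∑ j ∈ range (n+1), (-1)^i * c i (n-j) / (t + j)^(i+1) := by
      simp only [add_div, sum_add_distrib]
    rw [e4, ← e1]
    linarith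

lemma hasDerivAt_pf (a n : ℕ) (e : ℕ → ℕ → ℝ) (g : ℕ → ℕ) (t : ℝ) (ht : 0 < t) :
    HasDerivAt (fun t : ℝ => ∑ i ∈ range a, ∑ j ∈ range (n+1), e i j / (t + j) ^ (g i))
      (∑ i ∈ range a, ∑ j ∈ range (n+1), (-(g i : ℝ) * e i j) / (t + j) ^ (g i + 1)) t := by
  refine HasDerivAt.fun_sum fun i _ => HasDerivAt.fun_sum fun j _ => ?_
  have hj : t + (j:ℝ) ≠ 0 := by positivity
  have h1 : HasDerivAt (fun t : ℝ => (t + j) ^ (g i)) ((g i : ℝ) * (t + j)^(g i - 1) * 1) t :=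
    ((hasDerivAt_id t).add_const (j:ℝ)).pow (g i)
  have h2 := (h1.inv (pow_ne_zero _ hj)).const_mul (e i j)
  simp only [div_eq_mul_inv]
  convert! h2 using 1
  rcases Nat.eq_zero_or_pos (g i) with h | h
  · simp [h]
  · obtain ⟨m, hm⟩ : ∃ m, g i = m + 1 := ⟨g i - 1, by omega⟩
    rw [hm]
    simp only [Nat.add_sub_cancel]
    field_simp
    ring

noncomputable def thetaSeq (lam : ℝ) : ℕ → ℝ
  | 0 => 1
  | 1 => lam
  | (i+2) => if Odd (i+1) ∧ 3 ≤ i+1 then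
      zeta (i+1) + (((i+1:ℕ):ℝ) * (((i+1:ℕ):ℝ) + 1) / 2) * lam * zeta (i+1+2) else 0

lemma harm_int (n s j : ℕ) (hj : j ≤ n) :
    ∃ z : ℤ, (Nat.lcmUpto n : ℝ)^s * ∑ k ∈ range j, 1 / ((k:ℝ)+1)^s = z := by
  have : ∀ k : ℕ, ∃ z : ℤ, k < j → (Nat.lcmUpto n : ℝ)^s * (1 / ((k:ℝ)+1)^s) = z := by
    intro k
    by_cases hk : k < j
    · obtain ⟨z, hz⟩ := lcmUpto_div n ((k:ℤ)+1) (by omega) (by rw [abs_le]; omega)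
      refine ⟨z^s, fun _ => ?_⟩
      push_cast at hz ⊢
      rw [← hz, div_pow]; ring
    · exact ⟨0, fun h => absurd h hk⟩
  choose z hz using this
  refine ⟨∑ k ∈ range j, z k, ?_⟩
  push_cast
  rw [mul_sum]
  exact sum_congr rfl fun k hk => hz k (mem_range.mp hk)

lemma harm_le (n s j : ℕ) (hj : j ≤ n) :
    |∑ k ∈ range j, 1 / ((k:ℝ)+1)^s| ≤ (n:ℝ) + 1 := by
  rw [abs_of_nonneg (by positivity)]
  calc _ ≤ ∑ k ∈ range j, (1:ℝ) := by
        refine sum_le_sum fun k _ => ?_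
        rw [div_le_one (by positivity)]
        exact one_le_pow₀ (by linarith [Nat.cast_nonneg (α := ℝ) k])
    _ = j := by simp
    _ ≤ _ := by
        have : (j:ℝ) ≤ n := by exact_mod_cast hj
        linarith

theorem linform (lam : ℝ) (a r n : ℕ) (ha : 6*r+1 ≤ a) (hodd : Odd a) (hn : Even n) (M : ℝ)
    (hM : 0 ≤ M) (hPF : PF n a M (RR a r n))
    (h0 : Tendsto (fun k : ℕ => (k:ℝ) * RR a r n k) atTop (𝓝 0)) :
    ∃ p : ℕ → ℤ, (∀ i < a + 2, |(p i : ℝ)| ≤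
        (Nat.lcmUpto n : ℝ)^(a+2) * (2 * M * ((a:ℝ)+2)^3 * ((n:ℝ)+1)^2)) ∧
      HasSum (fun k : ℕ => (Nat.lcmUpto n : ℝ)^(a+2) *
        (2 * RR a r n ((k:ℝ)+1) + lam * deriv (deriv (RR a r n)) ((k:ℝ)+1)))
        (∑ i ∈ range (a+2), (p i : ℝ) * thetaSeq lam i) := by
  obtain ⟨e, he1, he2, he3, he4⟩ := RR_sym_pf a r n hodd hn M hPF
  set d : ℝ := (Nat.lcmUpto n : ℝ) with hd
  have hd1 : 1 ≤ d := by rw [hd]; exact_mod_cast Nat.lcmUpto_pos n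
  have hr : ∀ {j}, j ∈ range (n+1) → j ≤ n := fun h => by simpa [Nat.lt_succ_iff] using h
  -- derivative formula
  have hR : ∀ t : ℝ, 0 < t → RR a r n t =
      ∑ i ∈ range a, ∑ j ∈ range (n+1), (e i j / 2) / (t + j)^(i+1) := by
    intro t ht
    have := he4 t ht
    have h2 : ∑ i ∈ range a, ∑ j ∈ range (n+1), (e i j / 2) / (t + j)^(i+1) =
      (∑ i ∈ range a, ∑ j ∈ range (n+1), e i j / (t + j) ^ (i+1)) / 2 := by
      simp only [sum_div]
      exact sum_congr rfl fun i _ => sum_congr rfl fun j _ => by ring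
    rw [h2, ← this]; ring
  have hR1 : ∀ t : ℝ, 0 < t → deriv (RR a r n) t =
      ∑ i ∈ range a, ∑ j ∈ range (n+1), (-((i+1:ℕ):ℝ) * (e i j / 2)) / (t + j)^(i+1+1) := by
    intro t ht
    refine ((hasDerivAt_pf a n (fun i j => e i j / 2) (fun i => i+1) t ht).congr_of_eventuallyEq ?_).deriv
    filter_upwards [lt_mem_nhds ht] with x hx using hR x hx
  have hR2 : ∀ t : ℝ, 0 < t → deriv (deriv (RR a r n)) t =
      ∑ i ∈ range a, ∑ j ∈ range (n+1),
        ((((i:ℝ)+1) * ((i:ℝ)+2) / 2) * e i j) / (t + j)^(i+3) := by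
    intro t ht
    have := ((hasDerivAt_pf a n (fun i j => -((i+1:ℕ):ℝ) * (e i j / 2)) (fun i => i+1+1) t ht).congr_of_eventuallyEq
      (by filter_upwards [lt_mem_nhds ht] with x hx using hR1 x hx)).deriv
    rw [this]
    refine sum_congr rfl fun i _ => sum_congr rfl fun j _ => ?_
    push_cast
    rw [show i + 1 + 1 + 1 = i + 3 by ring]
    congr 1; ring
  -- rho_0 = 0
  have ha1 : 0 < a := by omega
  have hrho0 : ∑ j ∈ range (n+1), e 0 j = 0 := by
    have t1 : Tendsto (fun k : ℕ => ∑ i ∈ range a, ∑ j ∈ range (n+1),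
        e i j * ((k:ℝ) / ((k:ℝ) + j) ^ (i+1))) atTop
        (𝓝 (∑ i ∈ range a, ∑ j ∈ range (n+1), e i j * (if i = 0 then 1 else 0))) := by
      refine tendsto_finsetSum _ fun i _ => tendsto_finsetSum _ fun j _ => Tendsto.const_mul _ ?_
      have q1 : Tendsto (fun k : ℕ => (k:ℝ) / ((k:ℝ) + j)) atTop (𝓝 1) := by
        exact tendsto_natCast_div_add_atTop (j:ℝ)
      have q2 : Tendsto (fun k : ℕ => 1 / ((k:ℝ) + j)) atTop (𝓝 0) := by
        simp only [one_div]
        exact (tendsto_atTop_add_const_right _ _ tendsto_natCast_atTop_atTop).inv_tendsto_atTop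
      have q3 := q1.mul (q2.pow i)
      have q4 : (1:ℝ) * 0^i = if i = 0 then 1 else 0 := by
        by_cases h : i = 0 <;> simp [h]
      rw [q4] at q3
      refine q3.congr fun k => ?_
      rw [one_div, pow_succ]
      simp only [div_eq_mul_inv, mul_inv, inv_pow]; ring
    have t2 : Tendsto (fun k : ℕ => ∑ i ∈ range a, ∑ j ∈ range (n+1),
        e i j * ((k:ℝ) / ((k:ℝ) + j) ^ (i+1))) atTop (𝓝 0) := by
      have := h0.const_mul 2
      rw [mul_zero] at this
      refine this.congr' ?_
      filter_upwards [eventually_gt_atTop 0] with k hk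
      have hk' : (0:ℝ) < k := by exact_mod_cast hk
      rw [show 2 * ((k:ℝ) * RR a r n k) = k * (2 * RR a r n k) by ring, he4 k hk', mul_sum]
      refine sum_congr rfl fun i _ => ?_
      rw [mul_sum]
      exact sum_congr rfl fun j _ => by ring
    have t3 := tendsto_nhds_unique t1 t2
    rw [sum_eq_single 0] at t3
    · simpa using t3
    · intro i _ hi; simp [hi]
    · intro h; exact absurd (mem_range.mpr ha1) h
  -- sums
  have hs1 : HasSum (fun k : ℕ => 2 * RR a r n ((k:ℝ)+1))
      (∑ i ∈ range a, ((∑ j ∈ range (n+1), e i j) * zeta (i+1)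
        - ∑ j ∈ range (n+1), e i j * ∑ k ∈ range j, 1 / ((k:ℝ)+1)^(i+1))) := by
    have : HasSum (fun k : ℕ => ∑ i ∈ range a, ∑ j ∈ range (n+1), e i j / ((k:ℝ) + 1 + j)^(i+1))
      (∑ i ∈ range a, ((∑ j ∈ range (n+1), e i j) * zeta (i+1)
        - ∑ j ∈ range (n+1), e i j * ∑ k ∈ range j, 1 / ((k:ℝ)+1)^(i+1))) := by
      refine hasSum_sum fun i _ => zform n (i+1) (e i) (by omega) ?_
      rcases Nat.eq_zero_or_pos i with h | h
      · right; rw [h]; exact hrho0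
      · left; omega
    refine this.congr_fun ?_
    intro k
    exact he4 _ (by positivity)
  have hs2 : HasSum (fun k : ℕ => deriv (deriv (RR a r n)) ((k:ℝ)+1))
      (∑ i ∈ range a, ((∑ j ∈ range (n+1), (((i:ℝ)+1) * ((i:ℝ)+2) / 2) * e i j) * zeta (i+3)
        - ∑ j ∈ range (n+1), ((((i:ℝ)+1) * ((i:ℝ)+2) / 2) * e i j) * ∑ k ∈ range j, 1 / ((k:ℝ)+1)^(i+3))) := by
    have : HasSum (fun k : ℕ => ∑ i ∈ range a, ∑ j ∈ range (n+1),
        ((((i:ℝ)+1) * ((i:ℝ)+2) / 2) * e i j) / ((k:ℝ) + 1 + j)^(i+3)) _ :=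
      hasSum_sum fun i _ => zform n (i+3) (fun j => (((i:ℝ)+1) * ((i:ℝ)+2) / 2) * e i j) (by omega) (Or.inl (by omega))
    refine this.congr_fun ?_
    intro k
    exact hR2 _ (by positivity)
  -- integers
  have iz1 : ∀ i : ℕ, ∃ z : ℤ, i < a → d^(a+2) * (∑ j ∈ range (n+1), e i j) = z := by
    intro i
    by_cases hi : i < a
    · have : ∀ j : ℕ, ∃ z : ℤ, j ≤ n → d^(a+2) * e i j = z := by
        intro j
        by_cases hj : j ≤ n
        · obtain ⟨z, hz⟩ := he2 i hi j hj
          refine ⟨z * (Nat.lcmUpto n : ℤ)^(i+3), fun _ => ?_⟩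
          push_cast
          rw [← hd]
          linear_combination d^2 * hz
        · exact ⟨0, fun h => absurd h hj⟩
      choose z hz using this
      refine ⟨∑ j ∈ range (n+1), z j, fun _ => ?_⟩
      push_cast
      rw [mul_sum]
      exact sum_congr rfl fun j hj => hz j (hr hj)
    · exact ⟨0, fun h => absurd h hi⟩
  choose P hP using iz1
  have iz2 : ∀ q : ℕ, q ≤ 2 → ∀ x : ℕ → ℕ, ∃ z : ℤ, d^(a+2) * (∑ i ∈ range a, ∑ j ∈ range (n+1), (x i * e i j) *
      ∑ k ∈ range j, 1 / ((k:ℝ)+1)^(i+1+q)) = z := by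
    intro q hq x
    have : ∀ i j : ℕ, ∃ z : ℤ, i < a → j ≤ n → d^(a+2) * ((x i * e i j) *
      ∑ k ∈ range j, 1 / ((k:ℝ)+1)^(i+1+q)) = z := by
      intro i j
      by_cases h : i < a ∧ j ≤ n
      · obtain ⟨z, hz⟩ := he2 i h.1 j h.2
        obtain ⟨y, hy⟩ := harm_int n (i+1+q) j h.2
        rw [← hd] at hy
        refine ⟨x i * z * y * (Nat.lcmUpto n : ℤ)^(2-q), fun _ _ => ?_⟩
        push_cast
        rw [← hd, ← hy]
        have hpw : d^2 = d^(2-q) * d^q := by rw [← pow_add]; congr 1; omega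
        rw [pow_add d (i+1) q, pow_add d a 2, hpw]
        generalize (∑ k ∈ range j, 1 / ((k:ℝ)+1)^(i+1+q)) = H
        linear_combination (d^(2-q) * d^q * x i * H) * hz
      · exact ⟨0, fun h1 h2 => absurd ⟨h1, h2⟩ h⟩
    choose z hz using this
    refine ⟨∑ i ∈ range a, ∑ j ∈ range (n+1), z i j, ?_⟩
    push_cast
    rw [mul_sum]
    refine sum_congr rfl fun i hi => ?_
    rw [mul_sum]
    exact sum_congr rfl fun j hj => hz i j (mem_range.mp hi) (hr hj)
  have ib : ∀ (q : ℕ) (x : ℕ → ℕ), (∀ i < a, x i ≤ (a+2)^2) →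
      |d^(a+2) * (∑ i ∈ range a, ∑ j ∈ range (n+1), (x i * e i j) *
      ∑ k ∈ range j, 1 / ((k:ℝ)+1)^(i+1+q))| ≤ d^(a+2) * (2 * M * ((a:ℝ)+2)^3 * ((n:ℝ)+1)^2) := by
    intro q x hx
    rw [abs_mul, abs_of_nonneg (by positivity : (0:ℝ) ≤ d^(a+2))]
    refine mul_le_mul_of_nonneg_left ?_ (by positivity)
    calc _ ≤ ∑ i ∈ range a, ∑ j ∈ range (n+1), (((a:ℝ)+2)^2 * (2*M)) * ((n:ℝ)+1) := by
          refine (abs_sum_le_sum_abs _ _).trans (sum_le_sum fun i hi => ?_)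
          refine (abs_sum_le_sum_abs _ _).trans (sum_le_sum fun j hj => ?_)
          rw [abs_mul, abs_mul, Nat.abs_cast]
          have h1 : (x i : ℝ) ≤ ((a:ℝ)+2)^2 := by exact_mod_cast hx i (mem_range.mp hi)
          have h2 := he1 i (mem_range.mp hi) j (hr hj)
          have h3 := harm_le n (i+1+q) j (hr hj)
          gcongr
      _ = (a:ℝ) * (2 * M * ((a:ℝ)+2)^2 * ((n:ℝ)+1)^2) := by
          simp only [sum_const, card_range, nsmul_eq_mul]
          push_cast; ring
      _ ≤ ((a:ℝ)+2) * (2 * M * ((a:ℝ)+2)^2 * ((n:ℝ)+1)^2) := by gcongr; linarith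
      _ = _ := by ring
  obtain ⟨A0, hA0⟩ := iz2 0 (by omega) (fun _ => 1)
  obtain ⟨A1, hA1⟩ := iz2 2 le_rfl (fun i => (i+2).choose 2)
  have bA0 := ib 0 (fun _ => 1) (fun i _ => Nat.one_le_pow _ _ (by omega))
  have bA1 := ib 2 (fun i => (i+2).choose 2) (fun i hi => by
    refine (Nat.choose_le_pow _ _).trans ?_
    exact Nat.pow_le_pow_left (by omega) 2)
  rw [hA0] at bA0
  rw [hA1] at bA1
  have hch : ∀ i : ℕ, (((i+2).choose 2 : ℕ):ℝ) = ((i:ℝ)+1) * ((i:ℝ)+2) / 2 := by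
    intro i
    rw [Nat.cast_choose_two]; push_cast; ring
  simp only [Nat.cast_one, one_mul, add_zero] at hA0
  simp only [hch] at hA1
  refine ⟨fun i => match i with | 0 => -A0 | 1 => -A1 | (i+2) => P i, fun i hi => ?_, ?_⟩
  · match i with
    | 0 => simpa using bA0
    | 1 => simpa using bA1
    | (i+2) =>
      have hi' : i < a := by omega
      show |(P i : ℝ)| ≤ _
      rw [← hP i hi', abs_mul, abs_of_nonneg (by positivity : (0:ℝ) ≤ d^(a+2))]
      refine mul_le_mul_of_nonneg_left ?_ (by positivity)
      calc _ ≤ ∑ j ∈ range (n+1), 2 * M :=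
            (abs_sum_le_sum_abs _ _).trans (sum_le_sum fun j hj => he1 i hi' j (hr hj))
        _ = 2 * M * 1 * ((n:ℝ)+1) := by
            simp only [sum_const, card_range, nsmul_eq_mul]; push_cast; ring
        _ ≤ 2 * M * ((a:ℝ)+2)^3 * ((n:ℝ)+1)^2 := by
            have h1 : (1:ℝ) ≤ ((a:ℝ)+2)^3 := one_le_pow₀ (by linarith [Nat.cast_nonneg (α := ℝ) a])
            have h2 : ((n:ℝ)+1) ≤ ((n:ℝ)+1)^2 := by nlinarith [Nat.cast_nonneg (α := ℝ) n]
            gcongr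
  · have hs := (hs1.add (hs2.mul_left lam)).mul_left (d^(a+2))
    convert! hs using 1
    rw [sum_range_succ', sum_range_succ']
    simp only [thetaSeq]
    push_cast
    rw [sum_sub_distrib, sum_sub_distrib]
    have hA1' : d^(a+2) * (∑ i ∈ range a, ∑ j ∈ range (n+1), ((((i:ℝ)+1) * ((i:ℝ)+2) / 2) * e i j) *
      ∑ k ∈ range j, 1 / ((k:ℝ)+1)^(i+3)) = A1 := hA1
    have main : ∑ i ∈ range a, (P i : ℝ) * (if Odd (i+1) ∧ 2 ≤ i then
      zeta (i+1) + (((i:ℝ)+1) * ((i:ℝ)+1 + 1) / 2) * lam * zeta (i+1+2) else 0) =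
      d^(a+2) * (∑ i ∈ range a, (∑ j ∈ range (n+1), e i j) * zeta (i+1)) +
      d^(a+2) * (lam * ∑ i ∈ range a, (∑ j ∈ range (n+1), (((i:ℝ)+1) * ((i:ℝ)+2) / 2) * e i j) * zeta (i+3)) := by
      rw [mul_sum, mul_sum, mul_sum, ← sum_add_distrib]
      refine sum_congr rfl fun i hi => ?_
      have hi' := mem_range.mp hi
      rw [← hP i hi', ← mul_sum]
      by_cases hc : Odd (i+1) ∧ 2 ≤ i
      · rw [if_pos hc]
        ring
      · rw [if_neg hc]
        have : ∑ j ∈ range (n+1), e i j = 0 := by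
          rcases Nat.even_or_odd i with h | h
          · have : i = 0 := by
              by_contra hne
              apply hc
              refine ⟨h.add_one, ?_⟩
              obtain ⟨m, hm⟩ := h
              omega
            rw [this]; exact hrho0
          · exact he3 i h
        rw [this]; ring
    rw [main, ← hA0, ← hA1']
    ring

end LinForms

section Analytic
open Finset Filter Topology

lemma num_shift (r n : ℕ) (t : ℝ) : num r n (t+1) * (t - r*n) * (t + n + 1)
    = num r n t * t * (t + n + 1 + r*n) := by
  have h1 : (∏ j ∈ range (r*n), (t + 1 - 1 - j)) * (t - r*n) = t * ∏ j ∈ range (r*n), (t - 1 - j) := by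
    have a1 := prod_range_succ (fun j : ℕ => t - (j:ℝ)) (r*n)
    have a2 := prod_range_succ' (fun j : ℕ => t - (j:ℝ)) (r*n)
    have e1 : ∏ j ∈ range (r*n), (t + 1 - 1 - j) = ∏ j ∈ range (r*n), (t - (j:ℝ)) :=
      prod_congr rfl fun j _ => by ring
    have e2 : ∏ j ∈ range (r*n), (t - 1 - j) = ∏ j ∈ range (r*n), (t - ((j+1:ℕ):ℝ)) :=
      prod_congr rfl fun j _ => by push_cast; ring
    rw [e1, e2]
    rw [a1] at a2
    push_cast at a2 ⊢
    rw [a2]; ring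
  have h2 : (∏ j ∈ range (r*n), (t + 1 + n + 1 + j)) * (t + n + 1) =
      (t + n + 1 + r*n) * ∏ j ∈ range (r*n), (t + n + 1 + j) := by
    have a1 := prod_range_succ (fun j : ℕ => t + n + 1 + (j:ℝ)) (r*n)
    have a2 := prod_range_succ' (fun j : ℕ => t + n + 1 + (j:ℝ)) (r*n)
    have e1 : ∏ j ∈ range (r*n), (t + 1 + n + 1 + j) = ∏ j ∈ range (r*n), (t + n + 1 + ((j+1:ℕ):ℝ)) :=
      prod_congr rfl fun j _ => by push_cast; ring
    rw [e1]
    rw [a1] at a2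
    push_cast at a2 ⊢
    rw [add_zero] at a2
    rw [← a2]; ring
  rw [num, num]
  generalize (∏ j ∈ range (r*n), (t + 1 - 1 - j)) = A at *
  generalize (∏ j ∈ range (r*n), (t - 1 - j)) = B at *
  generalize (∏ j ∈ range (r*n), (t + 1 + n + 1 + (j:ℝ))) = C at *
  generalize (∏ j ∈ range (r*n), (t + n + 1 + (j:ℝ))) = D at *
  calc _ = (A * (t - r*n)) * (C * (t + n + 1)) := by ring
    _ = _ := by rw [h1, h2]; ring

lemma den_shift (n : ℕ) (t : ℝ) : den n (t+1) * t = den n t * (t + n + 1) := by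
  have a1 := prod_range_succ (fun j : ℕ => t + (j:ℝ)) (n+1)
  have a2 := prod_range_succ' (fun j : ℕ => t + (j:ℝ)) (n+1)
  have e1 : den n (t+1) = ∏ j ∈ range (n+1), (t + ((j+1:ℕ):ℝ)) :=
    prod_congr rfl fun j _ => by push_cast; ring
  rw [e1, den]
  rw [a1] at a2
  push_cast at a2 ⊢
  rw [add_zero] at a2
  rw [← a2]; ring

lemma den_pos (n : ℕ) {t : ℝ} (ht : 0 < t) : 0 < den n t :=
  prod_pos fun j _ => by positivity

noncomputable def sg (a r n : ℕ) (t : ℝ) : ℝ :=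
  ((t - r*n)/t)^3 * ((t + n + 1)/(t + n + 1 + r*n))^3 * ((t + n + 1)/t)^a

lemma RR_ratio (a r n : ℕ) {t : ℝ} (ht : 0 < t) : RR a r n t = sg a r n t * RR a r n (t+1) := by
  have h1 := num_shift r n t
  have h2 := den_shift n t
  have hn : (0:ℝ) ≤ n := Nat.cast_nonneg n
  have hr : (0:ℝ) ≤ r := Nat.cast_nonneg r
  have p1 : 0 < t + n + 1 := by positivity
  have p2 : 0 < t + n + 1 + r*n := by positivity
  have d1 := den_pos n ht
  have d2 := den_pos n (by linarith : 0 < t + 1)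
  have e1 : num r n t = num r n (t+1) * ((t - r*n)/t) * ((t + n + 1)/(t + n + 1 + r*n)) := by
    field_simp
    linarith
  have e2 : den n (t+1) = den n t * ((t + n + 1)/t) := by
    field_simp
    linarith
  rw [RR, RR, sg, e1, e2]
  have p3 : 0 < (t + n + 1)/t := by positivity
  generalize (t + n + 1)/t = w at *
  generalize (t - r*n)/t = u at *
  generalize (t + n + 1)/(t + n + 1 + r*n) = v at *
  rw [mul_pow (den n t) w a]
  field_simp

lemma num_pos (r n : ℕ) {t : ℝ} (ht : (r:ℝ)*n < t) : 0 < num r n t := by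
  refine mul_pos (prod_pos fun j hj => ?_) (prod_pos fun j _ => ?_)
  · have : (j:ℝ) + 1 ≤ r * n := by exact_mod_cast mem_range.mp hj
    linarith
  · have : (0:ℝ) ≤ (r:ℝ)*n := by positivity
    have : 0 < t := by linarith
    positivity

lemma RR_pos (a r n : ℕ) {t : ℝ} (ht : (r:ℝ)*n < t) : 0 < RR a r n t := by
  have h0 : (0:ℝ) ≤ (r:ℝ)*n := by positivity
  have := num_pos r n ht
  have := den_pos n (h0.trans_lt ht)
  have := Nat.factorial_pos n
  rw [RR]; positivity

lemma RR_zero (a r n k : ℕ) (h1 : 1 ≤ k) (h2 : k ≤ r*n) : RR a r n k = 0 := by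
  have : num r n k = 0 := by
    rw [num]
    have : ∏ j ∈ range (r*n), ((k:ℝ) - 1 - j) = 0 := by
      refine prod_eq_zero (i := k-1) (mem_range.mpr (by omega)) ?_
      rw [Nat.cast_sub h1]; push_cast; ring
    rw [this, zero_mul]
  rw [RR, this]; simp

lemma RR_upper (a r n : ℕ) (hr : 1 ≤ r) (ha : 6*r ≤ a) {t : ℝ} (ht : (r:ℝ)*n + 1 ≤ t) :
    RR a r n t * (r:ℝ)^(n*(a-6*r)) * t^a ≤ 27^(r*n) := by
  have hr1 : (1:ℝ) ≤ r := by exact_mod_cast hr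
  have hn : (0:ℝ) ≤ n := Nat.cast_nonneg n
  have hrn : (n:ℝ) ≤ r*n := by nlinarith
  have t0 : 0 < t := by linarith
  have b1 : (n.factorial : ℝ) ≤ (n:ℝ)^n := by exact_mod_cast Nat.factorial_le_pow n
  have b2 : num r n t ≤ t^(r*n) * (3*t)^(r*n) := by
    rw [num]
    have q1 : ∏ j ∈ range (r*n), (t - 1 - j) ≤ t^(r*n) := by
      have := prod_le_prod (s := range (r*n)) (f := fun j : ℕ => t - 1 - (j:ℝ)) (g := fun _ => t)
        (fun j hj => by
          have : (j:ℝ) + 1 ≤ r * n := by exact_mod_cast mem_range.mp hj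
          linarith) (fun j _ => by linarith [Nat.cast_nonneg (α := ℝ) j])
      simpa using this
    have q2 : ∏ j ∈ range (r*n), (t + n + 1 + j) ≤ (3*t)^(r*n) := by
      have := prod_le_prod (s := range (r*n)) (f := fun j : ℕ => t + n + 1 + (j:ℝ)) (g := fun _ => 3*t)
        (fun j hj => by positivity) (fun j hj => by
          have : (j:ℝ) + 1 ≤ r * n := by exact_mod_cast mem_range.mp hj
          linarith)
      simpa using this
    have q3 : 0 ≤ ∏ j ∈ range (r*n), (t + n + 1 + (j:ℝ)) := prod_nonneg fun j _ => by positivity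
    exact mul_le_mul q1 q2 q3 (by positivity)
  have b3 : t^(n+1) ≤ den n t := by
    have := prod_le_prod (s := range (n+1)) (f := fun _ : ℕ => t) (g := fun j : ℕ => t + (j:ℝ))
        (fun j hj => t0.le) (fun j _ => by linarith [Nat.cast_nonneg (α := ℝ) j])
    simpa [den] using this
  have n0 := num_pos r n (by linarith : (r:ℝ)*n < t)
  have hden := den_pos n t0
  obtain ⟨m, hm⟩ : ∃ m, a - 6*r = m := ⟨_, rfl⟩
  rw [RR, hm]
  have hrm : (0:ℝ) ≤ (r:ℝ)^(n*m) := by positivity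
  calc _ ≤ ((n:ℝ)^n)^m * (t^(r*n) * (3*t)^(r*n))^3 / (t^(n+1))^a * (r:ℝ)^(n*m) * t^a := by
        gcongr
    _ = 27^(r*n) * (((r:ℝ)*n)^(n*m) * t^(r*n*6) * t^a / t^((n+1)*a)) := by
        rw [mul_pow (3:ℝ), mul_pow (r:ℝ), ← pow_mul, ← pow_mul, show (27:ℝ) = 3^3 by norm_num,
          ← pow_mul, mul_comm 3 (r*n), pow_mul _ _ 3]
        ring
    _ ≤ 27^(r*n) * (t^(n*m) * t^(r*n*6) * t^a / t^((n+1)*a)) := by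
        have : ((r:ℝ)*n) ≤ t := by linarith
        gcongr
    _ = 27^(r*n) := by
        rw [← pow_add, ← pow_add, div_eq_one_iff_eq (by positivity) |>.mpr, mul_one]
        congr 1
        have : a = m + 6*r := by omega
        rw [this]; ring

/-- the shifted sequence -/
noncomputable def gs (a r n m : ℕ) : ℝ := RR a r n ((r:ℝ)*n + 1 + m)
noncomputable def ss (a r n m : ℕ) : ℝ := sg a r n ((r:ℝ)*n + m)

lemma gs_pos (a r n m : ℕ) : 0 < gs a r n m :=
  RR_pos a r n (by linarith [Nat.cast_nonneg (α := ℝ) m])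

lemma gs_ratio (a r n m : ℕ) : gs a r n m = ss a r n (m+1) * gs a r n (m+1) := by
  rw [gs, RR_ratio a r n (by positivity), ss, gs]
  push_cast
  rw [show (r:ℝ)*n + (m + 1) = r*n + 1 + m by ring, show (r:ℝ)*n + 1 + (m+1) = r*n + 1 + m + 1 by ring]

lemma ss_zero (a r n : ℕ) : ss a r n 0 = 0 := by
  rw [ss, sg]; simp

lemma gs_upper (a r n m : ℕ) (hr : 1 ≤ r) (ha : 6*r+1 ≤ a) :
    gs a r n m ≤ 27^(r*n) / (r:ℝ)^(n*(a-6*r)) * (1 / ((m:ℝ)+1)^a) := by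
  have h := RR_upper a r n hr (by omega) (t := (r:ℝ)*n + 1 + m) (by linarith [Nat.cast_nonneg (α := ℝ) m])
  have hr1 : (0:ℝ) < r := by exact_mod_cast hr
  rw [div_mul_div_comm, mul_one, le_div_iff₀ (by positivity), ← mul_assoc]
  refine le_trans ?_ h
  rw [gs]
  have := (RR_pos a r n (t := (r:ℝ)*n+1+m) (by linarith [Nat.cast_nonneg (α := ℝ) m])).le
  have : (0:ℝ) ≤ (r:ℝ)*n := by positivity
  have hle : (m:ℝ)+1 ≤ r*n+1+m := by linarith
  refine mul_le_mul_of_nonneg_left (pow_le_pow_left₀ (by positivity) hle a) (by positivity)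

lemma gs_summable_mul (a r n : ℕ) (hr : 1 ≤ r) (ha : 6*r+1 ≤ a) (c : ℝ) :
    Summable (fun m : ℕ => gs a r n m * (c + m)) := by
  have hs : Summable (fun m : ℕ => 27^(r*n) / (r:ℝ)^(n*(a-6*r)) * (|c| + 1) * (1 / ((m:ℝ)+1)^2)) := by
    refine Summable.mul_left _ ?_
    have h := (summable_nat_add_iff 1).mpr (Real.summable_one_div_nat_pow.mpr (by omega : 1 < 2))
    simpa using h
  refine Summable.of_norm_bounded hs fun m => ?_
  rw [Real.norm_eq_abs, abs_mul, abs_of_pos (gs_pos a r n m)]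
  have hm : (0:ℝ) ≤ m := Nat.cast_nonneg m
  have h1 : |c + m| ≤ (|c| + 1) * (m + 1) := by
    refine (abs_add_le _ _).trans ?_
    rw [Nat.abs_cast]
    nlinarith [abs_nonneg c]
  have h2 := gs_upper a r n m hr ha
  have h3 : (1:ℝ) / ((m:ℝ)+1)^a * (m+1) ≤ 1 / ((m:ℝ)+1)^2 := by
    rw [div_mul_eq_mul_div, one_mul, div_le_div_iff₀ (by positivity) (by positivity), one_mul, ← pow_succ']
    exact pow_le_pow_right₀ (by linarith) (by omega)
  calc _ ≤ (27^(r*n) / (r:ℝ)^(n*(a-6*r)) * (1 / ((m:ℝ)+1)^a)) * ((|c| + 1) * (m + 1)) := by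
        have := (gs_pos a r n m).le
        gcongr
    _ = 27^(r*n) / (r:ℝ)^(n*(a-6*r)) * (|c| + 1) * (1 / ((m:ℝ)+1)^a * (m+1)) := by ring
    _ ≤ _ := by gcongr

lemma gs_summable (a r n : ℕ) (hr : 1 ≤ r) (ha : 6*r+1 ≤ a) : Summable (gs a r n) := by
  have h1 := gs_summable_mul a r n hr ha 1
  have h0 := gs_summable_mul a r n hr ha 0
  refine (h1.sub h0).congr fun m => by ring

lemma gs_sum_upper (a r n : ℕ) (hr : 1 ≤ r) (ha : 6*r+1 ≤ a) :
    ∑' m, gs a r n m ≤ 2 * (27^(r*n) / (r:ℝ)^(n*(a-6*r))) := by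
  have h := (summable_nat_add_iff 1).mpr (Real.summable_one_div_nat_pow.mpr (by omega : 1 < 2))
  have hs : HasSum (fun m : ℕ => 1 / ((m:ℝ)+1)^2) (Real.pi^2/6) := by
    have := (hasSum_nat_add_iff' 1).mpr hasSum_zeta_two
    simpa using this
  have hpi : Real.pi^2/6 ≤ 2 := by
    have := Real.pi_lt_d2
    have := Real.pi_pos
    nlinarith
  have h2 := (hs.mul_left (27^(r*n) / (r:ℝ)^(n*(a-6*r))))
  have h3 := hasSum_le (fun m => ?_) (gs_summable a r n hr ha).hasSum h2
  · refine h3.trans ?_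
    rw [mul_comm 2]
    gcongr
  · refine (gs_upper a r n m hr ha).trans ?_
    have h3 : (1:ℝ) / ((m:ℝ)+1)^a ≤ 1 / ((m:ℝ)+1)^2 := by
      have hm : (0:ℝ) ≤ m := Nat.cast_nonneg m
      exact one_div_le_one_div_of_le (by positivity) (pow_le_pow_right₀ (by linarith) (by omega))
    exact mul_le_mul_of_nonneg_left h3 (by positivity)

end Analytic

section Concentration
open Finset Filter Topology

lemma conc (g s : ℕ → ℝ) (hg : ∀ m, 0 < g m) (hsum : Summable g)
    (hrat : ∀ m, g m = s (m+1) * g (m+1)) (hs0 : s 0 = 0) (B ε : ℝ)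
    (hs : ∀ m, 0 ≤ s m) (hB : ∀ m, s m ≤ B) (hε : ∀ m, s (m+1) - s m ≤ ε) :
    Summable (fun m => g m * (1 - s m)^2) ∧ ∑' m, g m * (1 - s m)^2 ≤ ε * ∑' m, g m := by
  have hb : Summable (fun m => g m * B) := hsum.mul_right B
  have s1 : Summable (fun m => g m * s m) :=
    Summable.of_nonneg_of_le (fun m => mul_nonneg (hg m).le (hs m))
      (fun m => mul_le_mul_of_nonneg_left (hB m) (hg m).le) hb
  have s2 : Summable (fun m => g m * s (m+1)) :=
    Summable.of_nonneg_of_le (fun m => mul_nonneg (hg m).le (hs _))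
      (fun m => mul_le_mul_of_nonneg_left (hB _) (hg m).le) hb
  have H := hsum.hasSum
  have H1 : HasSum (fun m => g m * s m) (∑' m, g m) := by
    rw [← hasSum_nat_add_iff' 1]
    simp only [range_one, sum_singleton, hs0, mul_zero, sub_zero]
    refine H.congr_fun fun m => ?_
    rw [hrat m, mul_comm]
  have H2 : HasSum (fun m => g m * s m ^ 2) (∑' m, g m * s (m+1)) := by
    rw [← hasSum_nat_add_iff' 1]
    simp only [range_one, sum_singleton, hs0, mul_zero, sub_zero, ne_eq, OfNat.ofNat_ne_zero, not_false_eq_true, zero_pow]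
    refine s2.hasSum.congr_fun fun m => ?_
    rw [hrat m]; ring
  have H3 : HasSum (fun m => g m * (1 - s m)^2)
      (∑' m, g m - 2 * ∑' m, g m + ∑' m, g m * s (m+1)) := by
    refine ((H.sub (H1.mul_left 2)).add H2).congr_fun fun m => ?_
    ring
  refine ⟨H3.summable, ?_⟩
  rw [H3.tsum_eq]
  have H4 := hasSum_le (fun m => ?_) (s2.hasSum.sub H1) (H.mul_left ε)
  · linarith
  · have := mul_le_mul_of_nonneg_left (hε m) (hg m).le
    linarith

lemma cube_aux (u u' c : ℝ) (u0 : 0 ≤ u) (h : u ≤ u') (u1 : u' ≤ 1) (hc : u' - u ≤ c) :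
    u'^3 - u^3 ≤ 3 * c := by
  have e : u'^3 - u^3 = (u'-u)*(u'^2+u'*u+u^2) := by ring
  have h1 : u'^2 ≤ 1 := pow_le_one₀ (by linarith) u1
  have h2 : u^2 ≤ 1 := pow_le_one₀ u0 (by linarith)
  have h3 : u' * u ≤ 1 := mul_le_one₀ u1 u0 (by linarith)
  have h0 : 0 ≤ u'^2+u'*u+u^2 := by
    have : 0 ≤ u' := by linarith
    positivity
  rw [e]
  calc _ ≤ c * 3 := mul_le_mul hc (by linarith) h0 (by linarith)
    _ = _ := by ring

lemma incr_aux (u v w u' v' w' c : ℝ) (a : ℕ) (u0 : 0 ≤ u) (v0 : 0 ≤ v) (w0' : 0 ≤ w')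
    (u1 : u' ≤ 1) (v1 : v' ≤ 1) (w1 : w' ≤ 3) (hu : u ≤ u') (hv : v ≤ v') 
    (du : u' - u ≤ c) (dv : v' - v ≤ c) (dw : w' ≤ w) :
    u'^3*v'^3*w'^a - u^3*v^3*w^a ≤ 6 * c * 3^a := by
  have a1 := cube_aux u u' c u0 hu u1 du
  have a2 := cube_aux v v' c v0 hv v1 dv
  have b1 : u^3 ≤ u'^3 := pow_le_pow_left₀ u0 hu 3
  have b2 : v^3 ≤ v'^3 := pow_le_pow_left₀ v0 hv 3
  have b3 : v'^3 ≤ 1 := pow_le_one₀ (by linarith) v1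
  have b4 : u'^3 ≤ 1 := pow_le_one₀ (by linarith) u1
  have c1 : 0 ≤ v^3 := by positivity
  have c2 : 0 ≤ u^3 := by positivity
  have f2 : w'^a ≤ w^a := pow_le_pow_left₀ w0' dw a
  have f3 : w'^a ≤ 3^a := pow_le_pow_left₀ w0' w1 a
  have f4 : 0 ≤ w'^a := by positivity
  generalize u^3 = U at *
  generalize v^3 = V at *
  generalize u'^3 = U' at *
  generalize v'^3 = V' at *
  generalize w^a = W at *
  generalize w'^a = W' at *
  have g1 : U' * V' - U * V = (U' - U) * V' + U * (V' - V) := by ring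
  have g2 : (U' - U) * V' ≤ (U' - U) * 1 := mul_le_mul_of_nonneg_left b3 (by linarith)
  have g3 : U * (V' - V) ≤ 1 * (V' - V) := mul_le_mul_of_nonneg_right (by linarith) (by linarith)
  have f1 : U'*V' - U*V ≤ 6 * c := by linarith
  calc _ ≤ U'*V'*W' - U*V*W' := by gcongr
    _ = (U'*V' - U*V)*W' := by ring
    _ ≤ (6*c) * 3^a := mul_le_mul f1 f3 f4 (by linarith)

lemma ss_facts (a r n m : ℕ) (hr : 1 ≤ r) (hn : 1 ≤ n) :
    0 ≤ ss a r n m ∧ ss a r n m ≤ 3^a ∧ ss a r n m ≤ 3^a * (m / n) ∧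
    ss a r n (m+1) - ss a r n m ≤ 6 * 3^a / n := by
  have hr1 : (1:ℝ) ≤ r := by exact_mod_cast hr
  have hn1 : (1:ℝ) ≤ n := by exact_mod_cast hn
  have hm : (0:ℝ) ≤ m := Nat.cast_nonneg m
  have hrn : (n:ℝ) ≤ r*n := by nlinarith
  set q : ℝ := (r:ℝ)*n with hq
  have key : ∀ k : ℝ, q ≤ k → 0 ≤ (k - q)/k ∧ (k-q)/k ≤ 1 ∧ 0 ≤ (k + n + 1)/(k + n + 1 + q) ∧
      (k + n + 1)/(k + n + 1 + q) ≤ 1 ∧ 0 ≤ (k + n + 1)/k ∧ (k + n + 1)/k ≤ 3 := by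
    intro k hk
    have k0 : 0 < k := by linarith
    refine ⟨div_nonneg (by linarith) k0.le, ?_, by positivity, ?_, by positivity, ?_⟩
    · rw [div_le_one k0]; linarith
    · rw [div_le_one (by linarith)]; linarith
    · rw [div_le_iff₀ k0]; linarith
  have e1 : ss a r n m = (((q+m) - q)/(q+m))^3 * (((q+m) + n + 1)/((q+m) + n + 1 + q))^3 * (((q+m) + n + 1)/(q+m))^a := by
    rw [ss, sg]
  have e2 : ss a r n (m+1) = (((q+m+1) - q)/(q+m+1))^3 * (((q+m+1) + n + 1)/((q+m+1) + n + 1 + q))^3 * (((q+m+1) + n + 1)/(q+m+1))^a := by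
    rw [ss, sg, ← hq]; push_cast; rw [← add_assoc]
  obtain ⟨u0, u1, v0, v1, w0, w1⟩ := key (q+m) (by linarith)
  obtain ⟨u0', u1', v0', v1', w0', w1'⟩ := key (q+m+1) (by linarith)
  have k0 : 0 < q + m := by linarith
  have hu : ((q+m) - q)/(q+m) ≤ m / n := by
    rw [div_le_div_iff₀ k0 (by linarith)]; nlinarith
  have du : ((q+m+1) - q)/(q+m+1) - ((q+m) - q)/(q+m) = q / ((q+m)*(q+m+1)) := by
    field_simp; ring
  have dv : ((q+m+1) + n + 1)/((q+m+1) + n + 1 + q) - ((q+m) + n + 1)/((q+m) + n + 1 + q) =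
      q / (((q+m) + n + 1 + q) * ((q+m+1) + n + 1 + q)) := by
    have : (q+m) + n + 1 + q ≠ 0 := by positivity
    have : (q+m+1) + n + 1 + q ≠ 0 := by positivity
    field_simp; ring
  have du0 : 0 ≤ q / ((q+m)*(q+m+1)) := by positivity
  have dv0 : 0 ≤ q / (((q+m) + n + 1 + q) * ((q+m+1) + n + 1 + q)) := by positivity
  have du1 : q / ((q+m)*(q+m+1)) ≤ 1 / n := by
    rw [div_le_div_iff₀ (by positivity) (by linarith)]; nlinarith
  have dv1 : q / (((q+m) + n + 1 + q) * ((q+m+1) + n + 1 + q)) ≤ 1 / n := by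
    rw [div_le_div_iff₀ (by positivity) (by linarith)]
    have : q * n ≤ ((q+m) + n + 1 + q) * ((q+m+1) + n + 1 + q) :=
      mul_le_mul (by linarith) (by linarith) (by linarith) (by linarith)
    linarith
  have dw : ((q+m+1) + n + 1)/(q+m+1) ≤ ((q+m) + n + 1)/(q+m) := by
    rw [div_le_div_iff₀ (by linarith) k0]; nlinarith
  rw [e1, e2]
  generalize ((q+m) - q)/(q+m) = u at *
  generalize ((q+m) + n + 1)/((q+m) + n + 1 + q) = v at *
  generalize ((q+m) + n + 1)/(q+m) = w at *
  generalize ((q+m+1) - q)/(q+m+1) = u' at *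
  generalize ((q+m+1) + n + 1)/((q+m+1) + n + 1 + q) = v' at *
  generalize ((q+m+1) + n + 1)/(q+m+1) = w' at *
  have v3 : v^3 ≤ 1 := pow_le_one₀ v0 v1
  have u3 : u^3 ≤ 1 := pow_le_one₀ u0 u1
  have w3 : w^a ≤ 3^a := pow_le_pow_left₀ w0 w1 a
  have u30 : u^3 ≤ u := by
    calc u^3 ≤ u^1 := pow_le_pow_of_le_one u0 u1 (by norm_num)
      _ = u := pow_one u
  refine ⟨by positivity, ?_, ?_, ?_⟩
  · calc _ ≤ 1 * 1 * (3:ℝ)^a := by gcongr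
      _ = _ := by ring
  · calc _ ≤ (m/n) * 1 * (3:ℝ)^a := by
          have := u30.trans hu
          gcongr
      _ = _ := by ring
  · have := incr_aux u v w u' v' w' (1/n) a u0 v0 w0' u1' v1' w1' (by linarith) (by linarith)
      (by linarith) (by linarith) dw
    refine this.trans (le_of_eq (by ring))

lemma gs_conc (a r n : ℕ) (hr : 1 ≤ r) (hn : 1 ≤ n) (ha : 6*r+1 ≤ a) :
    Summable (fun m => gs a r n m * (1 - ss a r n m)^2) ∧
    ∑' m, gs a r n m * (1 - ss a r n m)^2 ≤ 6 * 3^a / n * ∑' m, gs a r n m :=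
  conc (gs a r n) (ss a r n) (gs_pos a r n) (gs_summable a r n hr ha) (gs_ratio a r n) (ss_zero a r n)
    (3^a) (6 * 3^a / n) (fun m => (ss_facts a r n m hr hn).1) (fun m => (ss_facts a r n m hr hn).2.1)
    (fun m => (ss_facts a r n m hr hn).2.2.2)

lemma inv_mu (a r n m : ℕ) (hr : 1 ≤ r) (hn : 1 ≤ n) (hm : 1 ≤ m) :
    1 / (m:ℝ) ≤ 4 * (1 - ss a r n m)^2 + 2 * 3^a / n := by
  obtain ⟨h0, -, h2, -⟩ := ss_facts a r n m hr hn
  have hm1 : (1:ℝ) ≤ m := by exact_mod_cast hm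
  have hn1 : (1:ℝ) ≤ n := by exact_mod_cast hn
  have hp : (0:ℝ) < 3^a := by positivity
  rcases le_or_gt (ss a r n m) (1/2) with h | h
  · have : 1 / (m:ℝ) ≤ 1 := by rw [div_le_one (by linarith)]; exact hm1
    have : 0 ≤ 2 * (3:ℝ)^a / n := by positivity
    nlinarith
  · have h3 : 1/2 ≤ 3^a * ((m:ℝ)/n) := by linarith
    have : 1 / (m:ℝ) ≤ 2 * 3^a / n := by
      rw [div_le_div_iff₀ (by linarith) (by linarith)]
      rw [mul_div_assoc', le_div_iff₀ (by linarith)] at h3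
      linarith
    nlinarith [sq_nonneg (1 - ss a r n m)]

lemma ss_tail (a r n : ℕ) (hr : 1 ≤ r) (hn : 1 ≤ n) (ha : 6*r+1 ≤ a) (k : ℝ) 
    (hk : 12*(r:ℝ)*a*n ≤ k) : ((n:ℝ)+1)/2 ≤ k * (sg a r n k - 1) := by
  have hr1 : (1:ℝ) ≤ r := by exact_mod_cast hr
  have hn1 : (1:ℝ) ≤ n := by exact_mod_cast hn
  have ha1 : 6*(r:ℝ)+1 ≤ a := by exact_mod_cast ha
  have hrn : (1:ℝ) ≤ r*n := by nlinarith
  have hran : 7*((r:ℝ)*n) ≤ r*a*n := by nlinarith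
  have k0 : 0 < k := by linarith
  have hkk : 84 * ((r:ℝ)*n) ≤ k := by linarith
  set x : ℝ := (r:ℝ)*n/k with hx
  have x0 : 0 ≤ x := by positivity
  have x1 : x ≤ 1/84 := by rw [hx, div_le_iff₀ k0]; linarith
  have hu : (k - r*n)/k = 1 - x := by rw [hx]; field_simp
  have hv : 1 - x ≤ (k + n + 1)/(k + n + 1 + r*n) := by
    have : (k + n + 1)/(k + n + 1 + r*n) = 1 - r*n/(k+n+1+r*n) := by
      have : k + n + 1 + r*n ≠ 0 := by positivity
      field_simp; ring
    rw [this, hx]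
    gcongr
    linarith
  have hw : (k + n + 1)/k = 1 + (n+1)/k := by field_simp; ring
  have b1 : 1 - 6 * x ≤ (1-x)^6 := by
    have := one_add_mul_le_pow (a := -x) (by linarith) 6
    push_cast at this
    rw [← sub_eq_add_neg] at this
    linarith
  have b2 : 1 + a * ((n+1)/k) ≤ (1 + (n+1)/k)^a := 
    one_add_mul_le_pow (by have : 0 ≤ ((n:ℝ)+1)/k := by positivity
                           linarith) a
  have b3 : (1 + a * ((n+1)/k)) * (1 - 6*x) ≤ sg a r n k := by
    rw [sg, hu, hw]
    have : (1-x)^6 ≤ (1-x)^3 * ((k + n + 1)/(k + n + 1 + r*n))^3 := by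
      rw [show (1-x)^6 = (1-x)^3*(1-x)^3 by ring]
      have h1x : 0 ≤ 1 - x := by linarith
      gcongr
    rw [mul_comm]
    have h1x : 0 ≤ 1 - x := by linarith
    have : (0:ℝ) ≤ 1 + a * ((n+1)/k) := by positivity
    exact mul_le_mul (b1.trans ‹_›) b2 this (by positivity)
  have b4 : k * ((1 + a * ((n+1)/k)) * (1 - 6*x) - 1) = a*(n+1) - 6*(r*n) - 6*(n+1)*(r*a*n/k) := by
    rw [hx]; field_simp; ring
  have b5 : (r:ℝ)*a*n/k ≤ 1/12 := by rw [div_le_iff₀ k0]; linarith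
  have b6 : k * ((1 + a * ((n+1)/k)) * (1 - 6*x) - 1) ≤ k * (sg a r n k - 1) := by gcongr
  refine le_trans ?_ b6
  rw [b4]
  nlinarith

lemma head (a r n : ℕ) (hr : 1 ≤ r) (hn : 2 ≤ n) (ha : 6*r+1 ≤ a) :
    ∑' m, gs a r n m ≤ 52 * r * a * ∑ m ∈ range (12*r*a*n - r*n), gs a r n m := by
  have hr1 : (1:ℝ) ≤ r := by exact_mod_cast hr
  have hn1 : (2:ℝ) ≤ n := by exact_mod_cast hn
  have ha1 : 6*(r:ℝ)+1 ≤ a := by exact_mod_cast ha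
  set S := ∑' m, gs a r n m with hS
  set K := 12*r*a*n - r*n with hK
  have H0 := (gs_summable a r n hr ha).hasSum
  have Hk := (gs_summable_mul a r n hr ha (r*n)).hasSum
  have H1 : HasSum (fun m : ℕ => gs a r n m * ((r:ℝ)*n + m) * ss a r n m)
      (∑' m : ℕ, gs a r n m * ((r:ℝ)*n+m) + S) := by
    rw [← hasSum_nat_add_iff' 1]
    simp only [range_one, sum_singleton, ss_zero, mul_zero, sub_zero]
    refine (Hk.add H0).congr_fun fun m => ?_
    rw [gs_ratio a r n m]; push_cast; ring
  have H2 : HasSum (fun m : ℕ => gs a r n m * ((r:ℝ)*n + m) * (ss a r n m - 1)) S := by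
    have := H1.sub Hk
    rw [add_sub_cancel_left] at this
    refine this.congr_fun fun m => by ring
  have Hh : HasSum (fun m : ℕ => if m ∈ range K then gs a r n m else 0) (∑ m ∈ range K, gs a r n m) := by
    have := hasSum_sum_of_ne_finset_zero (L := SummationFilter.unconditional ℕ) (s := range K) (f := fun m : ℕ => if m ∈ range K then gs a r n m else 0)
      (fun b hb => if_neg hb)
    rwa [sum_congr rfl (fun m hm => if_pos hm)] at this
  have H3 := hasSum_le (fun m => ?_) ((H0.mul_left (((n:ℝ)+1)/2)).sub (Hh.mul_left (12*r*a*n + ((n:ℝ)+1)/2))) H2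
  · have hSn : 0 ≤ S := tsum_nonneg fun m => (gs_pos a r n m).le
    have hH : 0 ≤ ∑ m ∈ range K, gs a r n m := sum_nonneg fun m _ => (gs_pos a r n m).le
    generalize ∑ m ∈ range K, gs a r n m = H at *
    rw [← hS] at H3
    have q1 : ((n:ℝ)-1)/2 * S ≤ (12*r*a*n + ((n:ℝ)+1)/2) * H := by linarith
    have q2 : (12*r*a*n + ((n:ℝ)+1)/2) ≤ 13*(r*a*n) := by
      have : (1:ℝ) ≤ r*a := by nlinarith
      nlinarith
    have q3 : (n:ℝ)/4 * S ≤ ((n:ℝ)-1)/2 * S := mul_le_mul_of_nonneg_right (by linarith) hSn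
    have q4 : (n:ℝ)/4 * S ≤ 13*(r*a*n) * H := q3.trans (q1.trans (by gcongr))
    have : (n:ℝ) * S ≤ n * (52*r*a*H) := by linarith
    exact le_of_mul_le_mul_left this (by linarith)
  · have hg := gs_pos a r n m
    have hs := (ss_facts a r n m hr (by omega)).1
    have hm0 : (0:ℝ) ≤ m := Nat.cast_nonneg m
    split_ifs with hm
    · have hm1 : m < 12*r*a*n - r*n := mem_range.mp hm
      have hm2 : r*n + m ≤ 12*r*a*n := by omega
      have hm3 : (r:ℝ)*n + m ≤ 12*r*a*n := by exact_mod_cast hm2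
      have : 0 ≤ (r:ℝ)*n + m := by positivity
      have : -(12*r*a*n) ≤ ((r:ℝ)*n + m) * (ss a r n m - 1) := by nlinarith
      have := mul_le_mul_of_nonneg_left this hg.le
      linarith
    · have hm1 : ¬ m < 12*r*a*n - r*n := fun h => hm (mem_range.mpr h)
      have hm2 : 12*r*a*n ≤ r*n + m := by omega
      have hm3 : 12*(r:ℝ)*a*n ≤ r*n + m := by exact_mod_cast hm2
      have := mul_le_mul_of_nonneg_left (ss_tail a r n hr (by omega) ha _ hm3) hg.le
      rw [ss]
      linarith

end Concentration

section RatioSums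
open Finset Filter Topology

lemma num_step (r n : ℕ) (hn : 1 ≤ n) (hr : 1 ≤ r) {t : ℝ} (ht : (r:ℝ)*n + 1 ≤ t) :
    (n:ℝ)^(4*r) * num r n t ≤ num r (n+2) (t + 2*r) := by
  have hr1 : (1:ℝ) ≤ r := by exact_mod_cast hr
  have hn1 : (1:ℝ) ≤ n := by exact_mod_cast hn
  have hrn : (n:ℝ) ≤ r*n := by nlinarith
  have t0 : 0 < t := by linarith
  rw [num, num]
  have e1 : ∏ j ∈ range (r*(n+2)), (t + 2*r - 1 - (j:ℝ)) =
      (∏ j ∈ range (2*r), (t + 2*r - 1 - (j:ℝ))) * ∏ j ∈ range (r*n), (t - 1 - (j:ℝ)) := by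
    rw [show r*(n+2) = 2*r + r*n by ring, prod_range_add]
    congr 1
    refine prod_congr rfl fun j _ => by push_cast; ring
  have e2 : ∏ j ∈ range (r*(n+2)), (t + 2*r + ((n+2:ℕ):ℝ) + 1 + (j:ℝ)) =
      (∏ j ∈ range (r*n), (t + 2*r + ((n+2:ℕ):ℝ) + 1 + (j:ℝ))) *
        ∏ j ∈ range (2*r), (t + 2*r + ((n+2:ℕ):ℝ) + 1 + ((r*n+j:ℕ):ℝ)) := by
    rw [show r*(n+2) = r*n + 2*r by ring, prod_range_add]
  have c1 : (n:ℝ)^(2*r) ≤ ∏ j ∈ range (2*r), (t + 2*r - 1 - (j:ℝ)) := by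
    have := prod_le_prod (s := range (2*r)) (f := fun _ : ℕ => (n:ℝ)) (g := fun j : ℕ => t + 2*r - 1 - (j:ℝ))
        (fun j hj => by positivity) (fun j hj => by
          have : (j:ℝ) + 1 ≤ 2 * r := by exact_mod_cast mem_range.mp hj
          linarith)
    simpa using this
  have c2 : (n:ℝ)^(2*r) ≤ ∏ j ∈ range (2*r), (t + 2*r + ((n+2:ℕ):ℝ) + 1 + ((r*n+j:ℕ):ℝ)) := by
    have := prod_le_prod (s := range (2*r)) (f := fun _ : ℕ => (n:ℝ)) (g := fun j : ℕ => t + 2*r + ((n+2:ℕ):ℝ) + 1 + ((r*n+j:ℕ):ℝ))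
        (fun j hj => by positivity) (fun j hj => by
          have : (0:ℝ) ≤ ((r*n+j:ℕ):ℝ) := Nat.cast_nonneg _
          push_cast at this ⊢
          linarith)
    simpa using this
  have c3 : ∏ j ∈ range (r*n), (t + n + 1 + (j:ℝ)) ≤ ∏ j ∈ range (r*n), (t + 2*r + ((n+2:ℕ):ℝ) + 1 + (j:ℝ)) :=
    prod_le_prod (fun j hj => by positivity) (fun j hj => by push_cast; linarith)
  have c4 : 0 ≤ ∏ j ∈ range (r*n), (t - 1 - (j:ℝ)) := prod_nonneg fun j hj => by
    have : (j:ℝ) + 1 ≤ r * n := by exact_mod_cast mem_range.mp hj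
    linarith
  have c5 : 0 ≤ ∏ j ∈ range (r*n), (t + n + 1 + (j:ℝ)) := prod_nonneg fun j hj => by positivity
  rw [e1, e2]
  generalize ∏ j ∈ range (2*r), (t + 2*r - 1 - (j:ℝ)) = A at *
  generalize ∏ j ∈ range (2*r), (t + 2*r + ((n+2:ℕ):ℝ) + 1 + ((r*n+j:ℕ):ℝ)) = B at *
  generalize ∏ j ∈ range (r*n), (t + 2*r + ((n+2:ℕ):ℝ) + 1 + (j:ℝ)) = C at *
  generalize ∏ j ∈ range (r*n), (t + n + 1 + (j:ℝ)) = D at *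
  generalize ∏ j ∈ range (r*n), (t - 1 - (j:ℝ)) = E at *
  have hp : (0:ℝ) ≤ (n:ℝ)^(2*r) := by positivity
  calc _ = ((n:ℝ)^(2*r) * E) * (D * (n:ℝ)^(2*r)) := by ring
    _ ≤ (A * E) * (C * B) := by
      have : 0 ≤ A := hp.trans c1
      have : 0 ≤ C := c5.trans c3
      gcongr

lemma den_step (a r n : ℕ) (hn : 1 ≤ n) (hr : 1 ≤ r) (ha : 1 ≤ a) {t : ℝ} (ht : (r:ℝ)*n + 1 ≤ t)
    (ht2 : t ≤ 12*r*a*n) :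
    den (n+2) (t + 2*r) ≤ Real.exp 4 * (17*r*a)^2 * n^2 * den n t := by
  have hr1 : (1:ℝ) ≤ r := by exact_mod_cast hr
  have hn1 : (1:ℝ) ≤ n := by exact_mod_cast hn
  have ha1 : (1:ℝ) ≤ a := by exact_mod_cast ha
  have hrn : (n:ℝ) ≤ r*n := by nlinarith
  have hra : (r:ℝ) ≤ r*a := by nlinarith
  have h1a : (1:ℝ) ≤ r*a := by linarith
  have hran : (r:ℝ)*a ≤ r*a*n := by nlinarith
  have hnan : (n:ℝ) ≤ r*a*n := by nlinarith
  have t0 : 0 < t := by linarith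
  rw [den, show n + 2 + 1 = (n+1)+1+1 by ring, prod_range_succ, prod_range_succ]
  have c1 : ∏ j ∈ range (n+1), (t + 2*r + (j:ℝ)) ≤ den n t * Real.exp 4 := by
    calc _ ≤ ∏ j ∈ range (n+1), ((t + (j:ℝ)) * (1 + 2/n)) := by
          refine prod_le_prod (fun j hj => by positivity) (fun j hj => ?_)
          have : 2*(r:ℝ) ≤ (t+j) * (2/n) := by
            rw [mul_div_assoc', le_div_iff₀ (by linarith)]
            have : (0:ℝ) ≤ j := Nat.cast_nonneg j
            nlinarith
          linarith
      _ = den n t * (1 + 2/n)^(n+1) := by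
          rw [prod_mul_distrib, prod_const, card_range, den]
      _ ≤ _ := by
          have : (1 + 2/(n:ℝ))^(n+1) ≤ Real.exp 4 := by
            calc (1 + 2/(n:ℝ))^(n+1) ≤ (Real.exp (2/n))^(n+1) := by
                  gcongr
                  linarith [Real.add_one_le_exp (2/(n:ℝ))]
              _ = Real.exp ((n+1)*(2/n)) := by rw [← Real.exp_nat_mul]; push_cast; rfl
              _ ≤ _ := by
                gcongr
                rw [mul_div_assoc', div_le_iff₀ (by linarith)]; linarith
          exact mul_le_mul_of_nonneg_left this (den_pos n t0).le
  have c2 : t + 2*r + ((n+1:ℕ):ℝ) ≤ 17*r*a*n := by push_cast; linarith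
  have c3 : t + 2*r + ((n+1+1:ℕ):ℝ) ≤ 17*r*a*n := by push_cast; linarith
  have hd := (den_pos n t0).le
  calc _ ≤ (den n t * Real.exp 4) * (17*r*a*n) * (17*r*a*n) := by gcongr
    _ = _ := by ring

lemma gs_step (a r n m : ℕ) (hn : 1 ≤ n) (hr : 1 ≤ r) (ha : 6*r+1 ≤ a) (hm : m < 12*r*a*n - r*n) :
    gs a r n m ≤ (Real.exp 4 * (17*r*a)^2)^a * gs a r (n+2) m := by
  have hr1 : (1:ℝ) ≤ r := by exact_mod_cast hr
  have hn1 : (1:ℝ) ≤ n := by exact_mod_cast hn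
  have ha1 : 6*(r:ℝ)+1 ≤ a := by exact_mod_cast ha
  have hm0 : (0:ℝ) ≤ m := Nat.cast_nonneg m
  have ht : (r:ℝ)*n + 1 ≤ r*n+1+m := by linarith
  have ht2 : (r:ℝ)*n+1+m ≤ 12*r*a*n := by
    have : r*n+1+m ≤ 12*r*a*n := by omega
    exact_mod_cast this
  have e : (r:ℝ)*((n+2:ℕ):ℝ) + 1 + m = r*n+1+m + 2*r := by push_cast; ring
  rw [gs, gs, e]
  have t0 : 0 < (r:ℝ)*n+1+m := by positivity
  generalize (r:ℝ)*n+1+m = t at *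
  have h1 := num_step r n hn hr ht
  have h2 := den_step a r n hn hr (by omega) ht ht2
  have h3 : (n:ℝ)^2 * n.factorial ≤ ((n+2).factorial : ℝ) := by
    rw [Nat.factorial_succ, Nat.factorial_succ]
    push_cast
    have : (0:ℝ) ≤ n.factorial := by positivity
    nlinarith
  have hd := den_pos n t0
  have hd2 := den_pos (n+2) (by linarith : 0 < t + 2*r)
  have hnum := num_pos r n (by linarith : (r:ℝ)*n < t)
  rw [RR, RR]
  set D := Real.exp 4 * (17*r*a)^2 with hD
  have ha0 : (0:ℝ) < a := by linarith
  have hDp : 0 < D := by positivity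
  have hnum2 : 0 ≤ num r (n+2) (t + 2*r) := le_trans (by positivity) h1
  obtain ⟨b, hb⟩ : ∃ b, a - 6*r = b := ⟨_, rfl⟩
  rw [hb]
  have hab : a = b + 6*r := by omega
  calc _ = D^a * (((n:ℝ)^2*n.factorial)^b * ((n:ℝ)^(4*r)*num r n t)^3 / (D*n^2*den n t)^a) := by
        have : (D*(n:ℝ)^2*den n t)^a = D^a * (n:ℝ)^(2*a) * den n t^a := by
          rw [mul_pow, mul_pow, ← pow_mul]
        rw [this]
        have : ((n:ℝ)^2*n.factorial)^b * ((n:ℝ)^(4*r)*num r n t)^3 = (n:ℝ)^(2*a) * (n.factorial^b * num r n t ^3) := by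
          rw [mul_pow, mul_pow, ← pow_mul, ← pow_mul, hab]; ring
        rw [this]
        field_simp
    _ ≤ _ := by gcongr

lemma gs_sum_step (a r n : ℕ) (hn : 2 ≤ n) (hr : 1 ≤ r) (ha : 6*r+1 ≤ a) :
    ∑' m, gs a r n m ≤ 52*r*a*(Real.exp 4 * (17*r*a)^2)^a * ∑' m, gs a r (n+2) m := by
  refine (head a r n hr hn ha).trans ?_
  rw [mul_assoc (52*(r:ℝ)*a)]
  refine mul_le_mul_of_nonneg_left ?_ (by positivity)
  calc _ ≤ ∑ m ∈ range (12*r*a*n - r*n), (Real.exp 4 * (17*r*a)^2)^a * gs a r (n+2) m :=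
        sum_le_sum fun m hm => gs_step a r n m (by omega) hr ha (mem_range.mp hm)
    _ = (Real.exp 4 * (17*r*a)^2)^a * ∑ m ∈ range (12*r*a*n - r*n), gs a r (n+2) m := by rw [mul_sum]
    _ ≤ _ := by
      refine mul_le_mul_of_nonneg_left ?_ (by positivity)
      exact (gs_summable a r (n+2) hr ha).sum_le_tsum _ fun m _ => (gs_pos a r (n+2) m).le

lemma RR_hasSum (a r n : ℕ) (hr : 1 ≤ r) (ha : 6*r+1 ≤ a) :
    HasSum (fun k : ℕ => RR a r n ((k:ℝ)+1)) (∑' m, gs a r n m) := by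
  rw [← hasSum_nat_add_iff' (r*n)]
  rw [sum_eq_zero (fun i hi => ?_), sub_zero]
  · refine (gs_summable a r n hr ha).hasSum.congr_fun fun m => ?_
    rw [gs]; push_cast; congr 1; ring
  · have := RR_zero a r n (i+1) (by omega) (by have := mem_range.mp hi; omega)
    push_cast at this
    exact this

lemma RR_tendsto (a r n : ℕ) (hr : 1 ≤ r) (ha : 6*r+1 ≤ a) :
    Tendsto (fun k : ℕ => (k:ℝ) * RR a r n k) atTop (𝓝 0) := by
  rw [← tendsto_add_atTop_iff_nat (r*n+1)]
  refine (gs_summable_mul a r n hr ha (r*n+1)).tendsto_atTop_zero.congr fun m => ?_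
  rw [gs, mul_comm]
  push_cast
  rw [show (m:ℝ) + (r*n+1) = r*n+1+m by ring]

end RatioSums

section SecondDeriv
open Finset Filter Topology

lemma prod_hasDeriv (s : Finset ℕ) (c : ℕ → ℝ) (t : ℝ) (h : ∀ j ∈ s, t + c j ≠ 0) :
    HasDerivAt (fun t => ∏ j ∈ s, (t + c j)) ((∏ j ∈ s, (t + c j)) * ∑ j ∈ s, 1 / (t + c j)) t := by
  induction s using Finset.induction_on with
  | empty => simpa using hasDerivAt_const t (1:ℝ)
  | insert i s hi ih =>
    have h1 := ih fun j hj => h j (mem_insert_of_mem hj)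
    have h2 : t + c i ≠ 0 := h i (mem_insert_self i s)
    simp only [prod_insert hi, sum_insert hi]
    have h3 := ((hasDerivAt_id t).add_const (c i)).mul h1
    refine (h3.congr_deriv ?_)
    simp only [id]
    field_simp

lemma sum_hasDeriv (s : Finset ℕ) (c : ℕ → ℝ) (t : ℝ) (h : ∀ j ∈ s, t + c j ≠ 0) :
    HasDerivAt (fun t => ∑ j ∈ s, 1 / (t + c j)) (- ∑ j ∈ s, 1 / (t + c j)^2) t := by
  have : HasDerivAt (fun t => ∑ j ∈ s, 1 / (t + c j)) (∑ j ∈ s, -(1 / (t + c j)^2)) t := by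
    refine HasDerivAt.fun_sum fun j hj => ?_
    have := ((hasDerivAt_id t).add_const (c j)).inv (h j hj)
    simp only [one_div]
    refine this.congr_deriv ?_
    simp [neg_div]
  rwa [sum_neg_distrib] at this

noncomputable def LgA (r n : ℕ) (t : ℝ) : ℝ := ∑ j ∈ range (r*n), 1 / (t + (-1 - (j:ℝ)))
noncomputable def LgB (r n : ℕ) (t : ℝ) : ℝ := ∑ j ∈ range (r*n), 1 / (t + ((n:ℝ) + 1 + j))
noncomputable def LgC (n : ℕ) (t : ℝ) : ℝ := ∑ j ∈ range (n+1), 1 / (t + (j:ℝ))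
noncomputable def LqA (r n : ℕ) (t : ℝ) : ℝ := ∑ j ∈ range (r*n), 1 / (t + (-1 - (j:ℝ)))^2
noncomputable def LqB (r n : ℕ) (t : ℝ) : ℝ := ∑ j ∈ range (r*n), 1 / (t + ((n:ℝ) + 1 + j))^2
noncomputable def LqC (n : ℕ) (t : ℝ) : ℝ := ∑ j ∈ range (n+1), 1 / (t + (j:ℝ))^2

noncomputable def Lg (a r n : ℕ) (t : ℝ) : ℝ := 3 * LgA r n t + 3 * LgB r n t - a * LgC n t
noncomputable def Lq (a r n : ℕ) (t : ℝ) : ℝ := a * LqC n t - 3 * LqA r n t - 3 * LqB r n t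

lemma neA (r n : ℕ) {t : ℝ} (ht : (r:ℝ)*n < t) : ∀ j ∈ range (r*n), t + (-1 - (j:ℝ)) ≠ 0 := by
  intro j hj
  have : (j:ℝ) + 1 ≤ r * n := by exact_mod_cast mem_range.mp hj
  have : 0 < t + (-1 - (j:ℝ)) := by linarith
  exact this.ne'

lemma neB (r n : ℕ) {t : ℝ} (ht : 0 < t) : ∀ j ∈ range (r*n), t + ((n:ℝ) + 1 + j) ≠ 0 := by
  intro j hj
  positivity

lemma neC (n : ℕ) {t : ℝ} (ht : 0 < t) : ∀ j ∈ range (n+1), t + (j:ℝ) ≠ 0 := by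
  intro j hj
  positivity

lemma num_eq (r n : ℕ) : num r n = fun t => (∏ j ∈ range (r*n), (t + (-1 - (j:ℝ)))) *
    ∏ j ∈ range (r*n), (t + ((n:ℝ) + 1 + j)) := by
  funext t
  rw [num]
  congr 1
  · exact prod_congr rfl fun j _ => by ring
  · exact prod_congr rfl fun j _ => by ring

lemma num_hasDeriv (r n : ℕ) {t : ℝ} (ht : (r:ℝ)*n < t) :
    HasDerivAt (num r n) (num r n t * (LgA r n t + LgB r n t)) t := by
  have t0 : 0 < t := lt_of_le_of_lt (by positivity) ht
  have h := (prod_hasDeriv _ _ t (neA r n ht)).mul (prod_hasDeriv _ _ t (neB r n t0))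
  rw [num_eq]
  refine h.congr_deriv ?_
  simp only [LgA, LgB]
  ring

lemma den_hasDeriv (n : ℕ) {t : ℝ} (ht : 0 < t) :
    HasDerivAt (den n) (den n t * LgC n t) t := 
  prod_hasDeriv _ _ t (neC n ht)

lemma RR_hasDeriv (a r n : ℕ) {t : ℝ} (ht : (r:ℝ)*n < t) :
    HasDerivAt (RR a r n) (RR a r n t * Lg a r n t) t := by
  have t0 : 0 < t := lt_of_le_of_lt (by positivity) ht
  have h1 := ((num_hasDeriv r n ht).pow 3).const_mul ((n.factorial:ℝ)^(a-6*r))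
  have h2 := (den_hasDeriv n t0).pow a
  have hd := den_pos n t0
  have h3 := h1.div h2 (pow_pos hd a).ne'
  refine (h3.congr_deriv ?_)
  rw [RR, Lg]
  simp only [Pi.pow_apply]
  rcases Nat.eq_zero_or_pos a with rfl | ha
  · simp; ring
  · obtain ⟨b, rfl⟩ : ∃ b, a = b + 1 := ⟨a-1, by omega⟩
    simp only [Nat.add_sub_cancel, Nat.reduceSub]
    field_simp
    push_cast
    ring

lemma Lg_hasDeriv (a r n : ℕ) {t : ℝ} (ht : (r:ℝ)*n < t) :
    HasDerivAt (Lg a r n) (Lq a r n t) t := by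
  have t0 : 0 < t := lt_of_le_of_lt (by positivity) ht
  have hA := (sum_hasDeriv _ _ t (neA r n ht)).const_mul 3
  have hB := (sum_hasDeriv _ _ t (neB r n t0)).const_mul 3
  have hC := (sum_hasDeriv _ _ t (neC n t0)).const_mul (a:ℝ)
  refine ((hA.add hB).sub hC).congr_deriv ?_
  rw [Lq, LqA, LqB, LqC]; ring

lemma RR_deriv2 (a r n : ℕ) {t : ℝ} (ht : (r:ℝ)*n < t) :
    deriv (deriv (RR a r n)) t = RR a r n t * (Lg a r n t ^ 2 + Lq a r n t) := by
  have h : deriv (RR a r n) =ᶠ[𝓝 t] fun t => RR a r n t * Lg a r n t := by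
    filter_upwards [lt_mem_nhds ht] with y hy
    exact (RR_hasDeriv a r n hy).deriv
  rw [h.deriv_eq, ((RR_hasDeriv a r n ht).fun_mul (Lg_hasDeriv a r n ht)).deriv]
  ring

lemma triple_zero (f w : ℝ → ℝ) (x : ℝ) (hf : AnalyticAt ℝ f x) (hw : AnalyticAt ℝ w x) (h0 : f x = 0) :
    deriv (deriv (fun t => f t ^ 3 * w t)) x = 0 := by
  have h : deriv (fun t => f t ^ 3 * w t) =ᶠ[𝓝 x]
      fun t => f t ^ 2 * (3 * deriv f t * w t + f t * deriv w t) := by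
    filter_upwards [hf.eventually_analyticAt, hw.eventually_analyticAt] with y h1 h2
    have := (h1.differentiableAt.hasDerivAt.pow 3).mul h2.differentiableAt.hasDerivAt
    refine (this.congr_deriv ?_).deriv
    simp only [Pi.pow_apply]
    push_cast
    ring
  rw [h.deriv_eq]
  have d1 : DifferentiableAt ℝ (fun t => 3 * deriv f t * w t + f t * deriv w t) x := by
    have := hf.differentiableAt
    have := hw.differentiableAt
    have := hf.deriv.differentiableAt
    have := hw.deriv.differentiableAt
    fun_prop
  have := ((hf.differentiableAt.hasDerivAt.pow 2).mul d1.hasDerivAt)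
  refine (this.congr_deriv ?_).deriv
  simp [h0]

lemma RR_deriv2_zero (a r n k : ℕ) (h1 : 1 ≤ k) (h2 : k ≤ r*n) :
    deriv (deriv (RR a r n)) k = 0 := by
  have e : RR a r n = fun t => num r n t ^ 3 * ((n.factorial:ℝ)^(a-6*r) / den n t ^ a) := by
    funext t; rw [RR]; ring
  have hk : (0:ℝ) < k := by exact_mod_cast h1
  rw [e]
  apply triple_zero
  · rw [num_eq]
    refine AnalyticAt.mul (Finset.analyticAt_fun_prod _ fun j _ => by fun_prop) (Finset.analyticAt_fun_prod _ fun j _ => by fun_prop)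
  · refine AnalyticAt.div analyticAt_const ?_ (pow_pos (den_pos n hk) a).ne'
    refine AnalyticAt.pow ?_ a
    exact Finset.analyticAt_fun_prod _ fun j _ => by fun_prop
  · rw [num]
    have : ∏ j ∈ range (r*n), ((k:ℝ) - 1 - j) = 0 := by
      refine prod_eq_zero (i := k-1) (mem_range.mpr (by omega)) ?_
      rw [Nat.cast_sub h1]; push_cast; ring
    rw [this, zero_mul]

end SecondDeriv

section SecondDerivBound
open Finset Filter Topology

lemma log_sum (x : ℝ) (hx : 0 < x) (N : ℕ) :
    ∑ j ∈ range N, 1 / (x + (j+1)) ≤ Real.log ((x+N)/x) ∧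
    Real.log ((x+N)/x) ≤ ∑ j ∈ range N, 1 / (x + (j+1)) + (1/x - 1/(x+N)) := by
  induction N with
  | zero => simp [hx.ne']
  | succ N ih =>
    have p : 0 < x + N := by positivity
    have p1 : 0 < x + N + 1 := by positivity
    have e : Real.log ((x+((N+1:ℕ):ℝ))/x) = Real.log ((x+N)/x) + Real.log ((x+N+1)/(x+N)) := by
      rw [← Real.log_mul (by positivity) (by positivity)]
      congr 1; push_cast; field_simp; ring
    have h1 : Real.log ((x+N+1)/(x+N)) ≤ 1/(x+N) := by
      have := Real.log_le_sub_one_of_pos (show 0 < (x+N+1)/(x+N) by positivity)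
      refine this.trans (le_of_eq ?_); field_simp; ring
    have h2 : 1/(x+N+1) ≤ Real.log ((x+N+1)/(x+N)) := by
      have := Real.one_sub_inv_le_log_of_pos (show 0 < (x+N+1)/(x+N) by positivity)
      refine le_trans (le_of_eq ?_) this; rw [inv_div]; field_simp; ring
    rw [e, sum_range_succ]
    push_cast
    rw [← add_assoc x]
    constructor
    · linarith [ih.1]
    · linarith [ih.2]

lemma sq_sum (x : ℝ) (hx : 0 < x) (N : ℕ) :
    ∑ j ∈ range N, 1 / (x + (j+1))^2 ≤ 1/x - 1/(x+N) := by
  induction N with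
  | zero => simp
  | succ N ih =>
    have p : 0 < x + N := by positivity
    rw [sum_range_succ]
    push_cast
    rw [← add_assoc x]
    have : 1/(x+N+1)^2 ≤ 1/(x+N) - 1/(x+N+1) := by
      rw [div_sub_div _ _ (by positivity) (by positivity), div_le_div_iff₀ (by positivity) (by positivity)]
      nlinarith
    linarith

lemma LgA_eq (r n m : ℕ) : LgA r n ((r:ℝ)*n+1+m) = ∑ j ∈ range (r*n), 1 / ((m:ℝ) + (j+1)) := by
  rw [LgA, ← sum_range_reflect]
  refine sum_congr rfl fun j hj => ?_
  have := mem_range.mp hj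
  rw [Nat.cast_sub (by omega), Nat.cast_sub (by omega)]
  push_cast
  congr 1; ring

lemma LqA_eq (r n m : ℕ) : LqA r n ((r:ℝ)*n+1+m) = ∑ j ∈ range (r*n), 1 / ((m:ℝ) + (j+1))^2 := by
  rw [LqA, ← sum_range_reflect]
  refine sum_congr rfl fun j hj => ?_
  have := mem_range.mp hj
  rw [Nat.cast_sub (by omega), Nat.cast_sub (by omega)]
  push_cast
  congr 2; ring

lemma LgB_eq (r n m : ℕ) : LgB r n ((r:ℝ)*n+1+m) = ∑ j ∈ range (r*n), 1 / (((r:ℝ)*n+m+n+1) + (j+1)) := by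
  rw [LgB]
  refine sum_congr rfl fun j hj => ?_
  congr 1; ring

lemma LqB_eq (r n m : ℕ) : LqB r n ((r:ℝ)*n+1+m) = ∑ j ∈ range (r*n), 1 / (((r:ℝ)*n+m+n+1) + (j+1))^2 := by
  rw [LqB]
  refine sum_congr rfl fun j hj => ?_
  congr 2; ring

lemma LgC_eq (r n m : ℕ) : LgC n ((r:ℝ)*n+1+m) = ∑ j ∈ range (n+1), 1 / (((r:ℝ)*n+m) + (j+1)) := by
  rw [LgC]
  refine sum_congr rfl fun j hj => ?_
  congr 1; ring

lemma LqC_eq (r n m : ℕ) : LqC n ((r:ℝ)*n+1+m) = ∑ j ∈ range (n+1), 1 / (((r:ℝ)*n+m) + (j+1))^2 := by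
  rw [LqC]
  refine sum_congr rfl fun j hj => ?_
  congr 2; ring

lemma abs_log_le (s : ℝ) (hs : 0 < s) : |Real.log s| ≤ |1 - s| * (1 + |Real.log s|) := by
  rcases le_or_gt 1 s with h | h
  · have h0 := Real.log_nonneg h
    rw [abs_of_nonneg h0, abs_of_nonpos (by linarith)]
    have := Real.log_le_sub_one_of_pos hs
    nlinarith
  · have h0 := Real.log_neg hs h
    rw [abs_of_neg h0, abs_of_pos (by linarith)]
    have h1 := Real.one_sub_inv_le_log_of_pos hs
    have h2 : s * (1 - s⁻¹) ≤ s * Real.log s := mul_le_mul_of_nonneg_left h1 hs.le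
    rw [mul_sub, mul_inv_cancel₀ hs.ne'] at h2
    nlinarith

noncomputable def Lam (a r n : ℕ) : ℝ := 2*a + 6 + 3 * Real.log (r*n+1)

lemma Lam_nonneg (a r n : ℕ) : 0 ≤ Lam a r n := by
  have : 0 ≤ Real.log ((r:ℝ)*n+1) := Real.log_nonneg (by
    have : (0:ℝ) ≤ (r:ℝ)*n := by positivity
    linarith)
  rw [Lam]; positivity

lemma harm_aux (N : ℕ) : ∑ j ∈ range N, 1 / (((0:ℕ):ℝ) + ((j:ℝ)+1)) ≤ 1 + Real.log ((N:ℝ)+1) := by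
  have h1 := (log_sum 1 one_pos N).1
  have h2 := sum_range_succ' (fun j : ℕ => 1 / (((0:ℕ):ℝ) + ((j:ℝ)+1))) N
  have h3 := sum_range_succ (fun j : ℕ => 1 / (((0:ℕ):ℝ) + ((j:ℝ)+1))) N
  have h4 : 0 ≤ 1 / (((0:ℕ):ℝ) + ((N:ℝ)+1)) := by positivity
  have h5 : ∑ j ∈ range N, 1 / (((0:ℕ):ℝ) + (((j+1:ℕ):ℝ)+1)) = ∑ j ∈ range N, 1 / ((1:ℝ) + ((j:ℝ)+1)) :=
    sum_congr rfl fun j _ => by push_cast; congr 1; ring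
  rw [h5] at h2
  rw [div_one] at h1
  rw [add_comm (N:ℝ) 1]
  have h6 : 1 / (((0:ℕ):ℝ) + (((0:ℕ):ℝ)+1)) = 1 := by norm_num
  simp only [h6] at h2
  linarith

lemma harm_aux2 (N : ℕ) : ∑ j ∈ range N, 1 / (((0:ℕ):ℝ) + ((j:ℝ)+1))^2 ≤ 2 := by
  have h1 := sq_sum 1 one_pos N
  have h2 := sum_range_succ' (fun j : ℕ => 1 / (((0:ℕ):ℝ) + ((j:ℝ)+1))^2) N
  have h3 := sum_range_succ (fun j : ℕ => 1 / (((0:ℕ):ℝ) + ((j:ℝ)+1))^2) N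
  have h4 : 0 ≤ 1 / (((0:ℕ):ℝ) + ((N:ℝ)+1))^2 := by positivity
  have h5 : ∑ j ∈ range N, 1 / (((0:ℕ):ℝ) + (((j+1:ℕ):ℝ)+1))^2 = ∑ j ∈ range N, 1 / ((1:ℝ) + ((j:ℝ)+1))^2 :=
    sum_congr rfl fun j _ => by push_cast; congr 2; ring
  rw [h5] at h2
  have h6 : 1 / (((0:ℕ):ℝ) + (((0:ℕ):ℝ)+1))^2 = 1 := by norm_num
  have h7 : 0 ≤ 1 / ((1:ℝ) + (N:ℝ)) := by positivity
  simp only [h6] at h2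
  rw [div_one] at h1
  linarith

set_option maxHeartbeats 2000000 in
/-- abstract form of the bound -/
lemma LBound (a r n m : ℕ) (hr : 1 ≤ r) (hn : 1 ≤ n) :
    |Lg a r n ((r:ℝ)*n+1+m)^2 + Lq a r n ((r:ℝ)*n+1+m)| ≤
      (1 - ss a r n m)^2 * (2*(1 + Lam a r n)^2 + 12*(6+a)^2) + 6*(6+a)^2*3^a/n := by
  have hr1 : (1:ℝ) ≤ r := by exact_mod_cast hr
  have hn1 : (1:ℝ) ≤ n := by exact_mod_cast hn
  have hm0 : (0:ℝ) ≤ m := Nat.cast_nonneg m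
  have ha0 : (0:ℝ) ≤ a := Nat.cast_nonneg a
  have hrn : (n:ℝ) ≤ r*n := by nlinarith
  have hL := Lam_nonneg a r n
  have hlog0 : 0 ≤ Real.log ((r:ℝ)*n+1) := Real.log_nonneg (by linarith)
  have hlog2 : Real.log 2 ≤ 1 := by
    have := Real.log_le_sub_one_of_pos (show (0:ℝ) < 2 by norm_num); linarith
  have hlog3 : Real.log 3 ≤ 2 := by
    have := Real.log_le_sub_one_of_pos (show (0:ℝ) < 3 by norm_num); linarith
  obtain ⟨B1, B2⟩ := log_sum ((r:ℝ)*n+m+n+1) (by positivity) (r*n)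
  obtain ⟨C1, C2⟩ := log_sum ((r:ℝ)*n+m) (by positivity) (n+1)
  have B3 := sq_sum ((r:ℝ)*n+m+n+1) (by positivity) (r*n)
  have C3 := sq_sum ((r:ℝ)*n+m) (by positivity) (n+1)
  have B4 : 0 ≤ ∑ j ∈ range (r*n), 1 / (((r:ℝ)*n+m+n+1) + (j+1)) := sum_nonneg fun j _ => by positivity
  have C4 : 0 ≤ ∑ j ∈ range (n+1), 1 / (((r:ℝ)*n+m) + (j+1)) := sum_nonneg fun j _ => by positivity
  have B5 : 0 ≤ ∑ j ∈ range (r*n), 1 / (((r:ℝ)*n+m+n+1) + (j+1))^2 := sum_nonneg fun j _ => by positivity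
  have C5 : 0 ≤ ∑ j ∈ range (n+1), 1 / (((r:ℝ)*n+m) + (j+1))^2 := sum_nonneg fun j _ => by positivity
  rw [Lg, Lq, LgA_eq, LgB_eq, LgC_eq, LqA_eq, LqB_eq, LqC_eq]
  push_cast at B1 B2 B3 C1 C2 C3
  have v2 : Real.log (((r:ℝ)*n+m+n+1+r*n)/((r:ℝ)*n+m+n+1)) ≤ 1 := by
    refine le_trans (Real.log_le_log (by positivity) ?_) hlog2
    rw [div_le_iff₀ (by positivity)]; linarith
  have w2 : Real.log (((r:ℝ)*n+m+(n+1))/((r:ℝ)*n+m)) ≤ 2 := by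
    refine le_trans (Real.log_le_log (by positivity) ?_) hlog3
    rw [div_le_iff₀ (by positivity)]; linarith
  generalize ∑ j ∈ range (r*n), 1 / (((r:ℝ)*n+m+n+1) + (j+1)) = sB at *
  generalize ∑ j ∈ range (n+1), 1 / (((r:ℝ)*n+m) + (j+1)) = sC at *
  generalize ∑ j ∈ range (r*n), 1 / (((r:ℝ)*n+m+n+1) + (j+1))^2 = qB at *
  generalize ∑ j ∈ range (n+1), 1 / (((r:ℝ)*n+m) + (j+1))^2 = qC at *
  have hY : (0:ℝ) ≤ 6*(6+a)^2*3^a/n := by positivity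
  have ib1 : 0 ≤ 1 / ((r:ℝ)*n+m+n+1+r*n) := by positivity
  have ib2 : 0 ≤ 1 / ((r:ℝ)*n+m+(n+1)) := by positivity
  rcases Nat.eq_zero_or_pos m with rfl | hm
  · rw [ss_zero]
    have A1 := harm_aux (r*n)
    have A2 := harm_aux2 (r*n)
    rw [Nat.cast_mul] at A1
    have A4 : 0 ≤ ∑ j ∈ range (r*n), 1 / (((0:ℕ):ℝ) + ((j:ℝ)+1)) := sum_nonneg fun j _ => by positivity
    have A5 : 0 ≤ ∑ j ∈ range (r*n), 1 / (((0:ℕ):ℝ) + ((j:ℝ)+1))^2 := sum_nonneg fun j _ => by positivity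
    generalize ∑ j ∈ range (r*n), 1 / (((0:ℕ):ℝ) + ((j:ℝ)+1)) = sA at *
    generalize ∑ j ∈ range (r*n), 1 / (((0:ℕ):ℝ) + ((j:ℝ)+1))^2 = qA at *
    have i1 : 1 / ((r:ℝ)*n+((0:ℕ):ℝ)+n+1) ≤ 1 := by
      rw [div_le_one (by positivity)]; push_cast; linarith
    have i2 : 1 / ((r:ℝ)*n+((0:ℕ):ℝ)) ≤ 1 := by
      push_cast; rw [div_le_one (by linarith)]; linarith
    have qB1 : qB ≤ 1 := by linarith
    have qC1 : qC ≤ 1 := by linarith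
    have sB1 : sB ≤ 1 := by linarith
    have sC1 : sC ≤ 2 := by linarith
    have aC0 : 0 ≤ a * sC := by positivity
    have aC1 : a * sC ≤ a * 2 := by gcongr
    have aq0 : 0 ≤ a * qC := by positivity
    have aq1 : a * qC ≤ a * 1 := by gcongr
    have g1 : |3*sA + 3*sB - a*sC| ≤ Lam a r n := by
      rw [Lam, abs_le]; constructor <;> linarith
    have g2 : |a * qC - 3*qA - 3*qB| ≤ 9 + a := by
      rw [abs_le]; constructor <;> linarith
    have g3 : |3*sA + 3*sB - a*sC|^2 ≤ Lam a r n ^ 2 := pow_le_pow_left₀ (abs_nonneg _) g1 2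
    refine (abs_add_le _ _).trans ?_
    rw [abs_pow]
    nlinarith
  · have hm1 : (1:ℝ) ≤ m := by exact_mod_cast hm
    obtain ⟨A1, A2⟩ := log_sum (m:ℝ) (by positivity) (r*n)
    have A3 := sq_sum (m:ℝ) (by positivity) (r*n)
    have A5 : 0 ≤ ∑ j ∈ range (r*n), 1 / ((m:ℝ) + ((j:ℝ)+1))^2 := sum_nonneg fun j _ => by positivity
    generalize ∑ j ∈ range (r*n), 1 / ((m:ℝ) + ((j:ℝ)+1)) = sA at *
    generalize ∑ j ∈ range (r*n), 1 / ((m:ℝ) + ((j:ℝ)+1))^2 = qA at *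
    push_cast at A1 A2 A3
    have ia : 0 ≤ 1 / ((m:ℝ)+r*n) := by positivity
    have i1 : 1 / ((r:ℝ)*n+m+n+1) ≤ 1/m := one_div_le_one_div_of_le (by linarith) (by linarith)
    have i2 : 1 / ((r:ℝ)*n+m) ≤ 1/m := one_div_le_one_div_of_le (by linarith) (by linarith)
    have u2 : Real.log (((m:ℝ)+r*n)/m) ≤ Real.log (r*n+1) := by
      refine Real.log_le_log (by positivity) ?_
      rw [div_le_iff₀ (by positivity)]; nlinarith
    have u3 : 0 ≤ Real.log (((m:ℝ)+r*n)/m) := Real.log_nonneg (by rw [le_div_iff₀ (by positivity)]; linarith)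
    have v3 : 0 ≤ Real.log (((r:ℝ)*n+m+n+1+r*n)/((r:ℝ)*n+m+n+1)) := by linarith
    have w3 : 0 ≤ Real.log (((r:ℝ)*n+m+(n+1))/((r:ℝ)*n+m)) := by linarith
    have hlogs : Real.log (ss a r n m) = -(3 * Real.log (((m:ℝ)+r*n)/m)) 
        - 3 * Real.log (((r:ℝ)*n+m+n+1+r*n)/((r:ℝ)*n+m+n+1)) + a * Real.log (((r:ℝ)*n+m+(n+1))/((r:ℝ)*n+m)) := by
      have e : ss a r n m = ((((m:ℝ)+r*n)/m)⁻¹)^3 * ((((r:ℝ)*n+m+n+1+r*n)/((r:ℝ)*n+m+n+1))⁻¹)^3 *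
          (((r:ℝ)*n+m+(n+1))/((r:ℝ)*n+m))^a := by
        rw [ss, sg, inv_div, inv_div, add_sub_cancel_left, add_comm (m:ℝ), add_assoc _ (n:ℝ) 1]
      rw [e, Real.log_mul (by positivity) (by positivity), Real.log_mul (by positivity) (by positivity),
        Real.log_pow, Real.log_pow, Real.log_pow, Real.log_inv, Real.log_inv]
      push_cast; ring
    have hspos : 0 < ss a r n m := by
      rw [ss, sg, add_sub_cancel_left]; positivity
    have hinv := inv_mu a r n m hr hn hm
    have hal := abs_log_le _ hspos
    generalize ss a r n m = σ at *
    generalize Real.log (((m:ℝ)+r*n)/m) = U at *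
    generalize Real.log (((r:ℝ)*n+m+n+1+r*n)/((r:ℝ)*n+m+n+1)) = V at *
    generalize Real.log (((r:ℝ)*n+m+(n+1))/((r:ℝ)*n+m)) = W at *
    have im0 : 0 ≤ 1/(m:ℝ) := by positivity
    have im1 : 1/(m:ℝ) ≤ 1 := by rw [div_le_one (by positivity)]; exact hm1
    generalize 1/(m:ℝ) = μ at *
    have aw0 : 0 ≤ a * W := by positivity
    have aw1 : a * W ≤ a * 2 := by gcongr
    have ad0 : 0 ≤ a * (W - sC) := mul_nonneg ha0 (by linarith)
    have ad1 : a * (W - sC) ≤ a * μ := by gcongr; linarith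
    have aq0 : 0 ≤ a * qC := by positivity
    have aq1 : a * qC ≤ a * μ := by gcongr; linarith
    have gl : |Real.log σ| ≤ Lam a r n := by
      rw [hlogs, Lam, abs_le]; constructor <;> linarith
    have g0 : |Real.log σ| ≤ |1-σ| * (1 + Lam a r n) := hal.trans (by gcongr)
    have g1 : |(3*sA + 3*sB - a*sC) + Real.log σ| ≤ (6+a)*μ := by
      rw [hlogs, abs_le]; constructor <;> linarith
    have g2 : |a * qC - 3*qA - 3*qB| ≤ (6+a)*μ := by
      rw [abs_le]; constructor <;> linarith
    have g3 : (Real.log σ)^2 ≤ (1-σ)^2 * (1 + Lam a r n)^2 := by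
      have := pow_le_pow_left₀ (abs_nonneg _) g0 2
      rwa [mul_pow, sq_abs, sq_abs] at this
    have g4 : ((3*sA + 3*sB - a*sC) + Real.log σ)^2 ≤ (6+a)^2*μ^2 := by
      have := pow_le_pow_left₀ (abs_nonneg _) g1 2
      rwa [mul_pow, sq_abs] at this
    have g5 : (6+(a:ℝ))^2*μ^2 ≤ (6+a)^2*μ := by
      refine mul_le_mul_of_nonneg_left ?_ (by positivity)
      nlinarith
    have g6 : (6+(a:ℝ))*μ ≤ (6+a)^2*μ := by
      refine mul_le_mul_of_nonneg_right ?_ im0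
      nlinarith
    have g7 : 3*(6+(a:ℝ))^2*μ ≤ 3*(6+(a:ℝ))^2*(4 * (1 - σ)^2 + 2 * 3^a / n) :=
      mul_le_mul_of_nonneg_left hinv (by positivity)
    generalize 3*sA + 3*sB - a*sC = X at *
    have g8 : X^2 ≤ 2*(Real.log σ)^2 + 2*(X + Real.log σ)^2 := by
      nlinarith [sq_nonneg (X + 2*Real.log σ)]
    refine (abs_add_le _ _).trans ?_
    rw [abs_pow, sq_abs]
    have e : 3*(6+(a:ℝ))^2*(4 * (1 - σ)^2 + 2 * 3^a / n) = 12*(6+a)^2*(1-σ)^2 + 6*(6+a)^2*3^a/n := by ring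
    rw [e] at g7
    linarith

end SecondDerivBound

section EllBounds
open Finset Filter Topology

lemma log_le_quart (y : ℝ) (hy : 1 ≤ y) : ∃ z : ℝ, 1 ≤ z ∧ z^2 = Real.sqrt y ∧ Real.log y ≤ 4 * z := by
  have h1 : 1 ≤ Real.sqrt y := Real.one_le_sqrt.mpr hy
  have h2 : 1 ≤ Real.sqrt (Real.sqrt y) := Real.one_le_sqrt.mpr h1
  refine ⟨Real.sqrt (Real.sqrt y), h2, Real.sq_sqrt (by linarith), ?_⟩
  have e1 := Real.log_sqrt (x := y) (by linarith)
  have e2 := Real.log_sqrt (x := Real.sqrt y) (by linarith)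
  have := Real.log_le_sub_one_of_pos (show 0 < Real.sqrt (Real.sqrt y) by linarith)
  linarith

lemma X_bound (a r n : ℕ) : 2*(1 + Lam a r n)^2 + 12*(6+(a:ℝ))^2 ≤
    (2*(2*(a:ℝ)+19)^2 + 12*(6+a)^2) * Real.sqrt (r*n+1) := by
  have h0 : (0:ℝ) ≤ (r:ℝ)*n := by positivity
  obtain ⟨z, z1, z2, z3⟩ := log_le_quart ((r:ℝ)*n+1) (by linarith)
  rw [← z2]
  have hL := Lam_nonneg a r n
  have ha : (0:ℝ) ≤ a := Nat.cast_nonneg a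
  have h1 : 1 + Lam a r n ≤ (2*a+19) * z := by
    rw [Lam]; nlinarith
  have h2 := pow_le_pow_left₀ (by linarith) h1 2
  rw [mul_pow] at h2
  have h3 : 1 ≤ z^2 := one_le_pow₀ z1
  have h4 : 12*(6+(a:ℝ))^2 * 1 ≤ 12*(6+(a:ℝ))^2 * z^2 := by gcongr
  linarith

noncomputable def KK (lam : ℝ) (a : ℕ) : ℝ :=
  |lam| * ((2*(2*(a:ℝ)+19)^2 + 12*(6+a)^2) * (6*3^a) + 6*(6+a)^2*3^a)

lemma R2_sum (lam : ℝ) (a r n : ℕ) (hr : 1 ≤ r) (hn : 1 ≤ n) (ha : 6*r+1 ≤ a) (T : ℝ)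
    (hT : HasSum (fun k : ℕ => 2 * RR a r n ((k:ℝ)+1) + lam * deriv (deriv (RR a r n)) ((k:ℝ)+1)) T) :
    |T - 2 * ∑' m, gs a r n m| ≤ KK lam a * Real.sqrt (r*n+1) / n * ∑' m, gs a r n m := by
  have hn1 : (1:ℝ) ≤ n := by exact_mod_cast hn
  have h0 : (0:ℝ) ≤ (r:ℝ)*n := by positivity
  set S := ∑' m, gs a r n m with hS
  have hSn : 0 ≤ S := tsum_nonneg fun m => (gs_pos a r n m).le
  have H1 := hT.sub ((RR_hasSum a r n hr ha).mul_left 2)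
  have H2 : HasSum (fun m : ℕ => lam * deriv (deriv (RR a r n)) ((r:ℝ)*n+1+m)) (T - 2*S) := by
    rw [← hasSum_nat_add_iff' (r*n)] at H1
    rw [sum_eq_zero (fun i hi => ?_), sub_zero] at H1
    · refine H1.congr_fun fun m => ?_
      push_cast
      rw [show (m:ℝ) + r*n + 1 = r*n+1+m by ring]
      ring
    · have := RR_deriv2_zero a r n (i+1) (by omega) (by have := mem_range.mp hi; omega)
      push_cast at this
      rw [this]; ring
  set X := 2*(1 + Lam a r n)^2 + 12*(6+(a:ℝ))^2 with hX
  set Y := 6*(6+(a:ℝ))^2*3^a with hY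
  have hX0 : 0 ≤ X := by positivity
  obtain ⟨c1, c2⟩ := gs_conc a r n hr hn ha
  have H3 := ((c1.hasSum.mul_right X).add ((gs_summable a r n hr ha).hasSum.mul_right (Y/n))).mul_left |lam|
  have hb : ∀ m : ℕ, |lam * deriv (deriv (RR a r n)) ((r:ℝ)*n+1+m)| ≤
      |lam| * (gs a r n m * (1 - ss a r n m)^2 * X + gs a r n m * (Y/n)) := by
    intro m
    rw [abs_mul]
    refine mul_le_mul_of_nonneg_left ?_ (abs_nonneg _)
    rw [RR_deriv2 a r n (by linarith [Nat.cast_nonneg (α := ℝ) m]), abs_mul, show RR a r n ((r:ℝ)*n+1+m) = gs a r n m from rfl, abs_of_pos (gs_pos a r n m)]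
    have := mul_le_mul_of_nonneg_left (LBound a r n m hr hn) (gs_pos a r n m).le
    refine this.trans (le_of_eq ?_)
    rw [hX, hY]; ring
  have u1 := hasSum_le (fun m => (abs_le.mp (hb m)).2) H2 H3
  have u2 := hasSum_le (fun m => (abs_le.mp (hb m)).1) H3.neg H2
  have u3 : |T - 2*S| ≤ |lam| * ((∑' m, gs a r n m * (1 - ss a r n m)^2) * X + S * (Y/n)) :=
    abs_le.mpr ⟨u2, u1⟩
  have hsq : 1 ≤ Real.sqrt (r*n+1) := Real.one_le_sqrt.mpr (by linarith)
  have hXb := X_bound a r n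
  rw [← hX] at hXb
  refine u3.trans ?_
  calc _ ≤ |lam| * ((6 * 3^a / n * S) * X + S * (Y/n)) := by gcongr
    _ = |lam| * (X * (6*3^a) + Y * 1) / n * S := by ring
    _ ≤ |lam| * ((2*(2*(a:ℝ)+19)^2 + 12*(6+a)^2) * Real.sqrt (r*n+1) * (6*3^a) + Y * Real.sqrt (r*n+1)) / n * S := by
        gcongr
    _ = _ := by rw [KK, hY]; ring

lemma ell_bounds (lam : ℝ) (a r : ℕ) (hr : 1 ≤ r) (ha : 6*r+1 ≤ a) :
    ∃ N0 : ℕ, ∀ n ≥ N0, ∀ T : ℝ,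
    HasSum (fun k : ℕ => 2 * RR a r n ((k:ℝ)+1) + lam * deriv (deriv (RR a r n)) ((k:ℝ)+1)) T →
    ∑' m, gs a r n m ≤ T ∧ T ≤ 3 * ∑' m, gs a r n m := by
  refine ⟨max 2 ⌈2*r*(KK lam a)^2⌉₊, fun n hn T hT => ?_⟩
  have hn2 : 2 ≤ n := le_trans (le_max_left _ _) hn
  have hn3 : 2*r*(KK lam a)^2 ≤ n := (Nat.le_ceil _).trans (by exact_mod_cast le_trans (le_max_right _ _) hn)
  have hn1 : (2:ℝ) ≤ n := by exact_mod_cast hn2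
  have hr1 : (1:ℝ) ≤ r := by exact_mod_cast hr
  have hK0 : 0 ≤ KK lam a := by rw [KK]; positivity
  have h := R2_sum lam a r n hr (by omega) ha T hT
  have hSn : 0 ≤ ∑' m, gs a r n m := tsum_nonneg fun m => (gs_pos a r n m).le
  have hk : KK lam a * Real.sqrt (r*n+1) / n ≤ 1 := by
    rw [div_le_one (by linarith)]
    have : KK lam a * Real.sqrt (r*n+1) = Real.sqrt ((KK lam a)^2 * (r*n+1)) := by
      rw [Real.sqrt_mul (by positivity), Real.sqrt_sq hK0]
    rw [this]
    apply Real.sqrt_le_iff.mpr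
    refine ⟨by linarith, ?_⟩
    have h1 : (r:ℝ)*n+1 ≤ 2*r*n := by nlinarith
    calc (KK lam a)^2 * (r*n+1) ≤ (KK lam a)^2 * (2*r*n) := by gcongr
      _ = (2*r*(KK lam a)^2)*n := by ring
      _ ≤ n * n := by gcongr
      _ = _ := by ring
  have h2 : |T - 2 * ∑' m, gs a r n m| ≤ 1 * ∑' m, gs a r n m := h.trans (by gcongr)
  rw [abs_le] at h2
  constructor <;> linarith [h2.1, h2.2]

end EllBounds

section Assembly
open Finset Filter Topology

lemma poly_exp (C : ℝ) (k : ℕ) (η : ℝ) (hη : 0 < η) (hC : 0 ≤ C) :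
    ∃ N0 : ℕ, ∀ n : ℕ, N0 ≤ n → C * ((n:ℝ)+1)^k ≤ Real.exp (η * n) := by
  have h := (isLittleO_pow_exp_pos_mul_atTop k hη).bound (c := 1/(C*2^k+1)) (by positivity)
  have h2 := tendsto_natCast_atTop_atTop (R := ℝ) |>.eventually h
  obtain ⟨N, hN⟩ := eventually_atTop.mp h2
  refine ⟨max N 1, fun n hn => ?_⟩
  have h3 := hN n (le_trans (le_max_left _ _) hn)
  have hn1 : (1:ℝ) ≤ n := by exact_mod_cast le_trans (le_max_right _ _) hn
  rw [Real.norm_of_nonneg (by positivity), Real.norm_of_nonneg (by positivity), div_mul_eq_mul_div, one_mul,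
    le_div_iff₀ (by positivity)] at h3
  calc C * ((n:ℝ)+1)^k ≤ C * (2*n)^k := by gcongr; linarith
    _ = (n:ℝ)^k * (C*2^k) := by rw [mul_pow]; ring
    _ ≤ (n:ℝ)^k * (C*2^k+1) := by gcongr; linarith
    _ ≤ _ := h3

lemma lcmUpto_mono2 (n : ℕ) : (Nat.lcmUpto n : ℝ) ≤ Nat.lcmUpto (n+2) := by
  have : Nat.lcmUpto n ∣ Nat.lcmUpto (n+2) := by
    unfold Nat.lcmUpto
    exact Finset.lcm_dvd fun b hb => Finset.dvd_lcm (f := id) (by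
      rw [mem_Icc] at hb ⊢; omega)
  exact_mod_cast Nat.le_of_dvd (Nat.lcmUpto_pos _) this

noncomputable def beta (a r : ℕ) (η : ℝ) : ℝ :=
  (1+η)*(a+2) + ((a:ℝ)-6*r) * Real.log 2 + 6*r*Real.log (6*(r+1)) + η

noncomputable def alpha (a r : ℕ) (η : ℝ) : ℝ :=
  ((a:ℝ)-6*r) * Real.log r - r * Real.log 27 - (1+η)*(a+2) - η

lemma pow_as_exp (x : ℝ) (hx : 0 < x) (n : ℕ) : x^n = Real.exp (n * Real.log x) := by
  rw [Real.exp_nat_mul, Real.exp_log hx]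

lemma main_ar (lam : ℝ) (a r : ℕ) (hr : 1 ≤ r) (ha : 6*r+1 ≤ a) (hodd : Odd a)
    (V : Submodule ℚ ℝ) [FiniteDimensional ℚ V] (hθ : ∀ i ∈ range (a+2), thetaSeq lam i ∈ V)
    (η : ℝ) (hη : 0 < η) (hα : 0 < alpha a r η) :
    alpha a r η ≤ beta a r η * ((Module.finrank ℚ V : ℝ) - 1) := by
  have hr1 : (1:ℝ) ≤ r := by exact_mod_cast hr
  have ha1 : 6*(r:ℝ)+1 ≤ a := by exact_mod_cast ha
  have hex : ∀ N : ℕ, ∃ p : ℕ → ℤ, (∀ i < a+2, |(p i:ℝ)| ≤ (Nat.lcmUpto (2*N):ℝ)^(a+2) *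
      (2*((((a:ℝ)+1)^2 * (((2*N:ℕ):ℝ)+1)^2)^a * (((2:ℝ)^(2*N))^(a-6*r) * (((6 * ((r:ℝ)+1))^(2*N))^(6*r))))
        *((a:ℝ)+2)^3*(((2*N:ℕ):ℝ)+1)^2)) ∧
      HasSum (fun k : ℕ => (Nat.lcmUpto (2*N):ℝ)^(a+2) * (2 * RR a r (2*N) ((k:ℝ)+1) +
        lam * deriv (deriv (RR a r (2*N))) ((k:ℝ)+1))) (∑ i ∈ range (a+2), (p i:ℝ) * thetaSeq lam i) := fun N =>
    linform lam a r (2*N) ha hodd (even_two_mul N) _ (by positivity) (PF_RR a r (2*N) ha)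
      (RR_tendsto a r (2*N) hr ha)
  choose p hp1 hp2 using hex
  obtain ⟨N1, hN1⟩ := lcm_bound hη
  obtain ⟨N2, hN2⟩ := ell_bounds lam a r hr ha
  obtain ⟨N3, hN3⟩ := poly_exp (2*(((a:ℝ)+1)^2)^a*((a:ℝ)+2)^3) (2*a+2) η hη (by positivity)
  obtain ⟨N4, hN4⟩ := poly_exp 6 0 η hη (by positivity)
  set d : ℕ → ℝ := fun N => (Nat.lcmUpto (2*N) : ℝ)^(a+2) with hd
  have hd1 : ∀ N, 1 ≤ d N := fun N => one_le_pow₀ (by exact_mod_cast Nat.lcmUpto_pos (2*N))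
  set S : ℕ → ℝ := fun N => ∑' m, gs a r (2*N) m with hS
  set ℓ : ℕ → ℝ := fun N => ∑ i ∈ range (a+2), (p N i:ℝ) * thetaSeq lam i with hℓ
  have hSpos : ∀ N, 0 < S N := fun N =>
    (gs_summable a r (2*N) hr ha).tsum_pos (fun m => (gs_pos a r (2*N) m).le) 0 (gs_pos a r (2*N) 0)
  set N0 := N1 + N2 + N3 + N4 + 1 with hN0
  have hbd : ∀ N ≥ N0, d N * S N ≤ ℓ N ∧ ℓ N ≤ 3 * (d N * S N) := by
    intro N hN
    have hdp : 0 < d N := by linarith [hd1 N]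
    have h1 := (hp2 N).mul_left (d N)⁻¹
    have h2 := hN2 (2*N) (by omega) ((d N)⁻¹ * ℓ N) (h1.congr_fun fun k => by
      simp only [hd]; rw [inv_mul_cancel_left₀ hdp.ne'])
    have e : ℓ N = d N * ((d N)⁻¹ * ℓ N) := by rw [mul_inv_cancel_left₀ hdp.ne']
    constructor
    · rw [e]; exact mul_le_mul_of_nonneg_left h2.1 hdp.le
    · rw [e]; refine (mul_le_mul_of_nonneg_left h2.2 hdp.le).trans (le_of_eq (by simp only [hS]; ring))
  have hdle : ∀ N ≥ N0, d N ≤ Real.exp ((1+η)*(a+2)*(2*N)) := by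
    intro N hN
    have := hN1 (2*N) (by omega)
    calc d N ≤ (Real.exp ((1+η)*((2*N:ℕ):ℝ)))^(a+2) := by
          simp only [hd]; gcongr
      _ = _ := by rw [← Real.exp_nat_mul]; push_cast; congr 1; ring
  have hsub : ((a-6*r:ℕ):ℝ) = (a:ℝ) - 6*r := by
    rw [Nat.cast_sub (by omega)]; push_cast; ring
  have hlog6 : 0 ≤ Real.log (6*((r:ℝ)+1)) := Real.log_nonneg (by linarith)
  have hlog2 : 0 ≤ Real.log 2 := Real.log_nonneg (by norm_num)
  have hβ : 0 < beta a r η := by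
    have : 0 ≤ ((a:ℝ)-6*r) * Real.log 2 := mul_nonneg (by linarith) hlog2
    rw [beta]; positivity
  set K : ℝ := 52*r*a*(Real.exp 4 * (17*r*a)^2)^a with hK
  have hapos : (0:ℝ) < a := by linarith
  have hKp : 0 < K := by positivity
  have main := nesterenko V (range (a+2)) (thetaSeq lam) hθ p ℓ N0 (2*alpha a r η) (2*beta a r η) (1/(3*K))
    (by linarith) (by linarith) (by positivity) (fun N _ => rfl) ?_ ?_ ?_ ?_
  · have : 2 * alpha a r η ≤ 2 * (beta a r η * ((Module.finrank ℚ V : ℝ) - 1)) := by linarith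
    linarith
  · intro N hN i hi
    have h3 := hN3 (2*N) (by omega)
    refine (hp1 N i (mem_range.mp hi)).trans ?_
    have e1 : ((2:ℝ)^(2*N))^(a-6*r) = Real.exp (((a:ℝ)-6*r)*Real.log 2 * (2*N)) := by
      rw [pow_as_exp 2 (by norm_num), ← Real.exp_nat_mul, hsub]; push_cast; congr 1; ring
    have e2 : ((6 * ((r:ℝ)+1))^(2*N))^(6*r) = Real.exp (6*r*Real.log (6*(r+1)) * (2*N)) := by
      rw [pow_as_exp (6*((r:ℝ)+1)) (by positivity), ← Real.exp_nat_mul]; push_cast; congr 1; ring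
    rw [e1, e2]
    calc _ = d N * (2*(((a:ℝ)+1)^2)^a*((a:ℝ)+2)^3 * (((2*N:ℕ):ℝ)+1)^(2*a+2)) *
          (Real.exp (((a:ℝ)-6*r)*Real.log 2 * (2*N)) * Real.exp (6*r*Real.log (6*(r+1)) * (2*N))) := by
          simp only [hd]; rw [mul_pow (((a:ℝ)+1)^2), ← pow_mul (((2*N:ℕ):ℝ)+1)]; ring
      _ ≤ Real.exp ((1+η)*(a+2)*(2*N)) * Real.exp (η * ((2*N:ℕ):ℝ)) *
          (Real.exp (((a:ℝ)-6*r)*Real.log 2 * (2*N)) * Real.exp (6*r*Real.log (6*(r+1)) * (2*N))) := by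
          have := hdle N hN
          have := hd1 N
          gcongr
      _ = _ := by
          rw [← Real.exp_add, ← Real.exp_add, ← Real.exp_add]; congr 1; rw [beta]; push_cast; ring
  · intro N hN
    have := hd1 N
    have := hSpos N
    exact lt_of_lt_of_le (by positivity) (hbd N hN).1
  · intro N hN
    refine (hbd N hN).2.trans ?_
    have h4 := hN4 (2*N) (by omega)
    rw [pow_zero, mul_one] at h4
    have h5 := gs_sum_upper a r (2*N) hr ha
    have e1 : (27:ℝ)^(r*(2*N)) = Real.exp (r*Real.log 27*(2*N)) := by
      rw [pow_as_exp 27 (by norm_num)]; push_cast; congr 1; ring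
    have e2 : (r:ℝ)^(2*N*(a-6*r)) = Real.exp (((a:ℝ)-6*r)*Real.log r*(2*N)) := by
      rw [pow_as_exp (r:ℝ) (by linarith), Nat.cast_mul, hsub]; push_cast; congr 1; ring
    rw [e1, e2, ← Real.exp_sub] at h5
    have hdN := hdle N hN
    have := hd1 N
    have := hSpos N
    calc 3 * (d N * S N) ≤ 3 * (Real.exp ((1+η)*(a+2)*(2*N)) *
          (2 * Real.exp (r*Real.log 27*(2*N) - ((a:ℝ)-6*r)*Real.log r*(2*N)))) := by
          gcongr
      _ = 6 * (Real.exp ((1+η)*(a+2)*(2*N)) * Real.exp (r*Real.log 27*(2*N) - ((a:ℝ)-6*r)*Real.log r*(2*N))) := by ring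
      _ ≤ Real.exp (η * ((2*N:ℕ):ℝ)) * (Real.exp ((1+η)*(a+2)*(2*N)) * Real.exp (r*Real.log 27*(2*N) - ((a:ℝ)-6*r)*Real.log r*(2*N))) := by
          gcongr
      _ = _ := by
          rw [← Real.exp_add, ← Real.exp_add]; congr 1; rw [alpha]; push_cast; ring
  · intro N hN
    have h1 := (hbd N hN).2
    have h2 := (hbd (N+1) (by omega)).1
    have h3 : S N ≤ K * S (N+1) := gs_sum_step a r (2*N) (by omega) hr ha
    have h4 : d N ≤ d (N+1) := by
      simp only [hd]
      have := lcmUpto_mono2 (2*N)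
      rw [show 2*(N+1) = 2*N+2 by ring]
      gcongr
    have p1 := hd1 N
    have p2 := hSpos N
    have p3 := hSpos (N+1)
    rw [div_mul_eq_mul_div, one_mul, div_le_iff₀ (by positivity)]
    calc ℓ N ≤ 3 * (d N * S N) := h1
      _ ≤ 3 * (d (N+1) * (K * S (N+1))) := by gcongr
      _ = (d (N+1) * S (N+1)) * (3*K) := by ring
      _ ≤ _ := by gcongr

lemma choose_r (δ : ℝ) (hδ : 0 < δ) (hδ1 : δ < 1/2) :
    ∃ A : ℕ, ∀ a : ℕ, A ≤ a → ∃ r : ℕ, 1 ≤ r ∧ 6*r+1 ≤ a ∧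
      6*(r:ℝ) ≤ δ * a ∧ 6*r*Real.log (6*(r+1)) ≤ δ * a ∧ (1-2*δ) * Real.log a ≤ Real.log r ∧
      r * Real.log 27 + (1+δ)*(a+2) + δ ≤ δ * (a * Real.log a) ∧ (1+δ)*(a+2) + δ ≤ (1+2*δ)*a ∧ 1 ≤ Real.log a := by
  have hl1 : ∀ᶠ x : ℝ in atTop, ‖Real.log x‖ ≤ δ/12 * ‖x^δ‖ :=
    (isLittleO_log_rpow_atTop hδ).bound (by positivity)
  have hl2 : ∀ᶠ x : ℝ in atTop, 12*(Real.log 12 + 1)/δ ≤ x^δ :=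
    (tendsto_rpow_atTop hδ).eventually_ge_atTop _
  have hl3 : ∀ᶠ x : ℝ in atTop, (Real.log 27 + 3*(1+δ) + δ)/δ + Real.log 2/δ + 1 ≤ Real.log x :=
    Real.tendsto_log_atTop.eventually_ge_atTop _
  have hl4 : ∀ᶠ x : ℝ in atTop, (2*(1+δ)+δ)/δ + 2 ≤ x := eventually_ge_atTop _
  have hall := tendsto_natCast_atTop_atTop (R := ℝ) |>.eventually (hl1.and (hl2.and (hl3.and hl4)))
  obtain ⟨A, hA⟩ := eventually_atTop.mp hall
  refine ⟨A, fun a ha => ?_⟩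
  obtain ⟨h1, h2, h3, h4⟩ := hA a ha
  have hlog27 : 0 ≤ Real.log 27 := Real.log_nonneg (by norm_num)
  have hlog2 : 0 ≤ Real.log 2 := Real.log_nonneg (by norm_num)
  have hlog12 : 0 ≤ Real.log 12 := Real.log_nonneg (by norm_num)
  have q1 : 0 ≤ (Real.log 27 + 3*(1+δ) + δ)/δ := by positivity
  have q2 : 0 ≤ Real.log 2/δ := by positivity
  have q3 : 0 ≤ (2*(1+δ)+δ)/δ := by positivity
  have a2 : (2:ℝ) ≤ a := by linarith
  have a0 : (0:ℝ) < a := by linarith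
  have hL1 : 1 ≤ Real.log a := by linarith
  rw [Real.norm_of_nonneg (by linarith), Real.norm_of_nonneg (by positivity)] at h1
  have hy : (a:ℝ)^(1-δ) * (a:ℝ)^δ = a := by
    rw [← Real.rpow_add a0]; simp
  have hy1 : 1 ≤ (a:ℝ)^(1-δ) := Real.one_le_rpow (by linarith) (by linarith)
  set y := (a:ℝ)^(1-δ) with hydef
  set z := (a:ℝ)^δ with hz
  have hz0 : 0 < z := by positivity
  have hz1 : 1 ≤ z := Real.one_le_rpow (by linarith) hδ.le
  have hya : y ≤ a := by nlinarith
  set r := ⌊y⌋₊ with hr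
  have r1 : 1 ≤ r := Nat.le_floor (by simpa using hy1)
  have r2 : (r:ℝ) ≤ y := Nat.floor_le (by linarith)
  have r3 : y < r + 1 := Nat.lt_floor_add_one y
  have r4 : (1:ℝ) ≤ r := by exact_mod_cast r1
  rw [div_le_iff₀ hδ] at h2
  have hkey : 6*(Real.log 12 + Real.log a) ≤ δ * z := by nlinarith
  have c2 : 6*r*Real.log (6*(r+1)) ≤ δ * a := by
    have e : Real.log (6*((r:ℝ)+1)) ≤ Real.log 12 + Real.log a := by
      rw [← Real.log_mul (by norm_num) a0.ne']
      exact Real.log_le_log (by positivity) (by linarith)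
    have e0 : 0 ≤ Real.log (6*((r:ℝ)+1)) := Real.log_nonneg (by linarith)
    calc 6*r*Real.log (6*(r+1)) ≤ 6*y*(Real.log 12 + Real.log a) := by gcongr
      _ = y * (6*(Real.log 12 + Real.log a)) := by ring
      _ ≤ y * (δ * z) := by gcongr
      _ = δ * a := by rw [← hy]; ring
  have c1 : 6*(r:ℝ) ≤ δ * a := by
    calc 6*(r:ℝ) ≤ y * (6*1) := by linarith
      _ ≤ y * (6*(Real.log 12 + Real.log a)) := by gcongr; linarith
      _ ≤ y * (δ * z) := by gcongr
      _ = δ * a := by rw [← hy]; ring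
  refine ⟨r, r1, ?_, c1, c2, ?_, ?_, ?_, hL1⟩
  · have : 6*(r:ℝ)+1 ≤ a := by nlinarith
    exact_mod_cast this
  · have : y/2 ≤ r := by linarith
    have h5 := Real.log_le_log (by positivity) this
    rw [Real.log_div (by positivity) (by norm_num), hydef, Real.log_rpow a0] at h5
    have h6 : Real.log 2 / δ ≤ Real.log a := by linarith
    rw [div_le_iff₀ hδ] at h6
    linarith
  · have h6 : (Real.log 27 + 3*(1+δ) + δ)/δ ≤ Real.log a := by linarith
    rw [div_le_iff₀ hδ] at h6
    have h7 : (r:ℝ) * Real.log 27 ≤ a * Real.log 27 := mul_le_mul_of_nonneg_right (r2.trans hya) hlog27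
    have h8 : a * (Real.log 27 + 3*(1+δ) + δ) ≤ a * (Real.log a * δ) := by gcongr
    nlinarith
  · have h6 : (2*(1+δ)+δ)/δ ≤ a := by linarith
    rw [div_le_iff₀ hδ] at h6
    linarith

end Assembly

theorem stmt2 (lam : ℝ) :
    ∀ ε : ℝ, 0 < ε → ∃ A : ℕ, ∀ a : ℕ, Odd a → A ≤ a →
      (1 - ε) * Real.log a / (1 + Real.log 2) ≤
        (Module.finrank ℚ (Submodule.span ℚ
          (({1, lam} : Set ℝ) ∪
            {x : ℝ | ∃ i : ℕ, Odd i ∧ 3 ≤ i ∧ i ≤ a ∧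
              x = zeta i + ((i : ℝ) * (i + 1) / 2) * lam * zeta (i + 2)})) : ℝ) := by
  intro ε hε
  have hlog2 : 0 ≤ Real.log 2 := Real.log_nonneg (by norm_num)
  rcases le_or_gt 1 ε with h1 | h1
  · refine ⟨1, fun a _ ha => ?_⟩
    have ha1 : (1:ℝ) ≤ a := by exact_mod_cast ha
    have : (1 - ε) * Real.log a / (1 + Real.log 2) ≤ 0 :=
      div_nonpos_of_nonpos_of_nonneg
        (mul_nonpos_of_nonpos_of_nonneg (by linarith) (Real.log_nonneg ha1)) (by linarith)
    exact this.trans (Nat.cast_nonneg _)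
  set δ := ε/7 with hδ
  have hδ0 : 0 < δ := by positivity
  obtain ⟨A, hA⟩ := choose_r δ hδ0 (by linarith)
  refine ⟨A, fun a hodd ha => ?_⟩
  obtain ⟨r, r1, r2, c1, c2, c3, c4, c5, c6⟩ := hA a ha
  set T : Set ℝ := (({1, lam} : Set ℝ) ∪
            {x : ℝ | ∃ i : ℕ, Odd i ∧ 3 ≤ i ∧ i ≤ a ∧
              x = zeta i + ((i : ℝ) * (i + 1) / 2) * lam * zeta (i + 2)}) with hT
  have hfin : T.Finite := by
    refine Set.Finite.union (by simp) ?_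
    refine ((Set.finite_Iic a).image (fun i : ℕ => zeta i + ((i : ℝ) * (i + 1) / 2) * lam * zeta (i + 2))).subset ?_
    rintro x ⟨i, -, -, hi, rfl⟩
    exact ⟨i, hi, rfl⟩
  haveI : FiniteDimensional ℚ (Submodule.span ℚ T) := FiniteDimensional.span_of_finite ℚ hfin
  have hθ : ∀ i ∈ Finset.range (a+2), thetaSeq lam i ∈ Submodule.span ℚ T := by
    intro i hi
    have hi' := Finset.mem_range.mp hi
    match i, hi' with
    | 0, _ => exact Submodule.subset_span (Or.inl (by simp [thetaSeq]))
    | 1, _ => exact Submodule.subset_span (Or.inl (by simp [thetaSeq]))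
    | (j+2), hj =>
      rw [thetaSeq]
      split_ifs with h
      · exact Submodule.subset_span (Or.inr ⟨j+1, h.1, h.2, by omega, rfl⟩)
      · exact Submodule.zero_mem _
  generalize Submodule.span ℚ T = V at *
  have rr1 : (1:ℝ) ≤ r := by exact_mod_cast r1
  have aa : 6*(r:ℝ)+1 ≤ a := by exact_mod_cast r2
  have hr0 : 0 ≤ Real.log r := Real.log_nonneg rr1
  have a0 : (0:ℝ) < a := by linarith
  have aL : 0 < a * Real.log a := by positivity
  have hal : (1 - 4*δ) * (a * Real.log a) ≤ alpha a r δ := by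
    have e : (1-δ)*a * ((1-2*δ)*Real.log a) ≤ ((a:ℝ)-6*r) * Real.log r := by
      have : 0 ≤ (1-2*δ)*Real.log a := mul_nonneg (by linarith) (by linarith)
      exact mul_le_mul (by linarith) c3 this (by linarith)
    rw [alpha]
    have : 0 ≤ δ^2 * (a * Real.log a) := by positivity
    nlinarith
  have hal0 : 0 < alpha a r δ := lt_of_lt_of_le (mul_pos (by linarith) aL) hal
  have hbe : beta a r δ ≤ a * ((1 + Real.log 2) * (1 + 3*δ)) := by
    rw [beta]
    have : 0 ≤ (r:ℝ) * Real.log 2 := by positivity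
    have : 0 ≤ a * Real.log 2 * δ := by positivity
    nlinarith
  have key := main_ar lam a r r1 r2 hodd V hθ δ hδ0 hal0
  set D := (Module.finrank ℚ V : ℝ) with hD
  have hD0 : 0 ≤ D := Nat.cast_nonneg _
  have hβ0 : 0 ≤ beta a r δ := by
    have h1 : 0 ≤ ((a:ℝ)-6*r) * Real.log 2 := mul_nonneg (by linarith) hlog2
    have h2 : 0 ≤ Real.log (6*((r:ℝ)+1)) := Real.log_nonneg (by linarith)
    rw [beta]; positivity
  have k2 : (1 - 4*δ) * (a * Real.log a) ≤ a * ((1 + Real.log 2) * (1 + 3*δ)) * D := by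
    calc _ ≤ beta a r δ * (D - 1) := hal.trans key
      _ ≤ beta a r δ * D := by gcongr; linarith
      _ ≤ _ := by gcongr
  have k3 : (1 - 4*δ) * Real.log a ≤ ((1 + Real.log 2) * (1 + 3*δ)) * D := by
    have : a * ((1 - 4*δ) * Real.log a) ≤ a * (((1 + Real.log 2) * (1 + 3*δ)) * D) := by linarith
    exact le_of_mul_le_mul_left this a0
  rw [div_le_iff₀ (by linarith)]
  have k4 : (1-ε)*(1+3*δ) ≤ 1 - 4*δ := by nlinarith
  have k5 : (1+3*δ) * ((1-ε) * Real.log a) ≤ (1+3*δ) * (D * (1 + Real.log 2)) := by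
    have : (1-ε)*(1+3*δ) * Real.log a ≤ (1 - 4*δ) * Real.log a := by gcongr
    linarith
  exact le_of_mul_le_mul_left k5 (by linarith)
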